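/- Every set of 1717 points in the plane in general position contains a 6-hole; that is, h⁽²⁾(6) ≤ 1717. -/

import Mathlib

/-!
Suppose that a set `S` of 1717 points in general position has no `6`-hole.

*A convex nonagon.* Let `x` be an extreme point of `S`, and sort the other 1716 points by angle
around `x`. A cup of nine points, or a cap of eight points together with `x`, is a convex nonagon.
If there is neither, split the points by the length of the longest cup ending in them. The points
at which no cup of three points ends number at most four, since five of them would form an empty
hexagon with `x`. In each further class, a cap of seven points could be prolonged, so the
Erdős–Szekeres bound for cups and caps applies, and the number of points is at most
`4 + ∑ k ∈ {2, …, 7}, (5 + k).choose k = 1713 < 1716` (`exists_nonagon`).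

*Minimality.* Choose a convex nonagon with as few points of `S` in its hull as possible, and let
`X` be the set of points in the hull and `D` the set of those in its interior (`Cfg`,
`exists_cfg`). No convex nonagon in `X` uses a point of `D`. Hence convex polygons with vertices in
`D` have at most eight vertices (`Cfg.le8`), and a convex chain of `m + 1` points of `D` cuts off at
least `m + 2` of the nine outer points (`Cfg.chain`). From here on everything is expressed by
orientations of triples (`L`).

*Layers.* The hull of `D` is a polygon `a` with `i ≤ 8` vertices; let `Q` be the set of points of
`D` inside it. As there are no empty hexagons, `Q` is nonempty. If it has one or two points, then
counting gives a contradiction (`Ctx.one_point`, `Ctx.two_points`). Otherwise its hull is a third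
polygon `c` with `j ≤ 8` vertices.

*A moving ray.* Consider a ray whose apex runs through the vertices of `c` and which is directed to
vertices of `a`. In one turn it passes all nine outer points (`Fl`, `Ctx.Fl_round`). When it runs
through the vertices of `a` visible through consecutive edges of `c`, it passes at most one outer
point per step (`Ctx3.pth`), except at the *gaps*, the vertices of `c` where the visible vertices on
both sides are disjoint; there it passes at most two (`Ctx3.gap_step`). As `i ≤ 8 < 9`, some arc
between consecutive gaps attains the bound (`Ctx3.exists_bad`), and for `i ≤ 7` there are two such
*bad* arcs (`Ctx3.another_bad`). A bad arc contains consecutive edges of `c` through which too few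
vertices of `a` are visible (`Ctx3.arc`), whereas minimality of the nonagon forces many of them to
be visible (`Ctx3.many`). This leaves only `i = 8` (`Ctx3.eq_eight`).

*Two octagons.* If `i = 8`, then there is only one gap (`Ctx3.exists_only_gap`) and `j = 8`
(`Ctx3.full`). The local picture at the gap `q` (`Res`) yields two points `t₁, t₂` inside `c` whose
line separates `q` from the other seven vertices of `c`. These seven vertices and `t₁, t₂` form a
convex nonagon, contrary to minimality (`Ctx3.false`).
-/

/-- A finite set `S` of points in `ℝ^d` is in *general position* if every
`(d+1)`-element subset of `S` is affinely independent. -/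
def InGeneralPosition (d : ℕ) (S : Finset (Fin d → ℝ)) : Prop :=
  ∀ T ⊆ S, T.card = d + 1 → AffineIndependent ℝ ((↑) : T → (Fin d → ℝ))

/-- A finite set of points is in *convex position* if no point of the set lies in
the convex hull of the other points of the set. -/
def InConvexPosition (d : ℕ) (X : Finset (Fin d → ℝ)) : Prop :=
  ∀ p ∈ X, p ∉ convexHull ℝ (↑(X.erase p) : Set (Fin d → ℝ))

/-- A *k-hole* in `S` is a `k`-element subset `X ⊆ S` in convex position such that
no point of `S \ X` lies in the convex hull of `X`. -/
def IsHole (d k : ℕ) (S X : Finset (Fin d → ℝ)) : Prop :=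
  X ⊆ S ∧ X.card = k ∧ InConvexPosition d X ∧
    ∀ p ∈ S, p ∉ X → p ∉ convexHull ℝ (↑X : Set (Fin d → ℝ))

/-! ### Orientation of triples of points -/

/-- Points of the plane. -/
abbrev Pt := Fin 2 → ℝ

/-- Twice the signed area of the triangle `a b c`. -/
def ori (a b c : Pt) : ℝ := (b 0 - a 0) * (c 1 - a 1) - (b 1 - a 1) * (c 0 - a 0)

/-- `a b c` is a counterclockwise triple, i.e. `c` lies to the left of the directed line `a → b`. -/
def L (a b c : Pt) : Prop := 0 < ori a b c

theorem ori_rot (a b c : Pt) : ori b c a = ori a b c := by unfold ori; ring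
theorem ori_swap (a b c : Pt) : ori b a c = - ori a b c := by unfold ori; ring
theorem ori_swap' (a b c : Pt) : ori a c b = - ori a b c := by unfold ori; ring
theorem ori_self (a b : Pt) : ori a b b = 0 := by unfold ori; ring
theorem ori_self1 (a b : Pt) : ori a a b = 0 := by unfold ori; ring
theorem ori_self2 (a b : Pt) : ori a b a = 0 := by unfold ori; ring

theorem L.r {a b c : Pt} (h : L a b c) : L b c a := by unfold L at *; rwa [ori_rot]
theorem L.rr {a b c : Pt} (h : L a b c) : L c a b := h.r.r
theorem L.not_swap {a b c : Pt} (h : L a b c) : ¬ L b a c := by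
  unfold L at *; rw [ori_swap]; linarith
theorem L.not_swap' {a b c : Pt} (h : L a b c) : ¬ L a c b := by
  unfold L at *; rw [ori_swap']; linarith
theorem L.not_flip {a b c : Pt} (h : L a b c) : ¬ L c b a := fun h' => h.not_swap' h'.rr
theorem L.ne12 {a b c : Pt} (h : L a b c) : a ≠ b := by
  rintro rfl; unfold L at h; rw [ori_self1] at h; exact lt_irrefl _ h
theorem L.ne23 {a b c : Pt} (h : L a b c) : b ≠ c := h.r.ne12
theorem L.ne13 {a b c : Pt} (h : L a b c) : a ≠ c := h.rr.ne12.symm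

/-- The affine dependence of four points, tested against the line `u v`. -/
theorem bary (a b c z u v : Pt) : ori a b c * ori u v z =
    ori z b c * ori u v a + ori a z c * ori u v b + ori a b z * ori u v c := by
  unfold ori; ring

/-- The three-term Grassmann–Plücker relation. -/
theorem gp (x a b c d : Pt) :
    ori x a b * ori x c d - ori x a c * ori x b d + ori x a d * ori x b c = 0 := by
  unfold ori; ring

/-- The angular order around `x` is transitive on an open half-plane bounded by `x d`
(`d` being last). -/
theorem L.transLast {x p q r d : Pt} (h1 : L x p q) (h2 : L x q r)
    (hp : L x p d) (hq : L x q d) (hr : L x r d) : L x p r := by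
  unfold L at *
  have e := gp x p q r d
  have : 0 < ori x q d * ori x p r := by nlinarith [mul_pos h1 hr, mul_pos h2 hp]
  exact (pos_iff_pos_of_mul_pos this).1 hq

/-- The angular order around `x` is transitive on an open half-plane bounded by `x d`
(`d` being first). -/
theorem L.transFirst {x p q r d : Pt} (h1 : L x p q) (h2 : L x q r)
    (hp : L x d p) (hq : L x d q) (hr : L x d r) : L x p r := by
  unfold L at *
  have e := gp x d p q r
  have : 0 < ori x d q * ori x p r := by nlinarith [mul_pos h1 hr, mul_pos h2 hp]
  exact (pos_iff_pos_of_mul_pos this).1 hq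

/-- A triangle containing `t` has the orientation of the three triangles at `t`. -/
theorem L.interior {p q r t : Pt} (h1 : L t q r) (h2 : L p t r) (h3 : L p q t) : L p q r := by
  unfold L at *
  have : ori p q r = ori t q r + ori p t r + ori p q t := by unfold ori; ring
  linarith

/-- A point inside a triangle lies strictly to the left of a line which has the triangle
weakly on its left, not all three vertices being on the line. -/
theorem L.inTri {a b c z u v : Pt} (h1 : L a b z) (h2 : L b c z) (h3 : L c a z)
    (ha : 0 ≤ ori u v a) (hb : 0 ≤ ori u v b) (hc : 0 ≤ ori u v c)
    (hpos : 0 < ori u v a + ori u v b + ori u v c) : L u v z := by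
  have h0 : L a b c := L.interior h2.rr h3.r h1
  have e := bary a b c z u v
  have h2' := h2.rr
  have h3' := h3.r
  unfold L at *
  have : 0 < ori a b c * ori u v z := by
    rw [e]
    rcases lt_or_eq_of_le ha with ha' | ha'
    · have := mul_pos h2' ha'; have := mul_nonneg h3'.le hb; have := mul_nonneg h1.le hc; linarith
    rcases lt_or_eq_of_le hb with hb' | hb'
    · have := mul_nonneg h2'.le ha; have := mul_pos h3' hb'; have := mul_nonneg h1.le hc; linarith
    have hc' : 0 < ori u v c := by linarith
    have := mul_nonneg h2'.le ha; have := mul_nonneg h3'.le hb; have := mul_pos h1 hc'; linarith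
  exact (pos_iff_pos_of_mul_pos this).1 h0

/-- A point `h` of the angle at `c` spanned by `a` and `b` lies weakly to the left of a line through
`c` if `a` and `b` do. -/
theorem cone_pos {c a b h u v : Pt} (hab : L c a b) (h1 : L c a h) (h2 : L c h b)
    (hc : ori u v c = 0) (ha : 0 ≤ ori u v a) (hb : 0 ≤ ori u v b) : 0 ≤ ori u v h := by
  have e := bary c a b h u v
  have h2' := h2
  unfold L at *
  by_contra hneg
  push Not at hneg
  have := mul_nonneg h1.le hb
  have := mul_nonneg h2'.le ha
  have := mul_neg_of_pos_of_neg hab hneg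
  rw [hc] at e
  linarith

/-- Turns propagate along a chain which is sorted around `x`. -/
theorem L.turn1 {x p q r s : Pt} (hpq : L x p q) (hqr : L x q r)
    (hqs : L x q s) (h1 : L p q r) (h2 : L q r s) : L p q s := by
  have e := gp q r s p x
  have a1 := hpq.rr
  have a2 := hqr.r
  have a3 := hqs.r
  have a4 := h1.r
  have a5 := h2
  have : ori q p x = - ori q x p := ori_swap' _ _ _
  unfold L at *
  have h : 0 < ori q r x * ori q s p := by
    have := mul_pos a4 a3; have := mul_pos a5 a1; nlinarith
  have := (pos_iff_pos_of_mul_pos h).1 a2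
  rw [← ori_rot]; exact this

theorem L.turn2 {x p q r s : Pt} (hpr : L x p r) (hqr : L x q r)
    (hrs : L x r s) (h1 : L p q r) (h2 : L q r s) : L p r s := by
  have e := gp r s p q x
  have a1 := hpr.rr
  have a2 := hqr.rr
  have a3 := hrs.r
  have a4 := h1.rr
  have a5 := h2.r
  unfold L at *
  have b1 : ori r p x = - ori r x p := ori_swap' _ _ _
  have b2 : ori r q x = - ori r x q := ori_swap' _ _ _
  have b4 : ori r s x = ori r s x := rfl
  rw [b1, b2] at e
  have h : 0 < ori r x q * ori r s p := by
    have := mul_pos a4 a3; have := mul_pos a5 a1; nlinarith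
  have := (pos_iff_pos_of_mul_pos h).1 a2
  rw [← ori_rot]; exact this

/-- Four points in convex position cannot lie alternately on the two sides of a line. -/
theorem no_alt {a b c d u v : Pt} (h1 : L b c d) (h2 : L a c d) (h3 : L a b d) (h4 : L a b c)
    (ha : L u v a) (hb : L v u b) (hc : L u v c) (hd : L v u d) : False := by
  have e : ori b c d * ori u v a + ori a b d * ori u v c
      = ori a c d * ori u v b + ori a b c * ori u v d := by unfold ori; ring
  unfold L at *
  rw [ori_swap] at hb hd
  nlinarith [mul_pos h1 ha, mul_pos h3 hc, mul_pos h2 hb, mul_pos h4 hd]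

/-! ### Convex hulls and half-planes -/

/-- General position, expressed through orientations. -/
def GP (S : Finset Pt) : Prop :=
  ∀ a ∈ S, ∀ b ∈ S, ∀ c ∈ S, a ≠ b → b ≠ c → a ≠ c → L a b c ∨ L b a c

theorem GP.mono {S T : Finset Pt} (h : GP S) (hT : T ⊆ S) : GP T :=
  fun a ha b hb c hc => h a (hT ha) b (hT hb) c (hT hc)

theorem GP.of_generalPosition {S : Finset Pt} (h : InGeneralPosition 2 S) : GP S := by
  intro a ha b hb c hc hab hbc hac
  have hT : ({a, b, c} : Finset Pt) ⊆ S := by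
    intro x hx; simp at hx; rcases hx with rfl | rfl | rfl <;> assumption
  have h3 := h {a, b, c} hT (by rw [Finset.card_eq_three]; exact ⟨a, b, c, hab, hac, hbc, rfl⟩)
  by_contra hcon
  have h0 : ori a b c = 0 := by
    unfold L at hcon; rw [ori_swap a b c] at hcon; push Not at hcon; linarith [hcon.1, hcon.2]
  rw [affineIndependent_iff] at h3
  let A : ({a, b, c} : Finset Pt) := ⟨a, by simp⟩
  let B : ({a, b, c} : Finset Pt) := ⟨b, by simp⟩
  let C : ({a, b, c} : Finset Pt) := ⟨c, by simp⟩
  have hAB : A ≠ B := fun e => hab (congrArg Subtype.val e)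
  have hAC : A ≠ C := fun e => hac (congrArg Subtype.val e)
  have hBC : B ≠ C := fun e => hbc (congrArg Subtype.val e)
  have key : ∀ i : Fin 2, b i ≠ a i → False := by
    intro i hi
    -- an affine dependence with coefficient `b i - a i ≠ 0` at `c`
    have := h3 {A, B, C}
      (fun x => if x = A then c i - b i else if x = B then a i - c i else b i - a i)
      (by
        rw [Finset.sum_insert (by simp [hAB, hAC]), Finset.sum_insert (by simp [hBC]),
          Finset.sum_singleton]
        simp [hAB.symm, hAC.symm, hBC.symm])
      (by
        rw [Finset.sum_insert (by simp [hAB, hAC]), Finset.sum_insert (by simp [hBC]),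
          Finset.sum_singleton]
        simp only [hAB.symm, hAC.symm, hBC.symm, if_true, if_false]
        show (c i - b i) • a + ((a i - c i) • b + (b i - a i) • c) = 0
        unfold ori at h0
        ext l
        fin_cases i <;> fin_cases l <;> simp <;> linarith)
      C (by simp)
    simp only [hAC.symm, hBC.symm, if_false] at this
    exact hi (by linarith)
  apply hab
  ext i
  by_contra hi
  exact key i (fun e => hi e.symm)

theorem ori_combo (u v x y : Pt) (s t : ℝ) (h : s + t = 1) :
    ori u v (s • x + t • y) = s * ori u v x + t * ori u v y := by
  have : t = 1 - s := by linarith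
  subst this
  simp [ori]; ring

theorem ori_hull_nonneg {X : Set Pt} {u v z : Pt} (h : ∀ w ∈ X, 0 ≤ ori u v w)
    (hz : z ∈ convexHull ℝ X) : 0 ≤ ori u v z := by
  have : convexHull ℝ X ⊆ {w | 0 ≤ ori u v w} := by
    apply convexHull_min h
    intro x hx y hy s t hs ht hst
    show 0 ≤ ori u v _
    rw [ori_combo u v x y s t hst]
    exact add_nonneg (mul_nonneg hs hx) (mul_nonneg ht hy)
  exact this hz

/-- A point is extreme if all points of the set lie on one side of a line through it:
rotating the line slightly about `z` makes it miss `z'` too. -/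
theorem notMem_hull_left {X : Finset Pt} {z z' : Pt} (hne : z' ≠ z)
    (h : ∀ w ∈ X, w ≠ z' → L z z' w) : z ∉ convexHull ℝ (↑X : Set Pt) := by
  classical
  intro hz
  let g : Pt → ℝ := fun w => (z' 0 - z 0) * (w 0 - z 0) + (z' 1 - z 1) * (w 1 - z 1)
  obtain ⟨M, hM⟩ := (X.image (fun w => (1 - g w) / ori z z' w)).exists_le
  have hsub : convexHull ℝ (↑X : Set Pt) ⊆ {w | 0 < M * ori z z' w + g w} := by
    apply convexHull_min
    · intro w hw
      show 0 < M * ori z z' w + g w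
      by_cases hwz : w = z'
      · subst hwz
        rw [ori_self]
        have : 0 < g w := by
          have h2 : w 0 - z 0 ≠ 0 ∨ w 1 - z 1 ≠ 0 := by
            by_contra hc
            push Not at hc
            apply hne
            ext i
            fin_cases i
            · simpa using by linarith [hc.1]
            · simpa using by linarith [hc.2]
          show 0 < (w 0 - z 0) * (w 0 - z 0) + (w 1 - z 1) * (w 1 - z 1)
          rcases h2 with h2 | h2
          · have := mul_self_pos.2 h2; nlinarith [mul_self_nonneg (w 1 - z 1)]
          · have := mul_self_pos.2 h2; nlinarith [mul_self_nonneg (w 0 - z 0)]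
        linarith
      · have h1 : 0 < ori z z' w := h w hw hwz
        have := hM _ (Finset.mem_image_of_mem _ hw)
        rw [div_le_iff₀ h1] at this
        linarith
    · intro x hx y hy s t hs ht hst
      show 0 < M * ori z z' _ + g _
      have e : g (s • x + t • y) = s * g x + t * g y := by
        have : t = 1 - s := by linarith
        subst this
        simp [g]; ring
      rw [ori_combo z z' x y s t hst, e]
      have hx' : 0 < M * ori z z' x + g x := hx
      have hy' : 0 < M * ori z z' y + g y := hy
      rcases eq_or_lt_of_le hs with rfl | hs'
      · have : t = 1 := by linarith
        subst this; linarith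
      · nlinarith [mul_pos hs' hx', mul_nonneg ht hy'.le]
  have := hsub hz
  simp [g, ori] at this

/-- Reflection in the first coordinate. -/
def mir (p : Pt) : Pt := ![- p 0, p 1]

theorem ori_mir (a b c : Pt) : ori (mir a) (mir b) (mir c) = - ori a b c := by
  simp [ori, mir]; ring

theorem L_mir {a b c : Pt} : L (mir a) (mir b) (mir c) ↔ L b a c := by
  unfold L; rw [ori_mir, ori_swap a b c]

theorem mir_mir (a : Pt) : mir (mir a) = a := by
  ext i; fin_cases i <;> simp [mir]

theorem mir_inj {a b : Pt} (h : mir a = mir b) : a = b := by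
  rw [← mir_mir a, h, mir_mir]

theorem mir_combo (s t : ℝ) (x y : Pt) : mir (s • x + t • y) = s • mir x + t • mir y := by
  ext i; fin_cases i <;> simp [mir]; ring

theorem notMem_hull_right {X : Finset Pt} {z z' : Pt} (hne : z' ≠ z)
    (h : ∀ w ∈ X, w ≠ z' → L z' z w) : z ∉ convexHull ℝ (↑X : Set Pt) := by
  classical
  intro hz
  have h1 : mir z ∉ convexHull ℝ (↑(X.image mir) : Set Pt) := by
    apply notMem_hull_left (z' := mir z') (fun e => hne (mir_inj e))
    intro w hw hwz
    obtain ⟨x, hx, rfl⟩ := Finset.mem_image.1 hw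
    exact L_mir.2 (h x hx (fun e => hwz (by rw [e])))
  apply h1
  have hsub : convexHull ℝ (↑X : Set Pt) ⊆
      {w | mir w ∈ convexHull ℝ (↑(X.image mir) : Set Pt)} := by
    apply convexHull_min
    · intro w hw
      exact subset_convexHull ℝ _ (Finset.mem_coe.2 (Finset.mem_image_of_mem _ hw))
    · intro x hx y hy s t hs ht hst
      show mir _ ∈ convexHull ℝ (↑(X.image mir) : Set Pt)
      rw [mir_combo]
      exact (convex_convexHull ℝ _) hx hy hs ht hst
  exact hsub hz

theorem mem_hull_triangle {X : Set Pt} {a b c z : Pt} (ha : a ∈ convexHull ℝ X)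
    (hb : b ∈ convexHull ℝ X) (hc : c ∈ convexHull ℝ X)
    (h1 : L a b z) (h2 : L b c z) (h3 : L c a z) : z ∈ convexHull ℝ X := by
  have h0 : L a b c := L.interior h2.rr h3.r h1
  have h2' := h2.rr
  have h3' := h3.r
  unfold L at *
  have e : z = (ori z b c / ori a b c) • a + (ori a z c / ori a b c) • b
      + (ori a b z / ori a b c) • c := by
    ext i
    have hne := h0.ne'
    simp only [Pi.add_apply, Pi.smul_apply, smul_eq_mul]
    field_simp
    unfold ori
    fin_cases i <;> simp <;> ring
  have hs : ori z b c / ori a b c + ori a z c / ori a b c + ori a b z / ori a b c = 1 := by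
    have hne := h0.ne'
    field_simp
    unfold ori; ring
  rw [e]
  have hx := (convex_convexHull ℝ X)
  have := hx.sum_mem (t := Finset.univ) (w := ![ori z b c / ori a b c, ori a z c / ori a b c,
    ori a b z / ori a b c]) (z := ![a, b, c])
    (by intro i _; fin_cases i <;> simp <;> positivity)
    (by simp [Fin.sum_univ_three]; linarith)
    (by intro i _; fin_cases i <;> simp <;> assumption)
  simpa [Fin.sum_univ_three] using this

/-! ### Layered configurations -/

/-- `v₁, …, v₆` are the vertices of a convex hexagon in counterclockwise order. -/
structure Hex (v₁ v₂ v₃ v₄ v₅ v₆ : Pt) : Prop where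
  h126 : L v₁ v₂ v₆
  h136 : L v₁ v₃ v₆
  h146 : L v₁ v₄ v₆
  h156 : L v₁ v₅ v₆
  h123 : L v₁ v₂ v₃
  h134 : L v₁ v₃ v₄
  h145 : L v₁ v₄ v₅
  h234 : L v₂ v₃ v₄
  h345 : L v₃ v₄ v₅
  h456 : L v₄ v₅ v₆

/-- The orientations of the remaining ten triples of a convex hexagon. -/
theorem Hex.all {a b c d e f : Pt} (h : Hex a b c d e f) :
    L a b d ∧ L a b e ∧ L a c e ∧ L b c e ∧ L b c f ∧ L b d e ∧ L b d f ∧ L b e f ∧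
    L c d f ∧ L c e f := by
  obtain ⟨h126, h136, h146, h156, h123, h134, h145, h234, h345, h456⟩ := h
  have h124 : L a b d := L.transLast h123 h134 h126 h136 h146
  have h125 : L a b e := L.transLast h124 h145 h126 h146 h156
  have h135 : L a c e := L.transLast h134 h145 h136 h146 h156
  have h235 : L b c e := L.turn1 h123 h134 h135 h234 h345
  have h245 : L b d e := L.turn2 h124 h134 h145 h234 h345
  have h346 : L c d f := L.turn1 h134 h145 h146 h345 h456
  have h356 : L c e f := L.turn2 h135 h145 h156 h345 h456
  have h236 : L b c f := L.turn1 h123 h135 h136 h235 h356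
  have h256 : L b e f := L.turn2 h125 h135 h156 h235 h356
  have h246 : L b d f := L.turn1 h124 h145 h146 h245 h456
  exact ⟨h124, h125, h135, h235, h236, h245, h246, h256, h346, h356⟩

/-- `z` lies inside the hexagon. -/
structure InHex (v₁ v₂ v₃ v₄ v₅ v₆ z : Pt) : Prop where
  z12 : L v₁ v₂ z
  z23 : L v₂ v₃ z
  z34 : L v₃ v₄ z
  z45 : L v₄ v₅ z
  z56 : L v₅ v₆ z
  z61 : L v₆ v₁ z

/-- A set `X` without `6`-holes whose part `X \ C` is in convex position with `C` inside, described
by orientations only. -/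
structure Lay (X C : Finset Pt) : Prop where
  sub : C ⊆ X
  gp : GP X
  ext : ∀ h ∈ X, h ∉ C → ∀ a ∈ X, ∀ b ∈ X, ∀ c ∈ X, L a b h → L b c h → L c a h → False
  inn : ∀ d ∈ C, ∀ v ∈ X, v ≠ d → ∃ h ∈ X, h ∉ C ∧ L v d h
  hex : ∀ v₁ ∈ X, ∀ v₂ ∈ X, ∀ v₃ ∈ X, ∀ v₄ ∈ X, ∀ v₅ ∈ X, ∀ v₆ ∈ X, Hex v₁ v₂ v₃ v₄ v₅ v₆ →
    ∃ z ∈ C, InHex v₁ v₂ v₃ v₄ v₅ v₆ z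

/-- A minimal convex nonagon `X \ D` of a set without `6`-holes, together with the points `D` in
its interior. -/
structure Cfg (X D : Finset Pt) : Prop extends Lay X D where
  card9 : (X \ D).card = 9
  only9 : ∀ Z ⊆ X, (∃ z ∈ Z, z ∈ D) →
    (∀ z ∈ Z, z ∈ D → ∃ z', z' ≠ z ∧ ((∀ w ∈ Z, w ≠ z → w ≠ z' → L z z' w) ∨
      (∀ w ∈ Z, w ≠ z → w ≠ z' → L z' z w))) → Z.card ≤ 8

/-! ### Holes and minimal nonagons -/

/-- A convex hexagon without points of `S` inside is a `6`-hole. -/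
theorem hole_of_hex {S : Finset Pt} (hS : GP S) {a b c d e f : Pt} (ha : a ∈ S) (hb : b ∈ S)
    (hc : c ∈ S) (hd : d ∈ S) (he : e ∈ S) (hf : f ∈ S) (h : Hex a b c d e f)
    (hno : ∀ z ∈ S, z ∈ convexHull ℝ (↑({a, b, c, d, e, f} : Finset Pt) : Set Pt) →
      ¬ InHex a b c d e f z) : IsHole 2 6 S {a, b, c, d, e, f} := by
  obtain ⟨h124, h125, h135, h235, h236, h245, h246, h256, h346, h356⟩ := h.all
  obtain ⟨h126, h136, h146, h156, h123, h134, h145, h234, h345, h456⟩ := h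
  have nab := h123.ne12
  have nac := h123.ne13
  have nad := h124.ne13
  have nae := h125.ne13
  have naf := h126.ne13
  have nbc := h123.ne23
  have nbd := h124.ne23
  have nbe := h125.ne23
  have nbf := h126.ne23
  have ncd := h134.ne23
  have nce := h135.ne23
  have ncf := h136.ne23
  have nde := h145.ne23
  have ndf := h146.ne23
  have nef := h156.ne23
  refine ⟨?_, ?_, ?_, ?_⟩
  · intro x hx
    simp only [Finset.mem_insert, Finset.mem_singleton] at hx
    rcases hx with rfl | rfl | rfl | rfl | rfl | rfl <;> assumption
  · rw [Finset.card_insert_of_notMem, Finset.card_insert_of_notMem, Finset.card_insert_of_notMem,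
      Finset.card_insert_of_notMem, Finset.card_insert_of_notMem, Finset.card_singleton] <;>
    simp [*]
  · intro p hp
    simp only [Finset.mem_insert, Finset.mem_singleton] at hp
    rcases hp with rfl | rfl | rfl | rfl | rfl | rfl
    · refine notMem_hull_left (z' := b) nab.symm ?_
      intro w hw hne
      simp only [Finset.mem_erase, Finset.mem_insert, Finset.mem_singleton] at hw
      rcases hw with ⟨h0, rfl | rfl | rfl | rfl | rfl | rfl⟩ <;> first | assumption | contradiction
    · refine notMem_hull_left (z' := c) nbc.symm ?_
      intro w hw hne
      simp only [Finset.mem_erase, Finset.mem_insert, Finset.mem_singleton] at hw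
      rcases hw with ⟨h0, rfl | rfl | rfl | rfl | rfl | rfl⟩ <;>
        first | assumption | contradiction | (apply L.r; assumption)
    · refine notMem_hull_left (z' := d) ncd.symm ?_
      intro w hw hne
      simp only [Finset.mem_erase, Finset.mem_insert, Finset.mem_singleton] at hw
      rcases hw with ⟨h0, rfl | rfl | rfl | rfl | rfl | rfl⟩ <;>
        first | assumption | contradiction | (apply L.r; assumption)
    · refine notMem_hull_left (z' := e) nde.symm ?_
      intro w hw hne
      simp only [Finset.mem_erase, Finset.mem_insert, Finset.mem_singleton] at hw
      rcases hw with ⟨h0, rfl | rfl | rfl | rfl | rfl | rfl⟩ <;>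
        first | assumption | contradiction | (apply L.r; assumption)
    · refine notMem_hull_left (z' := f) nef.symm ?_
      intro w hw hne
      simp only [Finset.mem_erase, Finset.mem_insert, Finset.mem_singleton] at hw
      rcases hw with ⟨h0, rfl | rfl | rfl | rfl | rfl | rfl⟩ <;>
        first | assumption | contradiction | (apply L.r; assumption)
    · refine notMem_hull_left (z' := a) naf ?_
      intro w hw hne
      simp only [Finset.mem_erase, Finset.mem_insert, Finset.mem_singleton] at hw
      rcases hw with ⟨h0, rfl | rfl | rfl | rfl | rfl | rfl⟩ <;>
        first | assumption | contradiction | (apply L.r; apply L.r; assumption)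
  · intro z hz hzX hzh
    refine hno z hz hzh ?_
    simp only [Finset.mem_insert, Finset.mem_singleton, not_or] at hzX
    obtain ⟨za, zb, zc, zd, ze, zf⟩ := hzX
    have key : ∀ u ∈ S, ∀ v ∈ S, u ≠ v → z ≠ u → z ≠ v →
        (∀ w ∈ ({a, b, c, d, e, f} : Finset Pt), 0 ≤ ori u v w) → L u v z := by
      intro u hu v hv huv hzu hzv hw
      have h1 := ori_hull_nonneg hw hzh
      rcases hS u hu v hv z hz huv hzv.symm hzu.symm with h | h
      · exact h
      · unfold L at h; rw [ori_swap] at h; linarith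
    constructor
    · apply key a ha b hb nab za zb
      intro w hw
      simp only [Finset.mem_insert, Finset.mem_singleton] at hw
      rcases hw with rfl | rfl | rfl | rfl | rfl | rfl <;>
        first | (rw [ori_self2]) | (rw [ori_self]) | (apply le_of_lt; assumption)
    · apply key b hb c hc nbc zb zc
      intro w hw
      simp only [Finset.mem_insert, Finset.mem_singleton] at hw
      rcases hw with rfl | rfl | rfl | rfl | rfl | rfl <;>
        first | (rw [ori_self2]) | (rw [ori_self]) | (apply le_of_lt; assumption) |
          (apply le_of_lt; apply L.r; assumption)
    · apply key c hc d hd ncd zc zd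
      intro w hw
      simp only [Finset.mem_insert, Finset.mem_singleton] at hw
      rcases hw with rfl | rfl | rfl | rfl | rfl | rfl <;>
        first | (rw [ori_self2]) | (rw [ori_self]) | (apply le_of_lt; assumption) |
          (apply le_of_lt; apply L.r; assumption)
    · apply key d hd e he nde zd ze
      intro w hw
      simp only [Finset.mem_insert, Finset.mem_singleton] at hw
      rcases hw with rfl | rfl | rfl | rfl | rfl | rfl <;>
        first | (rw [ori_self2]) | (rw [ori_self]) | (apply le_of_lt; assumption) |
          (apply le_of_lt; apply L.r; assumption)
    · apply key e he f hf nef ze zf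
      intro w hw
      simp only [Finset.mem_insert, Finset.mem_singleton] at hw
      rcases hw with rfl | rfl | rfl | rfl | rfl | rfl <;>
        first | (rw [ori_self2]) | (rw [ori_self]) | (apply le_of_lt; assumption) |
          (apply le_of_lt; apply L.r; assumption)
    · apply key f hf a ha naf.symm zf za
      intro w hw
      simp only [Finset.mem_insert, Finset.mem_singleton] at hw
      rcases hw with rfl | rfl | rfl | rfl | rfl | rfl <;>
        first | (rw [ori_self2]) | (rw [ori_self]) | (apply le_of_lt; assumption) |
          (apply le_of_lt; apply L.r; apply L.r; assumption)

/-- A vertex of a convex polygon `H` is an extreme point of the hull of `H`. -/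
theorem vertex_extreme {H : Finset Pt} (hH : InConvexPosition 2 H) {h : Pt} (hh : h ∈ H)
    {Y : Set Pt} (hY : Y ⊆ convexHull ℝ (↑H : Set Pt)) (hhY : h ∉ Y) :
    h ∉ convexHull ℝ Y := by
  have h1 := hH h hh
  have hcl : IsClosed (convexHull ℝ (↑(H.erase h) : Set Pt)) :=
    ((H.erase h).finite_toSet.isCompact_convexHull ℝ).isClosed
  obtain ⟨f, u, hfu, hfH⟩ := geometric_hahn_banach_point_closed
    (convex_convexHull ℝ (↑(H.erase h) : Set Pt)) hcl h1
  have hsub : convexHull ℝ (↑H : Set Pt) ⊆ {w | w = h ∨ f h < f w} := by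
    apply convexHull_min
    · intro w hw
      by_cases e : w = h
      · exact Or.inl e
      · right
        have := hfH w (subset_convexHull ℝ _ (by
          rw [Finset.mem_coe, Finset.mem_erase]; exact ⟨e, hw⟩))
        linarith
    · intro x hx y hy s t hs ht hst
      have e : f (s • x + t • y) = s * f x + t * f y := by simp
      rcases hx with rfl | hx <;> rcases hy with rfl | hy
      · left; rw [← add_smul, hst, one_smul]
      · rcases eq_or_lt_of_le ht with rfl | ht'
        · left; have : s = 1 := by linarith
          subst this; simp
        · right; rw [e]
          have : s = 1 - t := by linarith
          subst this; nlinarith [mul_pos ht' (sub_pos.2 hy)]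
      · rcases eq_or_lt_of_le hs with rfl | hs'
        · left; have : t = 1 := by linarith
          subst this; simp
        · right; rw [e]
          have : t = 1 - s := by linarith
          subst this; nlinarith [mul_pos hs' (sub_pos.2 hx)]
      · right; rw [e]
        have : t = 1 - s := by linarith
        subst this
        rcases eq_or_lt_of_le hs with rfl | hs'
        · simpa using hy
        · nlinarith [mul_pos hs' (sub_pos.2 hx), mul_nonneg ht (sub_pos.2 hy).le]
  have hsub2 : convexHull ℝ Y ⊆ {w | f h < f w} := by
    apply convexHull_min
    · intro w hw
      rcases hsub (hY hw) with e | e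
      · exact absurd (e ▸ hw) hhY
      · exact e
    · exact convex_halfSpace_gt f.isLinear _
  intro hc
  exact lt_irrefl (f h) (hsub2 hc)

/-- Choose a convex nonagon with the least number of points of `S` in its hull. A convex nonagon
inside it, other than the chosen one, would have fewer. -/
theorem exists_cfg {S : Finset Pt} (hS : GP S) (hno : ¬ ∃ X, IsHole 2 6 S X)
    (h9 : ∃ H ⊆ S, H.card = 9 ∧ InConvexPosition 2 H) : ∃ X D, Cfg X D := by
  classical
  let P : Finset (Finset Pt) := S.powerset.filter (fun H => H.card = 9 ∧ InConvexPosition 2 H)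
  let ins : Finset Pt → Finset Pt := fun H => S.filter (fun z => z ∈ convexHull ℝ (↑H : Set Pt))
  have hP : P.Nonempty := by
    obtain ⟨H, h1, h2⟩ := h9
    exact ⟨H, by simp [P, h1, h2]⟩
  obtain ⟨H, hHP, hmin⟩ := Finset.exists_min_image P (fun H => (ins H).card) hP
  obtain ⟨hHS, hH9, hHc⟩ : H ⊆ S ∧ H.card = 9 ∧ InConvexPosition 2 H := by
    simpa [P] using hHP
  have hHX : H ⊆ ins H := fun h hh =>
    Finset.mem_filter.2 ⟨hHS hh, subset_convexHull ℝ _ (Finset.mem_coe.2 hh)⟩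
  have hXS : ins H ⊆ S := Finset.filter_subset _ _
  have hXh : ∀ z ∈ ins H, z ∈ convexHull ℝ (↑H : Set Pt) := fun z hz => (Finset.mem_filter.1 hz).2
  have hD : ∀ z ∈ ins H, z ∉ ins H \ H → z ∈ H := by
    intro z hz h; by_contra hc; exact h (Finset.mem_sdiff.2 ⟨hz, hc⟩)
  have hgp : GP (ins H) := hS.mono hXS
  have hext : ∀ h ∈ H, ∀ a ∈ ins H, ∀ b ∈ ins H, ∀ c ∈ ins H,
      L a b h → L b c h → L c a h → False := by
    intro h hh a ha b hb c hc h1 h2 h3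
    have := vertex_extreme hHc hh (Y := {a, b, c}) (by
      intro x hx
      simp only [Set.mem_insert_iff, Set.mem_singleton_iff] at hx
      rcases hx with rfl | rfl | rfl <;> apply hXh <;> assumption)
      (by simp only [Set.mem_insert_iff, Set.mem_singleton_iff, not_or]
          exact ⟨h1.ne13.symm, h1.ne23.symm, h2.ne23.symm⟩)
    refine this (mem_hull_triangle ?_ ?_ ?_ h1 h2 h3) <;> apply subset_convexHull <;> simp
  refine ⟨ins H, ins H \ H, ?_⟩
  refine { sub := Finset.sdiff_subset, gp := hgp, ext := ?_, inn := ?_, hex := ?_, card9 := ?_,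
           only9 := ?_ }
  · intro h hh hhD
    exact hext h (hD h hh hhD)
  · intro d hd v hv hvd
    by_contra hcon
    push Not at hcon
    obtain ⟨hdX, hdH⟩ := Finset.mem_sdiff.1 hd
    refine notMem_hull_left (X := H) hvd ?_ (hXh d hdX)
    intro w hw hwv
    have h1 := hcon w (hHX hw) (by simp [hw])
    have hdw : d ≠ w := by rintro rfl; exact hdH hw
    rcases hgp d hdX v hv w (hHX hw) hvd.symm hwv.symm hdw with h | h
    · exact h
    · exact absurd h h1
  · intro a ha b hb c hc d hd e he f hf hx
    by_contra hcon
    push Not at hcon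
    apply hno
    refine ⟨_, hole_of_hex hS (hXS ha) (hXS hb) (hXS hc) (hXS hd) (hXS he) (hXS hf) hx ?_⟩
    intro z hz hzh hin
    have hzX : z ∈ ins H := by
      refine Finset.mem_filter.2 ⟨hz, ?_⟩
      refine convexHull_min ?_ (convex_convexHull ℝ (↑H : Set Pt)) hzh
      intro w hw
      simp only [Finset.coe_insert, Finset.coe_singleton, Set.mem_insert_iff,
        Set.mem_singleton_iff] at hw
      rcases hw with rfl | rfl | rfl | rfl | rfl | rfl <;> apply hXh <;> assumption
    by_cases hzH : z ∈ H
    · -- a vertex of `H` cannot lie in one of the triangles of a fan triangulation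
      obtain ⟨z12, z23, z34, z45, z56, z61⟩ := hin
      have hE := hext z hzH
      by_cases k3 : L a c z
      · by_cases k4 : L a d z
        · by_cases k5 : L a e z
          · exact hE a ha e he f hf k5 z56 z61
          · rcases hgp a ha e he z hzX hx.h145.ne13 z45.ne23 z12.ne13 with q | q
            · exact k5 q
            · exact hE a ha d hd e he k4 z45 q
        · rcases hgp a ha d hd z hzX hx.h134.ne13 z34.ne23 z12.ne13 with q | q
          · exact k4 q
          · exact hE a ha c hc d hd k3 z34 q
      · rcases hgp a ha c hc z hzX hx.h123.ne13 z23.ne23 z12.ne13 with q | q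
        · exact k3 q
        · exact hE a ha b hb c hc z12 z23 q
    · exact hcon z (Finset.mem_sdiff.2 ⟨hzX, hzH⟩) hin
  · rw [Finset.sdiff_sdiff_eq_self hHX]; exact hH9
  · intro Z hZ ⟨z₀, hz₀, hz₀D⟩ hcr
    by_contra hcard
    push Not at hcard
    obtain ⟨Y, hzY, hYZ, hY9⟩ := Finset.exists_subsuperset_card_eq (s := {z₀}) (t := Z) (n := 9)
      (by simpa using hz₀) (by simp) hcard
    have hYX : Y ⊆ ins H := hYZ.trans hZ
    have hYc : InConvexPosition 2 Y := by
      intro p hp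
      by_cases hpD : p ∈ ins H \ H
      · obtain ⟨z', hne, h | h⟩ := hcr p (hYZ hp) hpD
        · refine notMem_hull_left hne ?_
          intro w hw hwz
          obtain ⟨h1, h2⟩ := Finset.mem_erase.1 hw
          exact h w (hYZ h2) h1 hwz
        · refine notMem_hull_right hne ?_
          intro w hw hwz
          obtain ⟨h1, h2⟩ := Finset.mem_erase.1 hw
          exact h w (hYZ h2) h1 hwz
      · refine vertex_extreme hHc (hD p (hYX hp) hpD) ?_ (by simp)
        intro w hw
        exact hXh w (hYX (Finset.mem_of_mem_erase hw))
    have hYP : Y ∈ P := by simp [P, hYX.trans hXS, hY9, hYc]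
    have hsub : ins Y ⊆ ins H := by
      intro z hz
      obtain ⟨h1, h2⟩ := Finset.mem_filter.1 hz
      refine Finset.mem_filter.2 ⟨h1, ?_⟩
      refine convexHull_min ?_ (convex_convexHull ℝ (↑H : Set Pt)) h2
      exact fun w hw => hXh w (hYX hw)
    have hne : ∃ h ∈ H, h ∉ Y := by
      by_contra hc
      push Not at hc
      have hHY : H ⊆ Y := hc
      have : H = Y := Finset.eq_of_subset_of_card_le hHY (by omega)
      subst this
      exact (Finset.mem_sdiff.1 hz₀D).2 (by simpa using hzY)
    obtain ⟨h, hh, hhY⟩ := hne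
    have hlt : ins Y ⊂ ins H := by
      refine Finset.ssubset_iff_of_subset hsub |>.2 ⟨h, hHX hh, ?_⟩
      intro hc
      refine vertex_extreme hHc hh (Y := ↑Y) ?_ (by simpa using hhY) (Finset.mem_filter.1 hc).2
      exact fun w hw => hXh w (hYX hw)
    have := Finset.card_lt_card hlt
    have := hmin Y hYP
    omega

/-! ### Sorting finite sets -/

theorem exists_sorted {α : Type*} [DecidableEq α] (R : α → α → Prop) (T : Finset α)
    (tot : ∀ a ∈ T, ∀ b ∈ T, a ≠ b → R a b ∨ R b a)
    (tr : ∀ a ∈ T, ∀ b ∈ T, ∀ c ∈ T, R a b → R b c → R a c) :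
    ∃ l : List α, l.Pairwise R ∧ l.length = T.card ∧ ∀ x ∈ l, x ∈ T := by
  induction T using Finset.induction_on with
  | empty => exact ⟨[], by simp⟩
  | insert a T ha ih =>
    obtain ⟨l, h1, h2, h3⟩ := ih
      (fun x hx y hy => tot x (Finset.mem_insert_of_mem hx) y (Finset.mem_insert_of_mem hy))
      (fun x hx y hy z hz => tr x (Finset.mem_insert_of_mem hx) y (Finset.mem_insert_of_mem hy)
        z (Finset.mem_insert_of_mem hz))
    rw [Finset.card_insert_of_notMem ha, ← h2]
    have key : ∀ l : List α, l.Pairwise R → (∀ x ∈ l, x ∈ T) →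
        ∃ l' : List α, l'.Pairwise R ∧ l'.length = l.length + 1 ∧ ∀ x ∈ l', x = a ∨ x ∈ l := by
      intro l
      induction l with
      | nil => intro _ _; exact ⟨[a], by simp⟩
      | cons b l ih2 =>
        intro hl hT
        rw [List.pairwise_cons] at hl
        have hb : b ∈ T := hT b (by simp)
        have hne : a ≠ b := fun e => ha (e ▸ hb)
        rcases tot a (by simp) b (Finset.mem_insert_of_mem hb) hne with h | h
        · refine ⟨a :: b :: l, ?_, by simp, by simp⟩
          rw [List.pairwise_cons]
          refine ⟨?_, List.pairwise_cons.2 hl⟩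
          intro x hx
          rcases List.mem_cons.1 hx with rfl | hx
          · exact h
          · exact tr a (by simp) b (Finset.mem_insert_of_mem hb) x
              (Finset.mem_insert_of_mem (hT x (by simp [hx]))) h (hl.1 x hx)
        · obtain ⟨l', g1, g2, g3⟩ := ih2 hl.2 (fun x hx => hT x (by simp [hx]))
          refine ⟨b :: l', ?_, by simp [g2], ?_⟩
          · rw [List.pairwise_cons]
            refine ⟨?_, g1⟩
            intro x hx
            rcases g3 x hx with rfl | hx
            · exact h
            · exact hl.1 x hx
          · intro x hx
            rcases List.mem_cons.1 hx with rfl | hx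
            · simp
            · rcases g3 x hx with h | h <;> simp [h]
    obtain ⟨l', g1, g2, g3⟩ := key l h1 h3
    refine ⟨l', g1, g2, ?_⟩
    intro x hx
    rcases g3 x hx with rfl | h
    · simp
    · exact Finset.mem_insert_of_mem (h3 x h)

/-- A sorted list of `m` elements in a set of at least `m` elements. -/
theorem exists_sorted_of_le {α : Type*} [DecidableEq α] (R : α → α → Prop) (T : Finset α)
    (tot : ∀ a ∈ T, ∀ b ∈ T, a ≠ b → R a b ∨ R b a)
    (tr : ∀ a ∈ T, ∀ b ∈ T, ∀ c ∈ T, R a b → R b c → R a c) (m : ℕ) (hm : m ≤ T.card) :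
    ∃ l : List α, l.Pairwise R ∧ l.length = m ∧ ∀ x ∈ l, x ∈ T := by
  obtain ⟨l, h1, h2, h3⟩ := exists_sorted R T tot tr
  exact ⟨l.take m, h1.sublist (List.take_sublist _ _), by simp; omega,
    fun x hx => h3 x ((List.take_sublist _ _).subset hx)⟩

/-! ### Cups and caps around an extreme point -/

/-- A left turn (`s = true`) or right turn (`s = false`) at `q`. -/
def Tn (s : Bool) (p q r : Pt) : Prop := if s then L p q r else L q p r

theorem Tn.turn1 {s : Bool} {x p q r t : Pt} (hpq : L x p q) (hqr : L x q r)
    (hqs : L x q t) (h1 : Tn s p q r) (h2 : Tn s q r t) : Tn s p q t := by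
  cases s with
  | true => exact L.turn1 hpq hqr hqs h1 h2
  | false =>
    have h1' : L q p r := h1
    have h2' : L r q t := h2
    show L q p t
    have e := gp q r t p x
    have a1 := hpq.rr
    have a2 := hqr.r
    have a3 := hqs.r
    unfold L at *
    have b0 : ori q p x = - ori q x p := ori_swap' _ _ _
    have b1 : ori q p r = - ori q r p := ori_swap' _ _ _
    have b2 : ori r q t = - ori q r t := ori_swap _ _ _
    have b3 : ori q p t = - ori q t p := ori_swap' _ _ _
    rw [b1] at h1'
    rw [b2] at h2'
    rw [b0] at e
    have h : 0 < ori q r x * (- ori q t p) := by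
      have := mul_pos h1' a3; have := mul_pos h2' a1; nlinarith
    rw [b3]
    exact (pos_iff_pos_of_mul_pos h).1 a2

theorem Tn.turn2 {s : Bool} {x p q r t : Pt} (hpr : L x p r) (hqr : L x q r)
    (hrs : L x r t) (h1 : Tn s p q r) (h2 : Tn s q r t) : Tn s p r t := by
  cases s with
  | true => exact L.turn2 hpr hqr hrs h1 h2
  | false =>
    have h1' : L q p r := h1
    have h2' : L r q t := h2
    show L r p t
    have e := gp r t p q x
    have a1 := hpr.rr
    have a2 := hqr.rr
    have a3 := hrs.r
    have a4 := h1'.rr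
    have a5 := h2'
    unfold L at *
    have b1 : ori r p x = - ori r x p := ori_swap' _ _ _
    have b2 : ori r q x = - ori r x q := ori_swap' _ _ _
    have b4 : ori r q p = - ori r p q := ori_swap' _ _ _
    have b5 : ori r q t = - ori r t q := ori_swap' _ _ _
    have b6 : ori r p t = - ori r t p := ori_swap' _ _ _
    rw [b1, b2] at e
    rw [b4] at a4
    rw [b5] at a5
    rw [b6]
    have h : 0 < ori r x q * (- ori r t p) := by
      have := mul_pos a4 a3; have := mul_pos a5 a1; nlinarith
    exact (pos_iff_pos_of_mul_pos h).1 a2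

/-- A cap (`s = true`) or cup (`s = false`) seen from `x`, as the list of its points in reverse
order. -/
inductive Ch (x : Pt) (s : Bool) : List Pt → Prop
  | one (p : Pt) : Ch x s [p]
  | two (p q : Pt) : L x p q → Ch x s [q, p]
  | cons (r q p : Pt) (l : List Pt) : Ch x s (q :: p :: l) → L x q r → Tn s p q r →
      Ch x s (r :: q :: p :: l)

theorem Ch.snoc {x : Pt} {s : Bool} {p' p q : Pt} (h0 : L x p' p) (ht : Tn s p' p q) :
    ∀ l : List Pt, Ch x s (l ++ [q, p]) → Ch x s (l ++ [q, p, p'])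
  | [], h => by
    cases h with
    | two _ _ h => exact Ch.cons _ _ _ _ (Ch.two _ _ h0) h ht
  | [a], h => by
    cases h with
    | cons _ _ _ _ h h1 h2 => exact Ch.cons _ _ _ _ (Ch.snoc h0 ht [] h) h1 h2
  | [a, b], h => by
    cases h with
    | cons _ _ _ _ h h1 h2 => exact Ch.cons _ _ _ _ (Ch.snoc h0 ht [b] h) h1 h2
  | a :: b :: c :: l, h => by
    cases h with
    | cons _ _ _ _ h h1 h2 => exact Ch.cons _ _ _ _ (Ch.snoc h0 ht (b :: c :: l) h) h1 h2

/-- The points of `T` are linearly ordered by angle around `x`. -/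
structure Srt (x : Pt) (T : Finset Pt) : Prop where
  gp : GP (insert x T)
  nm : x ∉ T
  tr : ∀ a ∈ T, ∀ b ∈ T, ∀ c ∈ T, L x a b → L x b c → L x a c

theorem Srt.tot {x : Pt} {T : Finset Pt} (h : Srt x T) {a b : Pt} (ha : a ∈ T) (hb : b ∈ T)
    (hab : a ≠ b) : L x a b ∨ L x b a := by
  have hxa : x ≠ a := fun e => h.nm (e ▸ ha)
  have hxb : x ≠ b := fun e => h.nm (e ▸ hb)
  rcases h.gp x (by simp) a (by simp [ha]) b (by simp [hb]) hxa hab hxb with g | g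
  · exact Or.inl g
  · exact Or.inr g.r

theorem Ch.sorted {x : Pt} {T : Finset Pt} (hT : Srt x T) {s : Bool} {l : List Pt}
    (h : Ch x s l) (hl : ∀ p ∈ l, p ∈ T) : l.Pairwise (fun b a => L x a b) := by
  induction h with
  | one p => simp
  | two p q h => simpa using h
  | cons r q p l h h1 h2 ih =>
    have ih := ih (fun p hp => hl p (by simp at hp ⊢; tauto))
    rw [List.pairwise_cons]
    refine ⟨?_, ih⟩
    intro a ha
    rcases List.mem_cons.1 ha with rfl | ha
    · exact h1
    · rw [List.pairwise_cons] at ih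
      exact hT.tr a (hl a (by simp at ha ⊢; tauto)) q (hl q (by simp)) r (hl r (by simp))
        (ih.1 a ha) h1

theorem Ch.triples {x : Pt} {T : Finset Pt} (hT : Srt x T) {s : Bool} {l : List Pt}
    (h : Ch x s l) (hl : ∀ p ∈ l, p ∈ T) :
    ∀ r t, l = r :: t → t.Pairwise (fun b a => Tn s a b r) := by
  induction h with
  | one p => intro r t e; cases e; simp
  | two p q h => intro r t e; cases e; simp
  | cons r q p l h h1 h2 ih =>
    intro r' t' e
    cases e
    have hl' : ∀ a ∈ q :: p :: l, a ∈ T := fun a ha => hl a (List.mem_cons_of_mem _ ha)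
    have hs := Ch.sorted hT h hl'
    have hs2 := Ch.sorted hT (Ch.cons r q p l h h1 h2) hl
    have ih := ih hl' q (p :: l) rfl
    rw [List.pairwise_cons] at hs hs2 ⊢
    have hs3 := hs2.1
    constructor
    · intro a ha
      rcases List.mem_cons.1 ha with rfl | ha'
      · exact h2
      · rw [List.pairwise_cons] at ih
        exact Tn.turn2 (hs.1 a ha) (hs.1 p (by simp)) h1 (ih.1 a ha') h2
    · have hs4 := hs.2
      have hs5 := hs.1
      have key : ∀ (m : List Pt), (∀ a ∈ m, L x a q ∧ L x a r) → m.Pairwise (fun b a => L x a b) →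
          (∀ b ∈ m, Tn s b q r) →
          m.Pairwise (fun b a => Tn s a b q) → m.Pairwise (fun b a => Tn s a b r) := by
        intro m
        induction m with
        | nil => simp
        | cons b m ihm =>
          intro g1 g2 g3 g4
          rw [List.pairwise_cons] at g2 g4 ⊢
          refine ⟨?_, ihm (fun a ha => g1 a (by simp [ha])) g2.2 (fun a ha => g3 a (by simp [ha]))
            g4.2⟩
          intro a ha
          exact Tn.turn1 (g2.1 a ha) (g1 b (by simp)).1 (g1 b (by simp)).2 (g4.1 a ha)
            (g3 b (by simp))
      refine key (p :: l) (fun a ha => ⟨hs5 a ha, hs3 a (List.mem_cons_of_mem _ ha)⟩) hs4 ?_ ih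
      intro b hb
      rcases List.mem_cons.1 hb with rfl | hb'
      · exact h2
      · rw [List.pairwise_cons] at ih
        exact Tn.turn2 (hs.1 b hb) (hs.1 p (by simp)) h1 (ih.1 b hb') h2

theorem Ch.tail {x : Pt} {s : Bool} {r q : Pt} {l : List Pt} (h : Ch x s (r :: q :: l)) :
    Ch x s (q :: l) := by
  cases h with
  | two _ _ h => exact Ch.one _
  | cons _ _ _ _ h h1 h2 => exact h

theorem Ch.triple {x : Pt} {T : Finset Pt} (hT : Srt x T) {s : Bool} {l : List Pt}
    (h : Ch x s l) (hl : ∀ p ∈ l, p ∈ T) {a b c : Pt} (hs : [c, b, a].Sublist l) : Tn s a b c := by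
  induction l with
  | nil => simp at hs
  | cons r l ih =>
    have h3 := Ch.triples hT h hl r l rfl
    cases hs with
    | cons _ hs =>
      cases l with
      | nil => simp at hs
      | cons q l => exact ih h.tail (fun p hp => hl p (by simp at hp ⊢; tauto)) hs
    | cons_cons _ hs =>
      have := h3.sublist hs
      simpa using this

theorem Tn.rot {s : Bool} {a b c : Pt} (h : Tn s a b c) : Tn s b c a := by
  cases s with
  | true => exact L.r h
  | false => exact L.rr h

/-- Every point of a cap or cup of at least two points has a line through it and another point
of the chain leaving the rest of the chain on one side. -/
theorem Ch.support {x : Pt} {T : Finset Pt} (hT : Srt x T) {s : Bool} {l : List Pt}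
    (h : Ch x s l) (hl : ∀ p ∈ l, p ∈ T) (h2 : 2 ≤ l.length) (z : Pt) (hz : z ∈ l) :
    (∃ p, L x p z ∧ p ∈ l ∧ ∀ w ∈ l, w ≠ z → w ≠ p → Tn s p z w) ∨
    (∃ n, L x z n ∧ n ∈ l ∧ (∀ w ∈ l, w ≠ z → L x z w) ∧ ∀ w ∈ l, w ≠ z → w ≠ n → Tn s z n w) := by
  obtain ⟨u, v, rfl⟩ := List.append_of_mem hz
  have hs := Ch.sorted hT h hl
  rw [List.pairwise_append] at hs
  obtain ⟨s1, s2, s3⟩ := hs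
  rw [List.pairwise_cons] at s2
  cases v with
  | cons p v =>
    left
    refine ⟨p, s2.1 p (by simp), by simp, ?_⟩
    intro w hw hwz hwp
    simp only [List.mem_append, List.mem_cons] at hw
    rcases hw with hw | rfl | rfl | hw
    · apply Ch.triple hT h hl
      have a1 : [w].Sublist u := List.singleton_sublist.2 hw
      have a2 : [z, p].Sublist (z :: p :: v) := by simp
      exact a1.append a2
    · exact absurd rfl hwz
    · exact absurd rfl hwp
    · refine Tn.rot (Ch.triple hT h hl ?_)
      have a1 : [w].Sublist v := List.singleton_sublist.2 hw
      exact ((a1.cons_cons p).cons_cons z).trans (List.sublist_append_right _ _)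
  | nil =>
    right
    rcases List.eq_nil_or_concat u with rfl | ⟨u', n, rfl⟩
    · simp at h2
    · refine ⟨n, s3 n (by simp) z (by simp), by simp, ?_, ?_⟩
      · intro w hw hwz
        simp only [List.mem_append, List.mem_cons, List.not_mem_nil, or_false] at hw
        rcases hw with hw | hw
        · exact s3 w (by simpa using hw) z (by simp)
        · exact absurd hw hwz
      · intro w hw hwz hwn
        have hw' : w ∈ u' := by simpa [hwz, hwn] using hw
        apply Ch.triple hT h hl
        have a1 : [w].Sublist u' := List.singleton_sublist.2 hw'
        have := a1.append (List.Sublist.refl [n, z])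
        simpa using this

theorem Ch.length_toFinset {x : Pt} {T : Finset Pt} (hT : Srt x T) {s : Bool} {l : List Pt}
    (h : Ch x s l) (hl : ∀ p ∈ l, p ∈ T) : l.toFinset.card = l.length := by
  apply List.toFinset_card_of_nodup
  have := Ch.sorted hT h hl
  exact this.imp (fun h => h.ne23.symm)

theorem Ch.convex {x : Pt} {T : Finset Pt} (hT : Srt x T) {s : Bool} {l : List Pt}
    (h : Ch x s l) (hl : ∀ p ∈ l, p ∈ T) (h2 : 2 ≤ l.length) :
    InConvexPosition 2 l.toFinset := by
  intro z hz
  have hz' : z ∈ l := List.mem_toFinset.1 hz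
  rcases Ch.support hT h hl h2 z hz' with ⟨p, h1, _, h3⟩ | ⟨n, h1, _, _, h4⟩
  · cases s with
    | true =>
      refine notMem_hull_right h1.ne23 ?_
      intro w hw hwp
      simp at hw
      exact h3 w hw.2 hw.1 hwp
    | false =>
      refine notMem_hull_left h1.ne23 ?_
      intro w hw hwp
      simp at hw
      exact h3 w hw.2 hw.1 hwp
  · cases s with
    | true =>
      refine notMem_hull_left h1.ne23.symm ?_
      intro w hw hwp
      simp at hw
      exact h4 w hw.2 hw.1 hwp
    | false =>
      refine notMem_hull_right h1.ne23.symm ?_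
      intro w hw hwp
      simp at hw
      exact h4 w hw.2 hw.1 hwp

/-- A cap stays in convex position when `x` is added. -/
theorem Ch.convex_cap {x : Pt} {T : Finset Pt} (hT : Srt x T) {l : List Pt}
    (h : Ch x true l) (hl : ∀ p ∈ l, p ∈ T) (h2 : 2 ≤ l.length) :
    InConvexPosition 2 (insert x l.toFinset) := by
  have hxl : x ∉ l := fun e => hT.nm (hl x e)
  intro z hz
  rcases Finset.mem_insert.1 hz with rfl | hz
  · -- the first point of the cap spans with `z` a supporting line
    rcases List.eq_nil_or_concat l with rfl | ⟨u, a, rfl⟩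
    · simp at h2
    have hs := Ch.sorted hT h hl
    rw [List.concat_eq_append, List.pairwise_append] at hs
    have hza : a ≠ z := fun e => hxl (by simp [e])
    refine notMem_hull_left hza ?_
    intro w hw hwa
    have hw' : w ∈ u := by
      rw [Finset.mem_erase, Finset.mem_insert, List.mem_toFinset, List.concat_eq_append,
        List.mem_append, List.mem_singleton] at hw
      tauto
    exact hs.2.2 w hw' a (by simp)
  · have hz' : z ∈ l := List.mem_toFinset.1 hz
    rcases Ch.support hT h hl h2 z hz' with ⟨p, h1, _, h3⟩ | ⟨n, h1, _, _, h4⟩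
    · refine notMem_hull_right h1.ne23 ?_
      intro w hw hwp
      simp at hw
      rcases hw.2 with rfl | hw2
      · exact h1.r
      · exact h3 w hw2 hw.1 hwp
    · refine notMem_hull_left h1.ne23.symm ?_
      intro w hw hwp
      simp at hw
      rcases hw.2 with rfl | hw2
      · exact h1.r
      · exact h4 w hw2 hw.1 hwp

/-! ### The Erdős–Szekeres argument -/

/-- `T` contains a cap/cup of `k` points with last point `p`. -/
def EndsIn (x : Pt) (s : Bool) (T : Finset Pt) (k : ℕ) (p : Pt) : Prop :=
  ∃ l : List Pt, Ch x s (p :: l) ∧ (p :: l).length = k ∧ ∀ q ∈ p :: l, q ∈ T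

theorem tn_or {x : Pt} {T : Finset Pt} (hT : Srt x T) {p q r : Pt} (hp : p ∈ T) (hq : q ∈ T)
    (hr : r ∈ T) (hpq : p ≠ q) (hqr : q ≠ r) (hpr : p ≠ r) : Tn true p q r ∨ Tn false p q r :=
  hT.gp p (by simp [hp]) q (by simp [hq]) r (by simp [hr]) hpq hqr hpr

/-- If every point of `A` ends a cup of `a + 2` points of `T`, and `A` contains a cap of `b + 2`
points, then the cap or the cup ending in its first point can be prolonged. -/
theorem prolong {x : Pt} {T A : Finset Pt} (hT : Srt x T) (hA : A ⊆ T) {a b : ℕ}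
    (hcup : ∀ p ∈ A, EndsIn x false T (a + 2) p) {c : Pt} (hcap : EndsIn x true A (b + 2) c) :
    (∃ c ∈ A, EndsIn x false T (a + 3) c) ∨ (∃ c ∈ A, EndsIn x true T (b + 3) c) := by
  obtain ⟨l, h1, h2, h3⟩ := hcap
  obtain ⟨u, q, p, e⟩ : ∃ u q p, c :: l = u ++ [q, p] := by
    have : 2 ≤ (c :: l).length := by omega
    rcases List.eq_nil_or_concat (c :: l) with e | ⟨u, p, e⟩
    · simp at e
    · rcases List.eq_nil_or_concat u with rfl | ⟨u', q, rfl⟩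
      · rw [e] at this; simp at this
      · exact ⟨u', q, p, by rw [e]; simp⟩
  have hpA : p ∈ A := h3 p (by rw [e]; simp)
  have hqA : q ∈ A := h3 q (by rw [e]; simp)
  obtain ⟨m, g1, g2, g3⟩ := hcup p hpA
  cases m with
  | nil => simp at g2
  | cons p' m =>
    have hs := Ch.sorted hT h1 (fun r hr => hA (h3 r hr))
    rw [e, List.pairwise_append] at hs
    have hpq : L x p q := by simpa using hs.2.1
    have gs := Ch.sorted hT g1 g3
    rw [List.pairwise_cons] at gs
    have hpp : L x p' p := gs.1 p' (by simp)
    have hp'T := g3 p' (by simp)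
    have hp'q : L x p' q := hT.tr p' hp'T p (hA hpA) q (hA hqA) hpp hpq
    rcases tn_or hT hp'T (hA hpA) (hA hqA) hpp.ne23 hpq.ne23 hp'q.ne23 with t | t
    · right
      refine ⟨c, h3 c (by simp), ?_⟩
      have := Ch.snoc hpp t u (e ▸ h1)
      have e2 : u ++ [q, p, p'] = c :: (l ++ [p']) := by
        rw [← List.cons_append, e]; simp
      rw [e2] at this
      refine ⟨l ++ [p'], this, by simp at h2 ⊢; omega, ?_⟩
      intro r hr
      rw [← List.cons_append, List.mem_append] at hr
      rcases hr with hr | hr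
      · exact hA (h3 r hr)
      · simp at hr; subst hr; exact hp'T
    · left
      refine ⟨q, hqA, p :: p' :: m, Ch.cons _ _ _ _ g1 hpq t, by simp at g2 ⊢; omega, ?_⟩
      intro r hr
      rcases List.mem_cons.1 hr with rfl | hr
      · exact hA hqA
      · exact g3 r hr

theorem Srt.mono {x : Pt} {T A : Finset Pt} (hT : Srt x T) (hA : A ⊆ T) : Srt x A :=
  ⟨hT.gp.mono (Finset.insert_subset_insert _ hA), fun h => hT.nm (hA h),
    fun a ha b hb c hc => hT.tr a (hA ha) b (hA hb) c (hA hc)⟩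

theorem EndsIn.mono {x : Pt} {s : Bool} {T A : Finset Pt} (hA : A ⊆ T) {k : ℕ} {p : Pt}
    (h : EndsIn x s A k p) : EndsIn x s T k p := by
  obtain ⟨l, h1, h2, h3⟩ := h
  exact ⟨l, h1, h2, fun q hq => hA (h3 q hq)⟩

theorem card_le_one_of_no_two {x : Pt} {T : Finset Pt} (hT : Srt x T) {s : Bool}
    (h : ∀ p, ¬ EndsIn x s T 2 p) : T.card ≤ 1 := by
  rw [Finset.card_le_one]
  intro a ha b hb
  by_contra hab
  rcases hT.tot ha hb hab with g | g
  · exact h b ⟨[a], Ch.two _ _ g, rfl, by simp [ha, hb]⟩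
  · exact h a ⟨[b], Ch.two _ _ g, rfl, by simp [ha, hb]⟩

/-- A set without `(a+2)`-cups and `(b+2)`-caps has at most `(a+b).choose a` points. -/
theorem erdos_szekeres {x : Pt} : ∀ (n a b : ℕ), a + b = n → ∀ {T : Finset Pt}, Srt x T →
    (∀ p, ¬ EndsIn x false T (a + 2) p) → (∀ p, ¬ EndsIn x true T (b + 2) p) →
    T.card ≤ (a + b).choose a := by
  classical
  intro n
  induction n with
  | zero =>
    intro a b hab T hT h1 h2
    obtain ⟨rfl, rfl⟩ : a = 0 ∧ b = 0 := by omega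
    simpa using card_le_one_of_no_two hT h1
  | succ n ih =>
    intro a b hab T hT h1 h2
    cases a with
    | zero => simpa using card_le_one_of_no_two hT h1
    | succ a =>
      cases b with
      | zero => simpa using card_le_one_of_no_two hT h2
      | succ b =>
        let A := T.filter (fun p => EndsIn x false T (a + 2) p)
        let B := T.filter (fun p => ¬ EndsIn x false T (a + 2) p)
        have hAB : A.card + B.card = T.card := Finset.card_filter_add_card_filter_not _
        have hA : A ⊆ T := Finset.filter_subset _ _
        have hB : B ⊆ T := Finset.filter_subset _ _
        have cB : B.card ≤ (a + (b + 1)).choose a := by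
          refine ih a (b + 1) (by omega) (hT.mono hB) ?_ (fun p h => h2 p (h.mono hB))
          intro p hp
          have : p ∈ B := by obtain ⟨l, _, _, h3⟩ := hp; exact h3 p (by simp)
          exact (Finset.mem_filter.1 this).2 (hp.mono hB)
        have cA : A.card ≤ (a + 1 + b).choose (a + 1) := by
          refine ih (a + 1) b (by omega) (hT.mono hA) (fun p h => h1 p (h.mono hA)) ?_
          intro p hp
          rcases prolong hT hA (fun p hp => (Finset.mem_filter.1 hp).2) hp with ⟨c, _, h⟩ | ⟨c, _, h⟩
          · exact h1 c h
          · exact h2 c h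
        have := Nat.choose_succ_succ' (a + b + 1) a
        have e1 : a + 1 + (b + 1) = a + b + 1 + 1 := by ring
        have e2 : a + (b + 1) = a + b + 1 := by ring
        have e3 : a + 1 + b = a + b + 1 := by ring
        rw [e2] at cB; rw [e3] at cA
        rw [e1, this]
        omega

/-- The lexicographically smallest point may be taken for `x`. -/
theorem exists_srt {S : Finset Pt} (hS : GP S) (hne : S.Nonempty) :
    ∃ x ∈ S, Srt x (S.erase x) := by
  classical
  obtain ⟨x₁, hx₁, hm₁⟩ := Finset.exists_min_image S (fun p => p 0) hne
  obtain ⟨x, hx', hm₂⟩ := Finset.exists_min_image (S.filter (fun p => p 0 = x₁ 0)) (fun p => p 1)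
    ⟨x₁, by simp [hx₁]⟩
  obtain ⟨hx, hx0⟩ := Finset.mem_filter.1 hx'
  have h0 : ∀ p ∈ S, 0 ≤ p 0 - x 0 := fun p hp => by linarith [hm₁ p hp]
  have h1 : ∀ p ∈ S, p 0 - x 0 = 0 → 0 ≤ p 1 - x 1 := fun p hp h => by
    linarith [hm₂ p (Finset.mem_filter.2 ⟨hp, by linarith⟩)]
  refine ⟨x, hx, ?_, Finset.notMem_erase _ _, ?_⟩
  · rw [Finset.insert_erase hx]; exact hS
  · intro a ha b hb c hc hab hbc
    have ha' := Finset.mem_of_mem_erase ha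
    have hb' := Finset.mem_of_mem_erase hb
    have hc' := Finset.mem_of_mem_erase hc
    have a0 := h0 a ha'
    have b0 := h0 b hb'
    have c0 := h0 c hc'
    have a1 := h1 a ha'
    have b1 := h1 b hb'
    unfold L ori at *
    generalize a 0 - x 0 = A0 at *
    generalize a 1 - x 1 = A1 at *
    generalize b 0 - x 0 = B0 at *
    generalize b 1 - x 1 = B1 at *
    generalize c 0 - x 0 = C0 at *
    generalize c 1 - x 1 = C1 at *
    rcases eq_or_lt_of_le b0 with b0' | b0'
    · have := b1 b0'.symm
      rw [← b0'] at hbc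
      nlinarith [mul_nonneg this c0]
    · have key : 0 < B0 * (A0 * C1 - A1 * C0) := by
        have e : B0 * (A0 * C1 - A1 * C0) = A0 * (B0 * C1 - B1 * C0) + C0 * (A0 * B1 - A1 * B0) := by
          ring
        rw [e]
        rcases eq_or_lt_of_le a0 with a0' | a0'
        · have := a1 a0'.symm
          rw [← a0'] at hab
          nlinarith [mul_nonneg this b0]
        · have := mul_pos a0' hbc
          have := mul_nonneg c0 hab.le
          linarith
      have pos := (pos_iff_pos_of_mul_pos key).1 b0'
      exact pos

/-- Points at which no `3`-cup ends: five of them would form an empty hexagon with `x`. -/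
theorem no_three_cup_card {S : Finset Pt} (hS : GP S) (hno : ¬ ∃ X, IsHole 2 6 S X) {x : Pt}
    (hx : x ∈ S) (hT : Srt x (S.erase x)) {U : Finset Pt} (hU : U ⊆ S.erase x)
    (h3 : ∀ p ∈ U, ¬ EndsIn x false (S.erase x) 3 p) : U.card ≤ 4 := by
  classical
  by_contra hc
  push Not at hc
  obtain ⟨l, h1, h2, hl⟩ := exists_sorted_of_le (L x) U
    (fun a ha b hb hab => hT.tot (hU ha) (hU hb) hab)
    (fun a ha b hb c hc => hT.tr a (hU ha) b (hU hb) c (hU hc)) 5 hc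
  obtain ⟨a, b, c, d, e, rfl⟩ : ∃ a b c d e, l = [a, b, c, d, e] := by
    match l, h2 with
    | [a, b, c, d, e], _ => exact ⟨a, b, c, d, e, rfl⟩
  simp at h1
  simp at hl
  obtain ⟨⟨lab, lac, lad, lae⟩, ⟨lbc, lbd, lbe⟩, ⟨lcd, lce⟩, lde⟩ := h1
  obtain ⟨ua, ub, uc, ud, ue⟩ := hl
  have nocup : ∀ p ∈ S.erase x, ∀ q ∈ S.erase x, ∀ r ∈ U, L x p q → L x q r → ¬ L q p r := by
    intro p hp q hq r hr g1 g2 g3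
    exact h3 r hr ⟨[q, p], Ch.cons _ _ _ _ (Ch.two _ _ g1) g2 g3, rfl, by
      intro w hw; simp at hw; rcases hw with rfl | rfl | rfl
      · exact hU hr
      · exact hq
      · exact hp⟩
  have turn : ∀ p ∈ U, ∀ q ∈ U, ∀ r ∈ U, L x p q → L x q r → L x p r → L p q r := by
    intro p hp q hq r hr g1 g2 g3
    rcases tn_or hT (hU hp) (hU hq) (hU hr) g1.ne23 g2.ne23 g3.ne23 with t | t
    · exact t
    · exact absurd t (nocup p (hU hp) q (hU hq) r hr g1 g2)
  apply hno
  have mS : ∀ p ∈ U, p ∈ S := fun p hp => Finset.mem_of_mem_erase (hU hp)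
  refine ⟨_, hole_of_hex hS hx (mS a ua) (mS b ub) (mS c uc) (mS d ud) (mS e ue)
    ⟨lae, lbe, lce, lde, lab, lbc, lcd, turn a ua b ub c uc lab lbc lac,
      turn b ub c uc d ud lbc lcd lbd, turn c uc d ud e ue lcd lde lce⟩ ?_⟩
  intro z hz _ hin
  obtain ⟨z12, z23, z34, z45, z56, z61⟩ := hin
  have hzT : z ∈ S.erase x := Finset.mem_erase.2 ⟨z12.ne13.symm, hz⟩
  have fin : ∀ p ∈ U, ∀ q ∈ U, L x p z → ¬ L x q z → L p q z → False := by
    intro p hp q hq g1 g2 g3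
    rcases hT.tot (hU hq) hzT g3.ne23 with g | g
    · exact g2 g
    · exact nocup p (hU hp) z hzT q hq g1 g g3.rr
  by_cases k3 : L x b z
  · by_cases k4 : L x c z
    · by_cases k5 : L x d z
      · exact fin d ud e ue k5 z61.not_swap z56
      · exact fin c uc d ud k4 k5 z45
    · exact fin b ub c uc k3 k4 z34
  · exact fin a ua b ub z12 k3 z23

/-- Erdős–Szekeres bounds for the classes of points by the length of the longest cup ending in
them. The class of points without a cup of three points is bounded by the absence of `6`-holes. -/
theorem exists_nonagon {S : Finset Pt} (hS : GP S) (hcard : S.card = 1717)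
    (hno : ¬ ∃ X, IsHole 2 6 S X) : ∃ H ⊆ S, H.card = 9 ∧ InConvexPosition 2 H := by
  classical
  by_contra h9
  push Not at h9
  obtain ⟨x, hx, hT⟩ := exists_srt hS (Finset.card_pos.1 (by omega))
  set T := S.erase x with hTdef
  have hTc : T.card = 1716 := by rw [hTdef, Finset.card_erase_of_mem hx, hcard]
  have hTS : T ⊆ S := Finset.erase_subset _ _
  have nocup : ∀ p, ¬ EndsIn x false T 9 p := by
    rintro p ⟨l, h1, h2, h3⟩
    refine h9 (p :: l).toFinset ?_ ?_ (Ch.convex hT h1 h3 (by omega))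
    · intro q hq; exact hTS (h3 q (List.mem_toFinset.1 hq))
    · rw [Ch.length_toFinset hT h1 h3, h2]
  have nocap : ∀ p, ¬ EndsIn x true T 8 p := by
    rintro p ⟨l, h1, h2, h3⟩
    refine h9 (insert x (p :: l).toFinset) ?_ ?_ (Ch.convex_cap hT h1 h3 (by omega))
    · intro q hq
      rcases Finset.mem_insert.1 hq with rfl | hq
      · exact hx
      · exact hTS (h3 q (List.mem_toFinset.1 hq))
    · rw [Finset.card_insert_of_notMem, Ch.length_toFinset hT h1 h3, h2]
      intro h
      exact hT.nm (h3 x (List.mem_toFinset.1 h))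
  let U : ℕ → Finset Pt := fun k => T.filter (fun p => ¬ EndsIn x false T k p)
  have hU : ∀ k, U k ⊆ T := fun k => Finset.filter_subset _ _
  have hU3 : (U 3).card ≤ 4 := no_three_cup_card hS hno hx hT (hU 3)
    (fun p hp => (Finset.mem_filter.1 hp).2)
  have hU9 : U 9 = T := Finset.filter_true_of_mem (fun p _ => nocup p)
  have step : ∀ a, (U (a + 3)).card ≤ (U (a + 2)).card + (a + 1 + 5).choose (a + 1) := by
    intro a
    have hsub : U (a + 3) ⊆ U (a + 2) ∪ (U (a + 3) \ U (a + 2)) := by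
      intro p hp; by_cases h : p ∈ U (a + 2) <;> simp [h, hp]
    have hD : U (a + 3) \ U (a + 2) ⊆ T := fun p hp => hU _ (Finset.mem_sdiff.1 hp).1
    have hcup : ∀ p ∈ U (a + 3) \ U (a + 2), EndsIn x false T (a + 2) p := by
      intro p hp
      obtain ⟨h1, h2⟩ := Finset.mem_sdiff.1 hp
      by_contra h
      exact h2 (Finset.mem_filter.2 ⟨hU _ h1, h⟩)
    have hcup' : ∀ p ∈ U (a + 3) \ U (a + 2), ¬ EndsIn x false T (a + 3) p := fun p hp =>
      (Finset.mem_filter.1 (Finset.mem_sdiff.1 hp).1).2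
    have := erdos_szekeres _ (a + 1) 5 rfl (hT.mono hD)
      (by
        intro p hp
        have hpD : p ∈ U (a + 3) \ U (a + 2) := by
          obtain ⟨l, _, _, h3⟩ := hp; exact h3 p (by simp)
        exact hcup' p hpD (hp.mono hD))
      (by
        intro p hp
        rcases prolong hT hD hcup hp with ⟨c, hc, h⟩ | ⟨c, _, h⟩
        · exact hcup' c hc h
        · exact nocap c h)
    calc (U (a + 3)).card ≤ _ := Finset.card_le_card hsub
      _ ≤ _ := Finset.card_union_le _ _
      _ ≤ _ := by omega
  have s1 := step 1
  have s2 := step 2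
  have s3 := step 3
  have s4 := step 4
  have s5 := step 5
  have s6 := step 6
  rw [hU9, hTc] at s6
  norm_num [Nat.choose] at s1 s2 s3 s4 s5 s6
  omega

/-! ### Hull polygons -/

/-- `v` runs counterclockwise, with period `n`, through the vertices of the convex hull of `X`. -/
structure Hull (X : Finset Pt) (n : ℕ) (v : ℤ → Pt) : Prop where
  n3 : 3 ≤ n
  mem : ∀ k, v k ∈ X
  per : ∀ k, v (k + n) = v k
  ed : ∀ k, ∀ w ∈ X, w ≠ v k → w ≠ v (k + 1) → L (v k) (v (k + 1)) w
  conv : ∀ i j k : ℤ, i < j → j < k → k < i + n → L (v i) (v j) (v k)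

/-- A hull edge from `p` to `q`. -/
def Ed (X : Finset Pt) (p q : Pt) : Prop :=
  p ∈ X ∧ q ∈ X ∧ p ≠ q ∧ ∀ w ∈ X, w ≠ p → w ≠ q → L p q w

theorem exists_least {α : Type*} (R : α → α → Prop) (T : Finset α) (hT : T.Nonempty)
    (tot : ∀ a ∈ T, ∀ b ∈ T, a ≠ b → R a b ∨ R b a)
    (tr : ∀ a ∈ T, ∀ b ∈ T, ∀ c ∈ T, R a b → R b c → R a c) :
    ∃ m ∈ T, ∀ b ∈ T, b ≠ m → R m b := by
  classical
  induction hT using Finset.Nonempty.cons_induction with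
  | singleton a => exact ⟨a, by simp⟩
  | cons a s ha hs ih =>
    obtain ⟨m, hm, h⟩ := ih
      (fun x hx y hy => tot x (Finset.mem_cons_of_mem hx) y (Finset.mem_cons_of_mem hy))
      (fun x hx y hy z hz => tr x (Finset.mem_cons_of_mem hx) y (Finset.mem_cons_of_mem hy)
        z (Finset.mem_cons_of_mem hz))
    have hma : m ≠ a := fun e => ha (e ▸ hm)
    have hm' : m ∈ Finset.cons a s ha := Finset.mem_cons_of_mem hm
    rcases tot m hm' a (Finset.mem_cons_self a s) hma with g | g
    · refine ⟨m, hm', ?_⟩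
      intro b hb hbm
      rcases Finset.mem_cons.1 hb with rfl | hb
      · exact g
      · exact h b hb hbm
    · refine ⟨a, Finset.mem_cons_self a s, ?_⟩
      intro b hb hba
      rcases Finset.mem_cons.1 hb with rfl | hb
      · exact absurd rfl hba
      · by_cases e : b = m
        · subst e; exact g
        · exact tr a (Finset.mem_cons_self a s) m hm' b (Finset.mem_cons_of_mem hb) g (h b hb e)

theorem exists_ed {X : Finset Pt} (hX : GP X) (h2 : 2 ≤ X.card) : ∃ p q, Ed X p q := by
  classical
  obtain ⟨x, hx, hT⟩ := exists_srt hX (Finset.card_pos.1 (by omega))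
  have hne : (X.erase x).Nonempty := by
    rw [← Finset.card_pos, Finset.card_erase_of_mem hx]; omega
  obtain ⟨m, hm, h⟩ := exists_least (L x) (X.erase x) hne
    (fun a ha b hb hab => hT.tot ha hb hab) hT.tr
  obtain ⟨hm1, hm2⟩ := Finset.mem_erase.1 hm
  exact ⟨x, m, hx, hm2, hm1.symm, fun w hw hwx hwm => h w (Finset.mem_erase.2 ⟨hwx, hw⟩) hwm⟩

theorem Ed.next {X : Finset Pt} (hX : GP X) {p q : Pt} (h : Ed X p q) : ∃ r, Ed X q r := by
  classical
  obtain ⟨hp, hq, hpq, hw⟩ := h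
  have hpT : p ∈ X.erase q := Finset.mem_erase.2 ⟨hpq, hp⟩
  have hp' : ∀ a ∈ X.erase q, a ≠ p → L q a p := fun a ha hap =>
    (hw a (Finset.mem_of_mem_erase ha) hap (Finset.mem_erase.1 ha).1).r
  obtain ⟨m, hm, h⟩ := exists_least (L q) (X.erase q) ⟨p, hpT⟩
    (by
      intro a ha b hb hab
      obtain ⟨a1, a2⟩ := Finset.mem_erase.1 ha
      obtain ⟨b1, b2⟩ := Finset.mem_erase.1 hb
      rcases hX q hq a a2 b b2 a1.symm hab b1.symm with g | g
      · exact Or.inl g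
      · exact Or.inr g.r)
    (by
      intro a ha b hb c hc hab hbc
      by_cases ea : a = p
      · subst ea
        by_cases eb : b = a
        · subst eb; exact hbc
        · exact absurd hab (hp' b hb eb).not_swap'
      by_cases eb : b = p
      · subst eb
        by_cases ec : c = b
        · subst ec; exact hab
        · exact absurd hbc (hp' c hc ec).not_swap'
      by_cases ec : c = p
      · subst ec; exact hp' a ha ea
      · exact L.transLast hab hbc (hp' a ha ea) (hp' b hb eb) (hp' c hc ec))
  obtain ⟨hm1, hm2⟩ := Finset.mem_erase.1 hm
  exact ⟨m, hq, hm2, hm1.symm, fun w hw hwx hwm => h w (Finset.mem_erase.2 ⟨hwx, hw⟩) hwm⟩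

theorem Ed.inj {X : Finset Pt} {p p' q : Pt} (h : Ed X p q) (h' : Ed X p' q) : p = p' := by
  by_contra hne
  have h1 := h.2.2.2 p' h'.1 (Ne.symm hne) h'.2.2.1
  have h2 := h'.2.2.2 p h.1 hne h.2.2.1
  exact h1.not_flip h2

theorem exists_hull {X : Finset Pt} (hX : GP X) (h3 : 3 ≤ X.card) : ∃ n v, Hull X n v := by
  classical
  obtain ⟨x, q, hxq⟩ := exists_ed hX (by omega)
  let nxt : Pt → Pt := fun p => if h : ∃ q, Ed X p q then h.choose else p
  have hnxt : ∀ p, (∃ q, Ed X p q) → Ed X p (nxt p) := by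
    intro p h
    have : nxt p = h.choose := dif_pos h
    rw [this]; exact h.choose_spec
  let s : ℕ → Pt := fun k => nxt^[k] x
  have hs1 : ∀ k, s (k + 1) = nxt (s k) := fun k => Function.iterate_succ_apply' _ _ _
  have hE : ∀ k, ∃ q, Ed X (s k) q := by
    intro k
    induction k with
    | zero => exact ⟨q, hxq⟩
    | succ k ih => rw [hs1]; exact (hnxt _ ih).next hX
  have hEd : ∀ k, Ed X (s k) (s (k + 1)) := fun k => by rw [hs1]; exact hnxt _ (hE k)
  have back : ∀ d k, s (k + d) = s k → s d = s 0 := by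
    intro d k
    induction k with
    | zero => intro h; simpa using h
    | succ k ih =>
      intro h
      apply ih
      have e1 := hEd (k + d)
      have e2 := hEd k
      rw [show k + d + 1 = k + 1 + d by ring, h] at e1
      exact e1.inj e2
  have hex : ∃ n, 0 < n ∧ s n = s 0 := by
    obtain ⟨i, -, j, -, hij, e⟩ := Finset.exists_ne_map_eq_of_card_lt_of_maps_to
      (s := Finset.range (X.card + 1)) (t := X) (by simp) (f := s) (fun k _ => (hEd k).1)
    rcases lt_or_gt_of_ne hij with h | h
    · exact ⟨j - i, by omega, back _ i (by rw [show i + (j - i) = j by omega]; exact e.symm)⟩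
    · exact ⟨i - j, by omega, back _ j (by rw [show j + (i - j) = i by omega]; exact e)⟩
  let n := Nat.find hex
  have hn0 : 0 < n := (Nat.find_spec hex).1
  have hns : s n = s 0 := (Nat.find_spec hex).2
  have hmin : ∀ m, 0 < m → m < n → s m ≠ s 0 := fun m h1 h2 h =>
    Nat.find_min hex h2 ⟨h1, h⟩
  have hn3 : 3 ≤ n := by
    by_contra hc
    have : n = 1 ∨ n = 2 := by omega
    rcases this with e | e
    · have := (hEd 0).2.2.1; rw [e] at hns; exact this hns.symm
    · rw [e] at hns
      have e0 := hEd 0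
      have e1 := hEd 1
      rw [show s (1 + 1) = s 0 from hns] at e1
      obtain ⟨w, hw, hw2⟩ := Finset.exists_mem_notMem_of_card_lt_card
        (s := {s 0, s 1}) (t := X) (lt_of_le_of_lt Finset.card_le_two (by omega))
      simp only [Finset.mem_insert, Finset.mem_singleton, not_or] at hw2
      have a := e0.2.2.2 w hw hw2.1 hw2.2
      have b := e1.2.2.2 w hw hw2.2 hw2.1
      exact a.not_swap b
  let v : ℤ → Pt := fun k => s (k % n).toNat
  have hnz : (0 : ℤ) < n := by exact_mod_cast hn0
  have vnat : ∀ k, v (k + 1) = s ((k % n).toNat + 1) := by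
    intro k
    show s ((k + 1) % n).toNat = _
    have h1 := Int.emod_nonneg k hnz.ne'
    have h2 := Int.emod_lt_of_pos k hnz
    rcases lt_or_ge (k % n + 1) n with h | h
    · have : (k + 1) % n = k % n + 1 := by
        rw [Int.add_emod, Int.emod_eq_of_lt (a := 1) (by norm_num) (by omega),
          Int.emod_eq_of_lt (by omega) h]
      rw [this]
      congr 1
      omega
    · have h4 : k % n + 1 = n := by omega
      have : (k + 1) % n = 0 := by
        rw [Int.add_emod, Int.emod_eq_of_lt (a := 1) (by norm_num) (by omega), h4, Int.emod_self]
      rw [this]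
      have : (k % n).toNat + 1 = n := by omega
      rw [this, hns]; rfl
  have vEd : ∀ k, Ed X (v k) (v (k + 1)) := fun k => by rw [vnat]; exact hEd _
  have vne : ∀ i j : ℤ, i < j → j < i + n → v i ≠ v j := by
    intro i j h1 h2 e
    have e' : s (i % n).toNat = s (j % n).toNat := e
    have a1 := Int.emod_nonneg i hnz.ne'
    have a2 := Int.emod_lt_of_pos i hnz
    have b1 := Int.emod_nonneg j hnz.ne'
    have b2 := Int.emod_lt_of_pos j hnz
    have hne : i % n ≠ j % n := by
      intro h
      have hd : (n : ℤ) ∣ j - i := Int.ModEq.dvd h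
      obtain ⟨t, ht⟩ := hd
      have t1 : 0 < t := by
        by_contra hc; push Not at hc; nlinarith
      nlinarith
    rcases lt_or_gt_of_ne hne with h | h
    · refine hmin ((j % n).toNat - (i % n).toNat) (by omega) (by omega) (back _ (i % n).toNat ?_)
      rw [show (i % n).toNat + ((j % n).toNat - (i % n).toNat) = (j % n).toNat by omega]
      exact e'.symm
    · refine hmin ((i % n).toNat - (j % n).toNat) (by omega) (by omega) (back _ (j % n).toNat ?_)
      rw [show (j % n).toNat + ((i % n).toNat - (j % n).toNat) = (i % n).toNat by omega]
      exact e'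
  have vper : ∀ k, v (k + n) = v k := fun k => by
    show s ((k + n) % n).toNat = s (k % n).toNat
    rw [Int.add_emod_right]
  have ved : ∀ k, ∀ w ∈ X, w ≠ v k → w ≠ v (k + 1) → L (v k) (v (k + 1)) w :=
    fun k => (vEd k).2.2.2
  refine ⟨n, v, hn3, fun k => (vEd k).1, vper, ved, ?_⟩
  intro i j k hij hjk
  have base : ∀ m, i < m → m + 1 < i + n → L (v i) (v m) (v (m + 1)) := fun m h1 h2 =>
    (ved m (v i) (vEd i).1 (vne i m h1 (by omega)) (vne i (m + 1) (by omega) h2)).rr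
  have first : ∀ m, i + 1 < m → m < i + n → L (v i) (v (i + 1)) (v m) := fun m h1 h2 =>
    ved i (v m) (vEd m).1 (vne i m (by omega) h2).symm (vne (i + 1) m h1 (by omega)).symm
  induction k, (show j + 1 ≤ k from hjk) using Int.leInduction with
  | base => intro h; exact base j hij h
  | succ k hk ih =>
    intro h
    rcases eq_or_lt_of_le (show i + 1 ≤ j from hij) with e | e
    · rw [← e]; exact first (k + 1) (by omega) h
    · exact L.transFirst (ih (by omega) (by omega)) (base k (by omega) h)
        (first j e (by omega)) (first k (by omega) (by omega)) (first (k + 1) (by omega) h)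

/-! ### Cyclic intervals -/

theorem exists_switch (P : ℤ → Prop) {a b : ℤ} (hab : a ≤ b) (ha : P a) (hb : ¬ P b) :
    ∃ k, a ≤ k ∧ k < b ∧ P k ∧ ¬ P (k + 1) := by
  by_contra hc
  push Not at hc
  have : ∀ k, a ≤ k → k ≤ b → P k := by
    intro k hk
    induction k, hk using Int.leInduction with
    | base => exact fun _ => ha
    | succ k hk ih => exact fun h => hc k hk (by omega) (ih (by omega))
  exact hb (this b hab le_rfl)

theorem per_mul {α : Type*} {n : ℤ} {f : ℤ → α} (h : ∀ k, f (k + n) = f k) (m k : ℤ) :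
    f (k + m * n) = f k := by
  induction m using Int.induction_on with
  | zero => simp
  | succ m ih => rw [show k + (m + 1) * n = k + m * n + n by ring, h, ih]
  | pred m ih => rw [← ih, ← h]; congr 1; ring

/-- A periodic predicate which becomes true only once per period is true on an interval
modulo the period. -/
theorem exists_interval {n : ℤ} (hn : 0 < n) (P : ℤ → Prop) (per : ∀ k, P (k + n) = P k)
    (h1 : ∃ k, P k) (h0 : ∃ k, ¬ P k)
    (uni : ∀ k k', k < k' → k' < k + n → ¬ P (k - 1) → P k → ¬ P (k' - 1) → P k' → False) :
    ∃ x y, x ≤ y ∧ y + 1 < x + n ∧ (∀ k, x ≤ k → k ≤ y → P k) ∧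
      (∀ k, y < k → k < x + n → ¬ P k) := by
  obtain ⟨b, hb⟩ := h1
  obtain ⟨a, ha⟩ := h0
  have ha' : ∃ a', a' ≤ b ∧ ¬ P a' := by
    refine ⟨a + (-(|a - b|)) * n, ?_, by rw [per_mul per]; exact ha⟩
    nlinarith [le_abs_self (a - b), abs_nonneg (a - b)]
  obtain ⟨a', hab, ha'⟩ := ha'
  obtain ⟨u, hu1, hu2, hu3, hu4⟩ := exists_switch (fun k => ¬ P k) hab ha' (not_not.2 hb)
  simp only [not_not] at hu4
  have hun : ¬ P (u + n) := by rw [per]; exact hu3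
  obtain ⟨y, y1, y2, y3, y4⟩ := exists_switch P (show u + 1 ≤ u + n by omega) hu4 hun
  have hneg : ∀ k, y < k → k < u + 1 + n → ¬ P k := by
    intro k hk1 hk2 hk
    obtain ⟨w, w1, w2, w3, w4⟩ :=
      exists_switch (fun k => ¬ P k) (show y + 1 ≤ k by omega) y4 (not_not.2 hk)
    simp only [not_not] at w4
    exact uni (u + 1) (w + 1) (by omega) (by omega) (by simpa using hu3) hu4 (by simpa using w3) w4
  refine ⟨u + 1, y, y1, ?_, ?_, hneg⟩
  · by_contra hc
    have : y + 1 = u + 1 + n := by omega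
    omega
  · intro k hk1 hk2
    by_contra hk
    obtain ⟨w, w1, w2, w3, w4⟩ :=
      exists_switch (fun k => ¬ P k) (show k ≤ y by omega) hk (not_not.2 y3)
    simp only [not_not] at w4
    exact uni (u + 1) (w + 1) (by omega) (by omega) (by simpa using hu3) hu4 (by simpa using w3) w4

/-! ### Hull polygons: consequences -/

section
variable {X C : Finset Pt} {n : ℕ} {v : ℤ → Pt}

theorem Hull.npos (h : Hull X n v) : (3 : ℤ) ≤ n := by exact_mod_cast h.n3

theorem Hull.perm (h : Hull X n v) (k m : ℤ) : v (k + m * n) = v k := per_mul h.per m k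

theorem Hull.ne (h : Hull X n v) {i j : ℤ} (h1 : i < j) (h2 : j < i + n) : v i ≠ v j := by
  have := h.npos
  by_cases e : j + 1 < i + n
  · exact (h.conv i j (j + 1) h1 (by omega) e).ne12
  · exact (h.conv i (i + 1) j (by omega) (by omega) h2).ne13

theorem Hull.eq_iff (h : Hull X n v) {i j : ℤ} (e : v i = v j) : ∃ m : ℤ, j = i + m * n := by
  have hn := h.npos
  have d := Int.emod_add_mul_ediv (j - i) n
  have d1 := Int.emod_nonneg (j - i) (show (n : ℤ) ≠ 0 by omega)
  have d2 := Int.emod_lt_of_pos (j - i) (show (0 : ℤ) < n by omega)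
  refine ⟨(j - i) / n, ?_⟩
  by_contra hc
  have hr : (j - i) % n ≠ 0 := by
    intro h0; apply hc; rw [h0] at d; linarith [mul_comm (n : ℤ) ((j - i) / n)]
  apply h.ne (i := i) (j := i + (j - i) % n) (by omega) (by omega)
  rw [← h.perm (i + (j - i) % n) ((j - i) / n), e]
  congr 1
  linarith [mul_comm (n : ℤ) ((j - i) / n)]

theorem Hull.ne_succ (h : Hull X n v) (k : ℤ) : v k ≠ v (k + 1) :=
  h.ne (by omega) (by have := h.npos; omega)

/-- A point to the left of all the edges lies in a triangle of vertices. -/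
theorem Hull.fan (h : Hull X n v) {w : Pt} (hl : ∀ k, L (v k) (v (k + 1)) w)
    (dich : ∀ k, v k ≠ v 0 → L (v 0) (v k) w ∨ L (v k) (v 0) w) :
    ∃ j : ℤ, 0 < j ∧ j + 1 < n ∧ L (v 0) (v j) w ∧ L (v j) (v (j + 1)) w ∧ L (v (j + 1)) (v 0) w := by
  have hn := h.npos
  have e1 := hl 0
  have e2 := hl (n - 1)
  have e0 : v (n - 1 + 1) = v 0 := by rw [← h.per 0]; congr 1; ring
  rw [e0] at e2
  rw [zero_add] at e1
  obtain ⟨k, k1, k2, k3, k4⟩ := exists_switch (fun k => L (v 0) (v k) w)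
    (show (1 : ℤ) ≤ n - 1 by omega) e1 e2.not_swap
  refine ⟨k, by omega, by omega, k3, hl k, ?_⟩
  rcases dich (k + 1) (h.ne (i := 0) (by omega) (by omega)).symm with g | g
  · exact absurd g k4
  · exact g

theorem Hull.fan_mem (h : Hull X n v) (hX : GP X) {w : Pt} (hw : w ∈ X) (hv : ∀ k, w ≠ v k) :
    ∃ j : ℤ, 0 < j ∧ j + 1 < n ∧ L (v 0) (v j) w ∧ L (v j) (v (j + 1)) w ∧ L (v (j + 1)) (v 0) w :=
  h.fan (fun k => h.ed k w hw (hv _) (hv _)) fun k hk =>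
    hX _ (h.mem 0) _ (h.mem k) _ hw hk.symm (hv k).symm (hv 0).symm

open Classical in
/-- The points of `C` which are not vertices of the polygon `v`. -/
noncomputable def core (C : Finset Pt) (v : ℤ → Pt) : Finset Pt := C.filter fun w => ∀ k, w ≠ v k

theorem mem_core {w : Pt} : w ∈ core C v ↔ w ∈ C ∧ ∀ k, w ≠ v k := by
  classical
  unfold core; exact Finset.mem_filter

theorem core_sub : core C v ⊆ C := fun _ h => (mem_core.1 h).1

theorem GP.cyc (hX : GP X) {a b c : Pt} (ha : a ∈ X) (hb : b ∈ X) (hc : c ∈ X)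
    (h1 : a ≠ b) (h2 : b ≠ c) (h3 : a ≠ c) : L a b c ∨ L b a c := hX a ha b hb c hc h1 h2 h3

theorem GP.not (hX : GP X) {a b c : Pt} (ha : a ∈ X) (hb : b ∈ X) (hc : c ∈ X)
    (h1 : a ≠ b) (h2 : b ≠ c) (h3 : a ≠ c) (h : ¬ L a b c) : L b a c :=
  (hX.cyc ha hb hc h1 h2 h3).resolve_left h

/-- Removing the hull vertices of the inner set of a layer gives the next layer. -/
theorem Lay.nest (hL : Lay X C) (hv : Hull C n v) : Lay C (core C v) := by
  have gpC : GP C := hL.gp.mono hL.sub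
  have ext : ∀ h ∈ C, h ∉ core C v → ∀ a ∈ C, ∀ b ∈ C, ∀ c ∈ C,
      L a b h → L b c h → L c a h → False := by
    intro h hC hn a ha b hb c hc h1 h2 h3
    rw [mem_core] at hn
    push Not at hn
    obtain ⟨k, rfl⟩ := hn hC
    have key : ∀ w ∈ C, 0 ≤ ori (v k) (v (k + 1)) w ∧ (w ≠ v (k + 1) → w ≠ v k →
        0 < ori (v k) (v (k + 1)) w) := by
      intro w hw
      by_cases e1 : w = v k
      · rw [e1, ori_self2]; exact ⟨le_rfl, fun _ h => absurd rfl h⟩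
      by_cases e2 : w = v (k + 1)
      · rw [e2, ori_self]; exact ⟨le_rfl, fun h => absurd rfl h⟩
      have := hv.ed k w hw e1 e2
      exact ⟨this.le, fun _ _ => this⟩
    have hsum : 0 < ori (v k) (v (k + 1)) a + ori (v k) (v (k + 1)) b + ori (v k) (v (k + 1)) c := by
      by_cases e : a = v (k + 1)
      · have := (key b hb).2 (by rw [← e]; exact h1.ne12.symm) h1.ne23
        linarith [(key a ha).1, (key c hc).1]
      · have := (key a ha).2 e h1.ne13
        linarith [(key b hb).1, (key c hc).1]
    have := L.inTri h1 h2 h3 (key a ha).1 (key b hb).1 (key c hc).1 hsum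
    exact this.ne13 rfl
  refine ⟨core_sub, gpC, ext, ?_, ?_⟩
  · intro d hd w hw hne
    obtain ⟨hdC, hdv⟩ := mem_core.1 hd
    obtain ⟨j, j0, jn, t1, t2, t3⟩ := hv.fan_mem gpC hdC hdv
    by_contra hc
    push Not at hc
    have key : ∀ k, 0 ≤ ori d w (v k) ∧ (v k ≠ w → 0 < ori d w (v k)) := by
      intro k
      by_cases e : v k = w
      · rw [e, ori_self]; exact ⟨le_rfl, fun h => absurd rfl h⟩
      have h1 : ¬ L w d (v k) := hc (v k) (hv.mem k) (fun h => (mem_core.1 h).2 k rfl)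
      have := gpC.not hw hdC (hv.mem k) hne (hdv k) (Ne.symm e) h1
      exact ⟨this.le, fun _ => this⟩
    have hsum : 0 < ori d w (v 0) + ori d w (v j) + ori d w (v (j + 1)) := by
      by_cases e : v 0 = w
      · have := (key j).2 (by rw [← e]; exact t1.ne12.symm)
        linarith [(key 0).1, (key (j + 1)).1]
      · have := (key 0).2 e
        linarith [(key j).1, (key (j + 1)).1]
    have := L.inTri t1 t2 t3 (key 0).1 (key j).1 (key (j + 1)).1 hsum
    exact this.ne13 rfl
  · intro v₁ h₁ v₂ h₂ v₃ h₃ v₄ h₄ v₅ h₅ v₆ h₆ hh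
    obtain ⟨z, hz, hin⟩ := hL.hex v₁ (hL.sub h₁) v₂ (hL.sub h₂) v₃ (hL.sub h₃) v₄ (hL.sub h₄)
      v₅ (hL.sub h₅) v₆ (hL.sub h₆) hh
    refine ⟨z, ?_, hin⟩
    by_contra hc
    have E := ext z hz hc
    rcases gpC.cyc h₁ h₃ hz hh.h134.ne12 hin.z34.ne13 hin.z12.ne13 with g3 | g3
    · rcases gpC.cyc h₁ h₄ hz hh.h134.ne13 hin.z45.ne13 hin.z12.ne13 with g4 | g4
      · rcases gpC.cyc h₁ h₅ hz hh.h145.ne13 hin.z56.ne13 hin.z12.ne13 with g5 | g5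
        · exact E v₁ h₁ v₅ h₅ v₆ h₆ g5 hin.z56 hin.z61
        · exact E v₁ h₁ v₄ h₄ v₅ h₅ g4 hin.z45 g5
      · exact E v₁ h₁ v₃ h₃ v₄ h₄ g3 hin.z34 g4
    · exact E v₁ h₁ v₂ h₂ v₃ h₃ hin.z12 hin.z23 g3

theorem Lay.eq_core (hL : Lay X C) (hv : Hull X n v) : C = core X v := by
  ext w
  rw [mem_core]
  constructor
  · intro hw
    refine ⟨hL.sub hw, ?_⟩
    rintro k rfl
    obtain ⟨h, hh, hn, hl⟩ := hL.inn (v k) hw (v (k + 1)) (hv.mem _) (hv.ne_succ k).symm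
    exact (hv.ed k h hh hl.ne23.symm hl.ne13.symm).not_swap hl
  · rintro ⟨hw, hk⟩
    by_contra hn
    obtain ⟨j, j0, jn, t1, t2, t3⟩ := hv.fan_mem hL.gp hw hk
    exact hL.ext w hw hn _ (hv.mem _) _ (hv.mem _) _ (hv.mem _) t1 t2 t3

theorem Hull.card (hv : Hull X n v) : (X \ core X v).card = n := by
  classical
  have : X \ core X v = (Finset.range n).image (fun k : ℕ => v k) := by
    ext w
    simp only [Finset.mem_sdiff, mem_core, not_and, not_forall, not_not, Finset.mem_image,
      Finset.mem_range]
    constructor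
    · rintro ⟨hw, h⟩
      obtain ⟨k, rfl⟩ := h hw
      have hn := hv.npos
      have d := Int.emod_add_mul_ediv k n
      have d1 := Int.emod_nonneg k (show (n : ℤ) ≠ 0 by omega)
      have d2 := Int.emod_lt_of_pos k (show (0 : ℤ) < n by omega)
      refine ⟨(k % n).toNat, by omega, ?_⟩
      rw [← hv.perm _ (k / n)]
      congr 1
      rw [Int.toNat_of_nonneg d1]; linarith [mul_comm (n : ℤ) (k / n)]
    · rintro ⟨k, -, rfl⟩
      exact ⟨hv.mem k, fun _ => ⟨k, rfl⟩⟩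
  rw [this, Finset.card_image_of_injOn, Finset.card_range]
  intro a ha b hb e
  simp only [Finset.coe_range, Set.mem_Iio] at ha hb
  by_contra hne
  rcases lt_or_gt_of_ne hne with h | h
  · exact hv.ne (i := a) (j := b) (by omega) (by omega) e
  · exact hv.ne (i := b) (j := a) (by omega) (by omega) e.symm

end

/-! ### Sorting around a point; small empty polygons of a layer -/

section
variable {X C : Finset Pt} {n : ℕ} {v : ℤ → Pt}

/-- Points which see `d` at an angle less than a half-turn from `c` can be sorted around `c`. -/
theorem exists_sorted_around (hX : GP X) {c d : Pt} (hc : c ∈ X) {T : Finset Pt}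
    (hT : T ⊆ X) (hd : ∀ t ∈ T, L c t d) (m : ℕ) (hm : m ≤ T.card) :
    ∃ l : List Pt, l.Pairwise (L c) ∧ l.length = m ∧ ∀ x ∈ l, x ∈ T := by
  classical
  refine exists_sorted_of_le (L c) T ?_ ?_ m hm
  · intro a ha b hb hab
    rcases hX.cyc hc (hT ha) (hT hb) (hd a ha).ne12 hab (hd b hb).ne12 with g | g
    · exact Or.inl g
    · exact Or.inr g.r
  · intro a ha b hb e he h1 h2
    exact L.transLast h1 h2 (hd a ha) (hd b hb) (hd e he)

theorem exists_two_around (hX : GP X) {c d : Pt} (hc : c ∈ X) {T : Finset Pt}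
    (hT : T ⊆ X) (hd : ∀ t ∈ T, L c t d) (hm : 2 ≤ T.card) :
    ∃ a ∈ T, ∃ b ∈ T, L c a b := by
  obtain ⟨l, h1, h2, h3⟩ := exists_sorted_around hX hc hT hd 2 hm
  match l, h2, h1, h3 with
  | [a, b], _, h1, h3 =>
    simp at h1
    exact ⟨a, h3 a (by simp), b, h3 b (by simp), h1⟩

theorem exists_three_around (hX : GP X) {c d : Pt} (hc : c ∈ X) {T : Finset Pt}
    (hT : T ⊆ X) (hd : ∀ t ∈ T, L c t d) (hm : 3 ≤ T.card) :
    ∃ a ∈ T, ∃ b ∈ T, ∃ e ∈ T, L c a b ∧ L c b e := by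
  obtain ⟨l, h1, h2, h3⟩ := exists_sorted_around hX hc hT hd 3 hm
  match l, h2, h1, h3 with
  | [a, b, e], _, h1, h3 =>
    simp at h1
    exact ⟨a, h3 a (by simp), b, h3 b (by simp), e, h3 e (by simp), h1.1.1, h1.2⟩

theorem exists_four_around (hX : GP X) {c d : Pt} (hc : c ∈ X) {T : Finset Pt}
    (hT : T ⊆ X) (hd : ∀ t ∈ T, L c t d) (hm : 4 ≤ T.card) :
    ∃ a ∈ T, ∃ b ∈ T, ∃ e ∈ T, ∃ f ∈ T, L c a b ∧ L c b e ∧ L c e f := by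
  obtain ⟨l, h1, h2, h3⟩ := exists_sorted_around hX hc hT hd 4 hm
  match l, h2, h1, h3 with
  | [a, b, e, f], _, h1, h3 =>
    simp at h1
    exact ⟨a, h3 a (by simp), b, h3 b (by simp), e, h3 e (by simp), f, h3 f (by simp),
      h1.1.1, h1.2.1.1, h1.2.2⟩

/-- An outer point which comes between `p` and `r` around `c` makes a left turn `p q r`. -/
theorem Lay.bulge (hL : Lay X C) {c p q r : Pt} (hc : c ∈ X) (hp : p ∈ X) (hq : q ∈ X)
    (hq' : q ∉ C) (hr : r ∈ X) (h1 : L c p q) (h2 : L c q r) : L p q r := by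
  have hpr : p ≠ r := by rintro rfl; exact h1.not_swap' h2
  rcases hL.gp.cyc hp hq hr h1.ne23 h2.ne23 hpr with g | g
  · exact g
  · exact (hL.ext q hq hq' c hc p hp r hr h1 g.r h2.rr).elim

/-- An outer point lies in no quadrilateral. -/
theorem Lay.noQuad (hL : Lay X C) {a b c d w : Pt} (ha : a ∈ X) (hb : b ∈ X) (hc : c ∈ X)
    (hd : d ∈ X) (hw : w ∈ X) (hw' : w ∉ C) (h1 : L a b w) (h2 : L b c w) (h3 : L c d w)
    (h4 : L d a w) : False := by
  by_cases e : a = c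
  · subst e; exact h1.not_swap h2
  rcases hL.gp.cyc ha hc hw e h3.ne13 h1.ne13 with g | g
  · exact hL.ext w hw hw' a ha c hc d hd g h3 h4
  · exact hL.ext w hw hw' a ha b hb c hc h1 h2 g

/-- An outer point lies in no pentagon. -/
theorem Lay.noPent (hL : Lay X C) {a b c d f w : Pt} (ha : a ∈ X) (hb : b ∈ X) (hc : c ∈ X)
    (hd : d ∈ X) (hf : f ∈ X) (hw : w ∈ X) (hw' : w ∉ C) (h1 : L a b w) (h2 : L b c w)
    (h3 : L c d w) (h4 : L d f w) (h5 : L f a w) : False := by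
  by_cases e : a = c
  · subst e; exact h1.not_swap h2
  rcases hL.gp.cyc ha hc hw e h3.ne13 h1.ne13 with g | g
  · exact hL.noQuad ha hc hd hf hw hw' g h3 h4 h5
  · exact hL.ext w hw hw' a ha b hb c hc h1 h2 g

open Classical in
/-- The outer points to the right of the line `p q`. -/
noncomputable def cut (X C : Finset Pt) (p q : Pt) : Finset Pt := (X \ C).filter fun h => L q p h

theorem mem_cut {p q h : Pt} : h ∈ cut X C p q ↔ h ∈ X ∧ h ∉ C ∧ L q p h := by
  classical
  unfold cut; rw [Finset.mem_filter, Finset.mem_sdiff, and_assoc]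

/-- A hull edge of `C` cuts off at most three outer points: four of them would form an empty
hexagon with the end points of the edge. -/
theorem Lay.cut_le (hL : Lay X C) {p q : Pt} (hp : p ∈ C) (hq : q ∈ C)
    (hed : ∀ w ∈ C, w ≠ p → w ≠ q → L p q w) : (cut X C p q).card ≤ 3 := by
  by_contra hc
  push Not at hc
  have hp' := hL.sub hp
  have hq' := hL.sub hq
  obtain ⟨a, ha, b, hb, e, he, f, hf, h1, h2, h3⟩ := exists_four_around hL.gp hp' (d := q)
    (fun t ht => (mem_cut.1 ht).1) (fun t ht => (mem_cut.1 ht).2.2.r) hc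
  obtain ⟨a1, a2, a3⟩ := mem_cut.1 ha
  obtain ⟨b1, b2, b3⟩ := mem_cut.1 hb
  obtain ⟨e1, e2, e3⟩ := mem_cut.1 he
  obtain ⟨f1, f2, f3⟩ := mem_cut.1 hf
  obtain ⟨z, hz, hin⟩ := hL.hex p hp' a a1 b b1 e e1 f f1 q hq'
    ⟨a3.r, b3.r, e3.r, f3.r, h1, h2, h3, hL.bulge hp' a1 b1 b2 e1 h1 h2,
      hL.bulge hp' b1 e1 e2 f1 h2 h3, hL.bulge hp' e1 f1 f2 hq' h3 f3.r⟩
  exact (hed z hz hin.z12.ne13.symm hin.z56.ne23.symm).not_swap hin.z61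

/-! ### The edges of a polygon seen from an outer point -/

/-- The tangent from `h` at the vertex where the edges seen from `h` begin. -/
theorem Hull.startL (hv : Hull C n v) {k : ℤ} {h w : Pt} (h1 : L (v (k - 1)) (v k) h)
    (h2 : L (v (k + 1)) (v k) h) (hw : w ∈ C) (hne : w ≠ v k) : L (v k) h w := by
  have hn := hv.npos
  by_cases e1 : w = v (k + 1)
  · rw [e1]; exact h2.r
  by_cases e2 : w = v (k - 1)
  · rw [e2]; exact h1.r
  have a1 := hv.ed k w hw hne e1
  have a2 := hv.ed (k - 1) w hw e2 (by rwa [sub_add_cancel])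
  rw [sub_add_cancel] at a2
  have a3 := hv.conv (k - 1) k (k + 1) (by omega) (by omega) (by omega)
  exact L.transLast h2.r a1 h1.r a3.r a2.r

/-- The tangent from `h` at the vertex where the edges seen from `h` end. -/
theorem Hull.endL (hv : Hull C n v) {k : ℤ} {h w : Pt} (h1 : L (v k) (v (k - 1)) h)
    (h2 : L (v k) (v (k + 1)) h) (hw : w ∈ C) (hne : w ≠ v k) : L (v k) w h := by
  have hn := hv.npos
  by_cases e1 : w = v (k + 1)
  · rw [e1]; exact h2
  by_cases e2 : w = v (k - 1)
  · rw [e2]; exact h1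
  have a1 := hv.ed k w hw hne e1
  have a2 := hv.ed (k - 1) w hw e2 (by rwa [sub_add_cancel])
  rw [sub_add_cancel] at a2
  have a3 := hv.conv (k - 1) k (k + 1) (by omega) (by omega) (by omega)
  exact L.transFirst a2.r h1 a1 a3.r h2

/-- No point sees all edges of a convex polygon. -/
theorem Hull.not_all (hv : Hull C n v) {h : Pt}
    (dich : ∀ k, v k ≠ v 0 → L (v 0) (v k) h ∨ L (v k) (v 0) h)
    (hall : ∀ k, L (v (k + 1)) (v k) h) : False := by
  have hn := hv.npos
  have key : ∀ k : ℤ, 1 ≤ k → k < n → L (v k) (v 0) h := by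
    intro k hk
    induction k, hk using Int.leInduction with
    | base => intro _; have := hall 0; rwa [zero_add] at this
    | succ k hk ih =>
      intro hlt
      have g := ih (by omega)
      rcases dich (k + 1) (hv.ne (i := 0) (by omega) (by omega)).symm with g' | g'
      · have := L.interior g.rr g'.r (hall k)
        exact absurd this (hv.conv 0 k (k + 1) (by omega) (by omega) (by omega)).not_flip
      · exact g'
  have e := hall (n - 1)
  have e0 : v (n - 1 + 1) = v 0 := by rw [← hv.per 0]; congr 1; ring
  rw [e0] at e
  exact e.not_swap (key (n - 1) (by omega) (by omega))

/-- The edges seen from an outer point form a cyclic interval. -/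
theorem Lay.vis (hL : Lay X C) (hv : Hull C n v) {h : Pt} (hh : h ∈ X) (hn : h ∉ C) :
    ∃ x y : ℤ, x < y ∧ y < x + n ∧ (∀ k, x ≤ k → k < y → L (v (k + 1)) (v k) h) ∧
      (∀ k, y ≤ k → k < x + n → L (v k) (v (k + 1)) h) := by
  have hpos := hv.npos
  have vX : ∀ k, v k ∈ X := fun k => hL.sub (hv.mem k)
  have vh : ∀ k, v k ≠ h := fun k e => hn (e ▸ hv.mem k)
  have dich : ∀ k, v k ≠ v 0 → L (v 0) (v k) h ∨ L (v k) (v 0) h := fun k hk =>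
    hL.gp.cyc (vX 0) (vX k) hh hk.symm (vh k) (vh 0)
  have neg : ∀ k, ¬ L (v (k + 1)) (v k) h → L (v k) (v (k + 1)) h := fun k hk =>
    hL.gp.not (vX _) (vX _) hh (hv.ne_succ k).symm (vh _) (vh _) hk
  obtain ⟨x, y, h1, h2, h3, h4⟩ := exists_interval (show (0 : ℤ) < n by omega)
    (fun k => L (v (k + 1)) (v k) h)
    (by intro k; simp only [show k + n + 1 = k + 1 + n by ring, hv.per])
    (by
      by_contra hc
      push Not at hc
      obtain ⟨j, j0, jn, t1, t2, t3⟩ := hv.fan (fun k => neg k (hc k)) dich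
      exact hL.ext h hh hn _ (vX _) _ (vX _) _ (vX _) t1 t2 t3)
    (by
      by_contra hc
      push Not at hc
      exact hv.not_all dich hc)
    (by
      intro k k' hk hk' n1 p1 n2 p2
      have m1 := neg _ n1
      have m2 := neg _ n2
      rw [sub_add_cancel] at m1 m2
      have hne := hv.ne hk hk'
      exact (hv.startL m1 p1 (hv.mem k') hne.symm).not_flip (hv.startL m2 p2 (hv.mem k) hne))
  exact ⟨x, y + 1, by omega, h2, fun k a b => h3 k a (by omega),
    fun k a b => neg k (h4 k (by omega) b)⟩

/-- The vertices of a polygon to the right of a line through two inner points form a cyclic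
interval. -/
theorem Lay.visLine (hL : Lay X C) (hv : Hull X n v) {p q : Pt} (hp : p ∈ C) (hq : q ∈ C)
    (hpq : p ≠ q) :
    ∃ x y : ℤ, x ≤ y ∧ y + 1 < x + n ∧ (∀ k, x ≤ k → k ≤ y → L q p (v k)) ∧
      (∀ k, y < k → k < x + n → L p q (v k)) := by
  have hpos := hv.npos
  have hcore := hL.eq_core hv
  have vn : ∀ k, ∀ w ∈ C, w ≠ v k := fun k w hw => by
    rw [hcore] at hw; exact (mem_core.1 hw).2 k
  have neg : ∀ k, ¬ L q p (v k) → L p q (v k) := fun k hk =>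
    hL.gp.not (hL.sub hq) (hL.sub hp) (hv.mem k) hpq.symm (vn k p hp) (vn k q hq) hk
  have out : ∀ h ∈ X, h ∉ C → ∃ k, h = v k := by
    intro h hh hn
    rw [hcore, mem_core] at hn
    push Not at hn
    exact hn hh
  obtain ⟨x, y, h1, h2, h3, h4⟩ := exists_interval (show (0 : ℤ) < n by omega)
    (fun k => L q p (v k)) (by intro k; simp only [hv.per])
    (by
      obtain ⟨h, hh, hn, hl⟩ := hL.inn p hp q (hL.sub hq) hpq.symm
      obtain ⟨k, rfl⟩ := out h hh hn
      exact ⟨k, hl⟩)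
    (by
      obtain ⟨h, hh, hn, hl⟩ := hL.inn q hq p (hL.sub hp) hpq
      obtain ⟨k, rfl⟩ := out h hh hn
      exact ⟨k, hl.not_swap⟩)
    (by
      intro k k' hk hk' n1 p1 n2 p2
      have m1 := neg _ n1
      have m2 := neg _ n2
      have h5 : k < k' - 1 := by
        rcases eq_or_lt_of_le (show k ≤ k' - 1 by omega) with e | e
        · rw [← e] at n2; exact absurd p1 n2
        · exact e
      have h6 : k' < k - 1 + n := by
        rcases eq_or_lt_of_le (show k' ≤ k - 1 + n by omega) with e | e
        · rw [e, hv.per] at p2; exact absurd p2 n1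
        · exact e
      exact no_alt (hv.conv k (k' - 1) k' h5 (by omega) (by omega))
        (hv.conv (k - 1) (k' - 1) k' (by omega) (by omega) (by omega))
        (hv.conv (k - 1) k k' (by omega) (by omega) (by omega))
        (hv.conv (k - 1) k (k' - 1) (by omega) (by omega) (by omega)) m1 p1 m2 p2)
  exact ⟨x, y, h1, h2, h3, fun k a b => neg k (h4 k a b)⟩

end

/-! ### The number of outer points passed by a moving ray -/

/-- The edges `x, …, y - 1` of the polygon `v` are those seen from `h`, modulo `n`. -/
structure Vis (n : ℕ) (v : ℤ → Pt) (h : Pt) (x y : ℤ) : Prop where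
  lt : x < y
  lt' : y < x + n
  see : ∀ k, x ≤ k → k < y → L (v (k + 1)) (v k) h
  nsee : ∀ k, y ≤ k → k < x + n → L (v k) (v (k + 1)) h

/-- The ray from `c` to `a k` comes before the outer point `h` in the counterclockwise sense; the
position of `h` is lifted to the integers by the interval `x, …, y` of edges seen from it. -/
def Bef (a : ℤ → Pt) (h : Pt) (x y : ℤ) (c : Pt) (k : ℤ) : Prop := k ≤ x ∨ (k < y ∧ L c (a k) h)

open Classical in
/-- The outer points passed by a ray moving from the position `c → a k` to the
position `c' → a kk`. -/
noncomputable def Fl (X D : Finset Pt) (i : ℕ) (a : ℤ → Pt) (c : Pt) (k : ℤ) (c' : Pt) (kk : ℤ) :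
    Finset Pt :=
  (X \ D).filter fun h => ∃ x y, Vis i a h x y ∧ Bef a h x y c k ∧ ¬ Bef a h x y c' kk

/-- The three outermost layers: the nonagon `X \ D`, the polygon `a` bounding `D`, and the set `Q`
of points inside it. -/
structure Ctx (X D Q : Finset Pt) (i : ℕ) (a : ℤ → Pt) : Prop where
  cfg : Cfg X D
  hull : Hull D i a
  lay : Lay D Q

theorem L.mid {x p q r s : Pt} (h1 : L x p q) (h2 : L x r s) (h3 : L x p s) (h4 : L x q r)
    (h5 : L x q s) : L x p r := by
  have e := gp x p q r s
  unfold L at *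
  have : 0 < ori x q s * ori x p r := by nlinarith [mul_pos h1 h2, mul_pos h3 h4]
  exact (pos_iff_pos_of_mul_pos this).1 h5

section
variable {X D Q : Finset Pt} {i : ℕ} {a : ℤ → Pt} {c c' c'' h : Pt} {k k' k'' x y : ℤ}

theorem mem_Fl : h ∈ Fl X D i a c k c' k' ↔ h ∈ X ∧ h ∉ D ∧
    ∃ x y, Vis i a h x y ∧ Bef a h x y c k ∧ ¬ Bef a h x y c' k' := by
  classical
  unfold Fl; rw [Finset.mem_filter, Finset.mem_sdiff, and_assoc]

theorem Fl_tri (c' : Pt) (k' : ℤ) :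
    (Fl X D i a c k c'' k'').card ≤ (Fl X D i a c k c' k').card + (Fl X D i a c' k' c'' k'').card := by
  classical
  refine le_trans (Finset.card_le_card ?_) (Finset.card_union_le _ _)
  intro h hh
  obtain ⟨h1, h2, x, y, h3, h4, h5⟩ := mem_Fl.1 hh
  rw [Finset.mem_union]
  by_cases e : Bef a h x y c' k'
  · exact Or.inr (mem_Fl.2 ⟨h1, h2, x, y, h3, e, h5⟩)
  · exact Or.inl (mem_Fl.2 ⟨h1, h2, x, y, h3, h4, e⟩)

theorem mem_Fl_tri (c' : Pt) (k' : ℤ) (hh : h ∈ Fl X D i a c k c'' k'') :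
    h ∈ Fl X D i a c k c' k' ∨ h ∈ Fl X D i a c' k' c'' k'' := by
  obtain ⟨h1, h2, x, y, h3, h4, h5⟩ := mem_Fl.1 hh
  by_cases e : Bef a h x y c' k'
  · exact Or.inr (mem_Fl.2 ⟨h1, h2, x, y, h3, e, h5⟩)
  · exact Or.inl (mem_Fl.2 ⟨h1, h2, x, y, h3, h4, e⟩)

theorem Vis.shift {v : ℤ → Pt} (per : ∀ k, v (k + i) = v k) (hv : Vis i v h x y) (m : ℤ) :
    Vis i v h (x + m * i) (y + m * i) := by
  have e : ∀ k, v (k + (-m) * i) = v k := fun k => per_mul per (-m) k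
  refine ⟨by have := hv.lt; omega, by have := hv.lt'; omega, ?_, ?_⟩
  · intro k h1 h2
    have := hv.see (k + (-m) * i) (by rw [neg_mul]; omega) (by rw [neg_mul]; omega)
    rwa [e, show k + (-m) * i + 1 = k + 1 + (-m) * i by ring, e] at this
  · intro k h1 h2
    have := hv.nsee (k + (-m) * i) (by rw [neg_mul]; omega) (by rw [neg_mul]; omega)
    rwa [e, show k + (-m) * i + 1 = k + 1 + (-m) * i by ring, e] at this

namespace Ctx

theorem QX (T : Ctx X D Q i a) (hc : c ∈ Q) : c ∈ X := T.cfg.sub (T.lay.sub hc)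
theorem QD (T : Ctx X D Q i a) (hc : c ∈ Q) : c ∈ D := T.lay.sub hc
theorem aD (T : Ctx X D Q i a) (k : ℤ) : a k ∈ D := T.hull.mem k
theorem aX (T : Ctx X D Q i a) (k : ℤ) : a k ∈ X := T.cfg.sub (T.hull.mem k)
theorem Qa (T : Ctx X D Q i a) (hc : c ∈ Q) (k : ℤ) : c ≠ a k := by
  rw [T.lay.eq_core T.hull] at hc; exact (mem_core.1 hc).2 k
theorem aQ (T : Ctx X D Q i a) (k : ℤ) : a k ∉ Q := fun h => T.Qa h k rfl
theorem D_cases (T : Ctx X D Q i a) {w : Pt} (hw : w ∈ D) : w ∈ Q ∨ ∃ k, w = a k := by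
  by_contra hc
  push Not at hc
  apply hc.1
  rw [T.lay.eq_core T.hull, mem_core]
  exact ⟨hw, hc.2⟩
theorem edQ (T : Ctx X D Q i a) (hc : c ∈ Q) (k : ℤ) : L (a k) (a (k + 1)) c :=
  T.hull.ed k c (T.QD hc) (T.Qa hc _) (T.Qa hc _)

theorem exists_vis (T : Ctx X D Q i a) (hh : h ∈ X) (hn : h ∉ D) : ∃ x y, Vis i a h x y := by
  obtain ⟨x, y, h1, h2, h3, h4⟩ := T.cfg.vis T.hull hh hn
  exact ⟨x, y, h1, h2, h3, h4⟩

theorem bef_pred (T : Ctx X D Q i a) (hh : h ∈ X) (hn : h ∉ D) (hv : Vis i a h x y)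
    (hc : c ∈ Q) (hb : Bef a h x y c (k + 1)) : Bef a h x y c k := by
  rcases hb with hb | ⟨h1, h2⟩
  · exact Or.inl (by omega)
  by_cases e : k ≤ x
  · exact Or.inl e
  refine Or.inr ⟨by omega, ?_⟩
  by_contra hc'
  have g := T.cfg.gp.not (T.QX hc) (T.aX k) hh (T.Qa hc k) (fun e => hn (e ▸ T.aD k))
    (fun e => hn (e ▸ T.QD hc)) hc'
  have := L.interior (h2.rr) (hv.see k (by omega) (by omega)).r g
  exact (T.edQ hc k).not_swap' this

theorem bef_mono (T : Ctx X D Q i a) (hh : h ∈ X) (hn : h ∉ D) (hv : Vis i a h x y)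
    (hc : c ∈ Q) (hk : k ≤ k') (hb : Bef a h x y c k') : Bef a h x y c k := by
  induction k', hk using Int.leInduction with
  | base => exact hb
  | succ k' _ ih => exact ih (T.bef_pred hh hn hv hc hb)

/-- Moving the apex `c` of the ray to `c'` does not pass outer points in the positive sense if the
target `a k` is to the right of `c → c'`. -/
theorem bef_move (T : Ctx X D Q i a) (hv : Vis i a h x y) (hc : c ∈ Q) (hc' : c' ∈ Q)
    (hl : L c' c (a k)) (hb : Bef a h x y c k) : Bef a h x y c' k := by
  rcases hb with hb | ⟨h1, h2⟩
  · exact Or.inl hb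
  by_cases e : k ≤ x
  · exact Or.inl e
  refine Or.inr ⟨h1, ?_⟩
  exact (L.mid (hv.see k (by omega) h1).r hl.rr h2.r (T.edQ hc' k) (T.edQ hc k)).rr

theorem Fl_move (T : Ctx X D Q i a) (hc : c ∈ Q) (hc' : c' ∈ Q) (hl : L c' c (a k)) :
    h ∉ Fl X D i a c k c' k := by
  intro hh
  obtain ⟨-, -, x, y, h3, h4, h5⟩ := mem_Fl.1 hh
  exact h5 (T.bef_move h3 hc hc' hl h4)

theorem Fl_mono (T : Ctx X D Q i a) (hc : c ∈ Q) (hc' : c' ∈ Q) {l l' : ℤ} (h1 : k ≤ l)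
    (h2 : l' ≤ k') : Fl X D i a c l c' l' ⊆ Fl X D i a c k c' k' := by
  intro h hh
  obtain ⟨m1, m2, x, y, h3, h4, h5⟩ := mem_Fl.1 hh
  exact mem_Fl.2 ⟨m1, m2, x, y, h3, T.bef_mono m1 m2 h3 hc h1 h4,
    fun h6 => h5 (T.bef_mono m1 m2 h3 hc' h2 h6)⟩

/-- An outer point passed while the target of the ray moves along one edge. -/
theorem Fl_step (T : Ctx X D Q i a) (hc : c ∈ Q) (hc' : c' ∈ Q)
    (hh : h ∈ Fl X D i a c k c' (k + 1)) :
    L (a (k + 1)) (a k) h ∧ L c (a k) h ∧ L (a (k + 1)) c' h := by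
  obtain ⟨m1, m2, x, y, hv, h4, h5⟩ := mem_Fl.1 hh
  unfold Bef at h4 h5
  push Not at h5
  have hx : x ≤ k := by omega
  have hy : k < y := by rcases h4 with h4 | h4 <;> [have := hv.lt; skip] <;> omega
  have hsee := hv.see k hx hy
  refine ⟨hsee, ?_, ?_⟩
  · rcases h4 with h4 | h4
    · have e : k = x := by omega
      have g := hv.nsee (k - 1 + i) (by have := hv.lt'; omega) (by omega)
      rw [T.hull.per, show k - 1 + i + 1 = k + i by ring, T.hull.per] at g
      exact (T.hull.startL g hsee (T.QD hc) (T.Qa hc k)).rr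
    · exact h4.2
  · by_cases e : k + 1 < y
    · exact T.cfg.gp.not (T.QX hc') (T.aX _) m1 (T.Qa hc' _) (fun e => m2 (e ▸ T.aD _))
        (fun e => m2 (e ▸ T.QD hc')) (h5.2 e)
    · have e : k + 1 = y := by omega
      have g := hv.nsee (k + 1) (by omega) (by have := hv.lt'; omega)
      exact T.hull.endL (k := k + 1) (by rwa [add_sub_cancel_right]) g (T.QD hc') (T.Qa hc' _)

theorem Fl_sub (T : Ctx X D Q i a) : Fl X D i a c k c' k' ⊆ X := fun _ hh => (mem_Fl.1 hh).1

theorem Fl_round (T : Ctx X D Q i a) (hc : c ∈ Q) (k : ℤ) :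
    (Fl X D i a c k c (k + i)).card = 9 := by
  rw [← T.cfg.card9]
  congr 1
  ext h
  rw [mem_Fl, Finset.mem_sdiff]
  constructor
  · exact fun g => ⟨g.1, g.2.1⟩
  rintro ⟨h1, h2⟩
  refine ⟨h1, h2, ?_⟩
  obtain ⟨x, y, hv⟩ := T.exists_vis h1 h2
  have hi := T.hull.npos
  have hv' := hv.shift T.hull.per
  obtain ⟨m, -, -, m3, m4⟩ := exists_switch
    (fun m => ¬ Bef a h (x + m * i) (y + m * i) c (k + i))
    (a := - |y - k| - 2) (b := |x - k| + 1)
    (by have := abs_nonneg (y - k); have := abs_nonneg (x - k); omega)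
    (by
      unfold Bef
      have h0 := le_abs_self (y - k)
      have h0' := abs_nonneg (y - k)
      have := hv.lt
      have : y + (-|y - k| - 2) * i ≤ k + i := by nlinarith
      rintro (g | g) <;> omega)
    (by
      simp only [not_not]
      left
      have h0 := neg_abs_le (x - k)
      have h0' := abs_nonneg (x - k)
      nlinarith)
  simp only [not_not] at m4
  refine ⟨_, _, hv' m, ?_, m3⟩
  unfold Bef at m4 ⊢
  rw [T.hull.per] at m4
  rcases m4 with g | ⟨g, g'⟩
  · left; linarith [show (m + 1) * (i : ℤ) = m * i + i by ring]
  · right; exact ⟨by linarith [show (m + 1) * (i : ℤ) = m * i + i by ring], by assumption⟩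

/-- Every outer point lies in one of the angles at an inner point `c`. -/
theorem exists_sector (T : Ctx X D Q i a) (hc : c ∈ Q) (hv : Vis i a h x y) :
    ∃ k, Bef a h x y c k ∧ ¬ Bef a h x y c (k + 1) := by
  obtain ⟨k, -, -, k3, k4⟩ := exists_switch (fun k => Bef a h x y c k) (le_of_lt hv.lt)
    (Or.inl le_rfl) (by have := hv.lt; unfold Bef; rintro (g | g) <;> omega)
  exact ⟨k, k3, k4⟩

end Ctx
end

/-! ### Consequences of minimality of the nonagon -/

/-- Otherwise nine of the vertices would be a smaller convex nonagon. -/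
theorem Cfg.le8 {X D C : Finset Pt} {n : ℕ} {v : ℤ → Pt} (h : Cfg X D) (hC : C ⊆ D)
    (hv : Hull C n v) : n ≤ 8 := by
  rw [← hv.card]
  have key : ∀ z ∈ C \ core C v, ∃ k, z = v k := by
    intro z hz
    rw [Finset.mem_sdiff, mem_core] at hz
    by_contra hcon
    push Not at hcon
    exact hz.2 ⟨hz.1, hcon⟩
  refine h.only9 _ (fun z hz => h.sub (hC (Finset.mem_sdiff.1 hz).1)) ⟨v 0, ?_, hC (hv.mem 0)⟩ ?_
  · rw [Finset.mem_sdiff, mem_core]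
    exact ⟨hv.mem 0, fun hcon => hcon.2 0 rfl⟩
  · intro z hz _
    obtain ⟨k, rfl⟩ := key z hz
    exact ⟨v (k + 1), (hv.ne_succ k).symm, Or.inl fun w hw h1 h2 =>
      hv.ed k w (Finset.mem_sdiff.1 hw).1 h1 h2⟩

/-- A convex chain of `m + 1` inner points cuts off at least `m + 2` outer points: replacing those
by the chain would otherwise give another convex nonagon. -/
theorem Cfg.chain {X D : Finset Pt} (h : Cfg X D) (m : ℕ) (hm : 1 ≤ m) (d : ℕ → Pt)
    (hd : ∀ t ≤ m, d t ∈ D) (inj : ∀ s t, s < t → t ≤ m → d s ≠ d t)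
    (hl : ∀ t < m, ∀ s ≤ m, s ≠ t → s ≠ t + 1 → L (d t) (d (t + 1)) (d s))
    (F : Finset Pt) (hF : ∀ w ∈ X, w ∉ D → (∃ t < m, L (d (t + 1)) (d t) w) → w ∈ F) :
    m + 2 ≤ F.card := by
  classical
  set P := (Finset.range (m + 1)).image d with hP
  set R := (X \ D) \ F with hR
  have hPD : P ⊆ D := by
    intro w hw
    rw [hP, Finset.mem_image] at hw
    obtain ⟨t, ht, rfl⟩ := hw
    exact hd t (by rw [Finset.mem_range] at ht; omega)
  have hdis : Disjoint P R := by
    rw [Finset.disjoint_left]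
    intro w hw hw'
    rw [hR, Finset.mem_sdiff, Finset.mem_sdiff] at hw'
    exact hw'.1.2 (hPD hw)
  have c1 : P.card = m + 1 := by
    rw [hP, Finset.card_image_of_injOn, Finset.card_range]
    intro s hs t ht e
    simp at hs ht
    rcases lt_trichotomy s t with g | g | g
    · exact absurd e (inj s t g (by omega))
    · exact g
    · exact absurd e.symm (inj t s g (by omega))
  have c2 : 9 ≤ R.card + F.card := by
    rw [← h.card9]
    have := Finset.le_card_sdiff F (X \ D)
    rw [← hR] at this
    omega
  have hleft : ∀ t < m, ∀ w ∈ P ∪ R, w ≠ d t → w ≠ d (t + 1) → L (d t) (d (t + 1)) w := by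
    intro t ht w hw n1 n2
    rw [Finset.mem_union] at hw
    rcases hw with hw | hw
    · rw [hP, Finset.mem_image] at hw
      obtain ⟨s, hs, rfl⟩ := hw
      exact hl t ht s (by rw [Finset.mem_range] at hs; omega) (fun e => n1 (by rw [e]))
        (fun e => n2 (by rw [e]))
    · rw [hR, Finset.mem_sdiff, Finset.mem_sdiff] at hw
      refine h.gp.not (h.sub (hd _ (by omega))) (h.sub (hd _ (by omega))) hw.1.1
        (inj _ _ (by omega) (by omega)).symm n1.symm n2.symm ?_
      exact fun g => hw.2 (hF w hw.1.1 hw.1.2 ⟨t, ht, g⟩)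
  have := h.only9 (P ∪ R) ?_ ⟨d 0, ?_, hd 0 (by omega)⟩ ?_
  · rw [Finset.card_union_of_disjoint hdis] at this
    omega
  · intro w hw
    rw [Finset.mem_union] at hw
    rcases hw with hw | hw
    · exact h.sub (hPD hw)
    · rw [hR, Finset.mem_sdiff, Finset.mem_sdiff] at hw
      exact hw.1.1
  · exact Finset.mem_union_left _ (Finset.mem_image_of_mem _ (by simp))
  · intro z hz hzD
    rw [Finset.mem_union] at hz
    rcases hz with hz | hz
    · rw [hP, Finset.mem_image] at hz
      obtain ⟨t, ht, rfl⟩ := hz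
      rw [Finset.mem_range] at ht
      rcases eq_or_lt_of_le (show t ≤ m by omega) with e | e
      · obtain ⟨s, rfl⟩ : ∃ s, t = s + 1 := ⟨t - 1, by omega⟩
        exact ⟨d s, inj s _ (by omega) (by omega), Or.inr fun w hw n1 n2 =>
          hleft s (by omega) w hw n2 n1⟩
      · exact ⟨d (t + 1), (inj t _ (by omega) (by omega)).symm, Or.inl fun w hw n1 n2 =>
          hleft t e w hw n1 n2⟩
    · rw [hR, Finset.mem_sdiff, Finset.mem_sdiff] at hz
      exact absurd hzD hz.1.2

/-! ### Bounds on the number of outer points passed in a single step -/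

section
variable {X D Q : Finset Pt} {i : ℕ} {a : ℤ → Pt} {c p q t h : Pt} {k z : ℤ}

namespace Ctx

theorem Tk_le (T : Ctx X D Q i a) (k : ℤ) : (cut X D (a k) (a (k + 1))).card ≤ 3 :=
  T.cfg.cut_le (T.aD _) (T.aD _) (fun w hw h1 h2 => T.hull.ed k w hw h1 h2)

/-- The ray rotating about `c` from `a k` to `a (k + 1)` passes at most two outer points, if there
are no inner points in the triangle. -/
theorem F1 (T : Ctx X D Q i a) (hc : c ∈ Q)
    (hz : ∀ z ∈ Q, L c (a k) z → L (a (k + 1)) c z → False) :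
    (Fl X D i a c k c (k + 1)).card ≤ 2 := by
  by_contra hcon
  push Not at hcon
  have st := fun h (hh : h ∈ Fl X D i a c k c (k + 1)) => T.Fl_step hc hc hh
  obtain ⟨h₁, m1, h₂, m2, h₃, m3, l1, l2⟩ := exists_three_around T.cfg.gp (T.QX hc)
    (d := a (k + 1)) T.Fl_sub (fun t ht => (st t ht).2.2.r) hcon
  obtain ⟨x1, n1, -⟩ := mem_Fl.1 m1
  obtain ⟨x2, n2, -⟩ := mem_Fl.1 m2
  obtain ⟨x3, n3, -⟩ := mem_Fl.1 m3
  have cX := T.QX hc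
  obtain ⟨w, hw, hin⟩ := T.cfg.hex c cX (a k) (T.aX k) h₁ x1 h₂ x2 h₃ x3 (a (k + 1)) (T.aX _)
    ⟨(T.edQ hc k).rr, (st _ m1).2.2.r, (st _ m2).2.2.r, (st _ m3).2.2.r, (st _ m1).2.1, l1, l2,
      T.cfg.bulge cX (T.aX k) x1 n1 x2 (st _ m1).2.1 l1, T.cfg.bulge cX x1 x2 n2 x3 l1 l2,
      T.cfg.bulge cX x2 x3 n3 (T.aX _) l2 (st _ m3).2.2.r⟩
  by_cases hwQ : w ∈ Q
  · exact hz w hwQ hin.z12 hin.z61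
  · exact T.lay.ext w hw hwQ c (T.QD hc) (a k) (T.aD k) (a (k + 1)) (T.aD _) hin.z12
      (T.hull.ed k w hw hin.z12.ne23.symm hin.z61.ne13.symm) hin.z61

/-- A flip of the apex from `p` to `q` with both targets on the right. -/
theorem Fl_both (T : Ctx X D Q i a) (hp : p ∈ Q) (hq : q ∈ Q) (h1 : L q p (a z))
    (h2 : L q p (a (z + 1))) (hh : h ∈ Fl X D i a p z q (z + 1)) :
    h ∈ Fl X D i a p z p (z + 1) ∧ h ∈ Fl X D i a q z q (z + 1) := by
  constructor
  · exact (mem_Fl_tri p (z + 1) hh).resolve_right (T.Fl_move hp hq h2)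
  · exact (mem_Fl_tri q z hh).resolve_left (T.Fl_move hp hq h1)

theorem angle (T : Ctx X D Q i a) (hp : p ∈ Q) (h1 : L q p (a z))
    (h2 : L q p (a (z + 1))) (g1 : L p (a z) h) (g2 : L p h (a (z + 1))) : L p h q :=
  L.transFirst g2 h2.r g1 (T.edQ hp z).rr h1.r

/-- While the ray moves along two consecutive vertices visible through the edge `p q`, it passes at
most one outer point: two of them would complete an empty hexagon. -/
theorem block1 (T : Ctx X D Q i a) (hp : p ∈ Q) (hq : q ∈ Q)
    (hed : ∀ w ∈ Q, w ≠ p → w ≠ q → L p q w) (h1 : L q p (a z)) (h2 : L q p (a (z + 1))) :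
    (Fl X D i a p z q (z + 1)).card ≤ 1 := by
  by_contra hcon
  push Not at hcon
  have st := fun h (hh : h ∈ Fl X D i a p z q (z + 1)) =>
    T.Fl_step hp hp (T.Fl_both hp hq h1 h2 hh).1
  have st' := fun h (hh : h ∈ Fl X D i a p z q (z + 1)) => T.Fl_step hp hq hh
  obtain ⟨h₁, m1, h₂, m2, l1⟩ := exists_two_around T.cfg.gp (T.QX hp)
    (d := a (z + 1)) T.Fl_sub (fun t ht => (st t ht).2.2.r) hcon
  obtain ⟨x1, n1, -⟩ := mem_Fl.1 m1
  obtain ⟨x2, n2, -⟩ := mem_Fl.1 m2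
  have cX := T.QX hp
  obtain ⟨w, hw, hin⟩ := T.cfg.hex p cX (a z) (T.aX z) h₁ x1 h₂ x2 (a (z + 1)) (T.aX _) q (T.QX hq)
    ⟨h1.r, T.angle hp h1 h2 (st _ m1).2.1 (st _ m1).2.2.r,
      T.angle hp h1 h2 (st _ m2).2.1 (st _ m2).2.2.r, h2.r, (st _ m1).2.1, l1, (st _ m2).2.2.r,
      T.cfg.bulge cX (T.aX z) x1 n1 x2 (st _ m1).2.1 l1,
      T.cfg.bulge cX x1 x2 n2 (T.aX _) l1 (st _ m2).2.2.r, (st' _ m2).2.2.rr⟩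
  by_cases hwQ : w ∈ Q
  · exact (hed w hwQ hin.z12.ne13.symm hin.z56.ne23.symm).not_swap hin.z61
  · exact T.lay.noQuad (T.QD hp) (T.aD z) (T.aD (z + 1)) (T.QD hq) hw hwQ hin.z12
      (T.hull.ed z w hw hin.z12.ne23.symm hin.z56.ne13.symm) hin.z56 hin.z61

/-- While the ray moves along three consecutive vertices visible through the edge `p q`, it passes
at most two outer points. -/
theorem block2 (T : Ctx X D Q i a) (hp : p ∈ Q) (hq : q ∈ Q)
    (hed : ∀ w ∈ Q, w ≠ p → w ≠ q → L p q w) (h1 : L q p (a z)) (h2 : L q p (a (z + 1)))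
    (h3 : L q p (a (z + 1 + 1))) :
    (Fl X D i a p z q (z + 1 + 1)).card ≤ 2 := by
  classical
  have hi := T.hull.npos
  have pX := T.QX hp
  have neT : ∀ l, ∀ h ∈ X, h ∉ D → ¬ L (a (l + 1)) (a l) h → L (a l) (a (l + 1)) h :=
    fun l h hX hD hn => T.cfg.gp.not (T.aX _) (T.aX _) hX (T.hull.ne_succ l).symm
      (fun e => hD (e ▸ T.aD _)) (fun e => hD (e ▸ T.aD _)) hn
  have bad : ∀ w ∈ D, L p (a z) w → L (a (z + 1 + 1)) q w → L q p w → w ≠ a (z + 1) → False := by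
    intro w hw g1 g2 g3 g4
    by_cases hwQ : w ∈ Q
    · exact (hed w hwQ g1.ne13.symm g2.ne23.symm).not_swap g3
    · exact T.lay.noPent (T.QD hp) (T.aD z) (T.aD (z + 1)) (T.aD (z + 1 + 1)) (T.QD hq) hw hwQ g1
        (T.hull.ed z w hw g1.ne23.symm g4) (T.hull.ed (z + 1) w hw g4 g2.ne13.symm) g2 g3
  have key : Fl X D i a p z q (z + 1 + 1) ⊆
      cut X D (a z) (a (z + 1)) ∩ cut X D (a (z + 1)) (a (z + 1 + 1)) := by
    intro h hh
    obtain ⟨hX, hD, -⟩ := mem_Fl.1 hh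
    rw [Finset.mem_inter, mem_cut, mem_cut]
    rcases mem_Fl_tri p (z + 1) hh with g | g
    · obtain ⟨s1, s2, s3⟩ := T.Fl_step hp hp g
      refine ⟨⟨hX, hD, s1⟩, hX, hD, ?_⟩
      by_contra hn
      have s4 := neT _ h hX hD hn
      obtain ⟨w, hw, hin⟩ := T.cfg.hex p pX (a z) (T.aX z) h hX (a (z + 1)) (T.aX _)
        (a (z + 1 + 1)) (T.aX _) q (T.QX hq)
        ⟨h1.r, T.angle hp h1 h2 s2 s3.r, h2.r, h3.r, s2, s3.r, (T.edQ hp _).rr, s1.r, s4.rr,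
          T.edQ hq _⟩
      exact bad w hw hin.z12 hin.z56 hin.z61 hin.z34.ne23.symm
    · obtain ⟨g1, g2⟩ := T.Fl_both hp hq h2 h3 g
      obtain ⟨s1, s2, s3⟩ := T.Fl_step hp hp g1
      obtain ⟨-, -, s5⟩ := T.Fl_step hq hq g2
      refine ⟨⟨hX, hD, ?_⟩, hX, hD, s1⟩
      by_contra hn
      have s4 := neT _ h hX hD hn
      obtain ⟨w, hw, hin⟩ := T.cfg.hex p pX (a z) (T.aX z) (a (z + 1)) (T.aX _) h hX
        (a (z + 1 + 1)) (T.aX _) q (T.QX hq)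
        ⟨h1.r, h2.r, T.angle hp h2 h3 s2 s3.r, h3.r, (T.edQ hp _).rr, s2, s3.r, s4, s1.r, s5.rr⟩
      exact bad w hw hin.z12 hin.z56 hin.z61 hin.z23.ne23.symm
  have t1 := T.Tk_le z
  have t2 := T.Tk_le (z + 1)
  have t3 := T.cfg.chain 2 (by norm_num) (fun t => a (z + t)) (fun t _ => T.aD _)
    (fun s t hs ht => T.hull.ne (by omega) (by omega))
    (fun t ht s hs n1 n2 => T.hull.ed _ _ (T.aD _)
      (fun e => by
        rcases lt_or_gt_of_ne n1 with g | g
        · exact T.hull.ne (i := z + s) (j := z + t) (by omega) (by omega) e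
        · exact T.hull.ne (i := z + t) (j := z + s) (by omega) (by omega) e.symm)
      (fun e => by
        rcases lt_or_gt_of_ne n2 with g | g
        · exact T.hull.ne (i := z + s) (j := z + t + 1) (by omega) (by omega) e
        · exact T.hull.ne (i := z + t + 1) (j := z + s) (by omega) (by omega) e.symm)
      |> fun g => by push_cast; rwa [← add_assoc])
    (cut X D (a z) (a (z + 1)) ∪ cut X D (a (z + 1)) (a (z + 1 + 1)))
    (by
      rintro w hw hw' ⟨t, ht, g⟩
      rw [Finset.mem_union, mem_cut, mem_cut]
      interval_cases t
      · left; simp at g; exact ⟨hw, hw', g⟩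
      · right; simp at g; exact ⟨hw, hw', by rwa [show z + 1 + 1 = z + 2 by ring]⟩)
  have t4 := Finset.card_union_add_card_inter (cut X D (a z) (a (z + 1)))
    (cut X D (a (z + 1)) (a (z + 1 + 1)))
  have t5 := Finset.card_le_card key
  omega

/-- The strip between the segments `p a z` and `q a z'`, if it contains an inner point, contains
one closest to the line `p q`. -/
theorem exists_strip {z' : ℤ} (ht : t ∈ Q) (t1 : L p q t) (t2 : L p (a z) t) (t3 : L (a z') q t) :
    ∃ t ∈ Q, L p q t ∧ L p (a z) t ∧ L (a z') q t ∧ ∀ w ∈ Q, L p q w → L p (a z) w →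
      L (a z') q w → L q t w → L t p w → False := by
  classical
  obtain ⟨m, hm, hmin⟩ := Finset.exists_min_image
    (Q.filter fun t => L p q t ∧ L p (a z) t ∧ L (a z') q t) (fun t => ori p q t)
    ⟨t, Finset.mem_filter.2 ⟨ht, t1, t2, t3⟩⟩
  obtain ⟨hmQ, m1, m2, m3⟩ := Finset.mem_filter.1 hm
  refine ⟨m, hmQ, m1, m2, m3, fun w hw w1 w2 w3 w4 w5 => ?_⟩
  have := hmin w (Finset.mem_filter.2 ⟨hw, w1, w2, w3⟩)
  have e : ori p q m = ori q m w + ori m p w + ori p q w := by unfold ori; ring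
  unfold L at *
  linarith

/-- If some point of `Q` lies in the strip behind the edge `p q`, then no outer point is passed,
since an outer point would complete an empty hexagon. -/
theorem F3 (T : Ctx X D Q i a) (hp : p ∈ Q) (hq : q ∈ Q)
    (hed : ∀ w ∈ Q, w ≠ p → w ≠ q → L p q w) (h1 : L q p (a z)) (h2 : L q p (a (z + 1)))
    (ht : t ∈ Q) (t1 : L p q t) (t2 : L p (a z) t) (t3 : L (a (z + 1)) q t) :
    h ∉ Fl X D i a p z q (z + 1) := by
  intro hh
  obtain ⟨hX, hD, -⟩ := mem_Fl.1 hh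
  obtain ⟨s1, s2, s3⟩ := T.Fl_step hp hp (T.Fl_both hp hq h1 h2 hh).1
  obtain ⟨-, -, s4⟩ := T.Fl_step hp hq hh
  obtain ⟨t, ht, t1, t2, t3, hmin⟩ := exists_strip ht t1 t2 t3
  have g1 : L p (a (z + 1)) t := L.transFirst h2.r t1 (T.edQ hp z).rr h1.r t2
  have g2 : L p h t := L.transFirst (T.angle hp h1 h2 s2 s3.r) t1 s2 h1.r t2
  obtain ⟨w, hw, hin⟩ := T.cfg.hex p (T.QX hp) (a z) (T.aX z) h hX (a (z + 1)) (T.aX _) q (T.QX hq)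
    t (T.QX ht) ⟨t2, g2, g1, t1, s2, s3.r, h2.r, s1.r, s4.rr, t3⟩
  by_cases hwQ : w ∈ Q
  · exact hmin w hwQ (hed w hwQ hin.z12.ne13.symm hin.z45.ne23.symm) hin.z12 hin.z45 hin.z56
      hin.z61
  · exact T.lay.noPent (T.QD hp) (T.aD z) (T.aD (z + 1)) (T.QD hq) (T.QD ht) hw hwQ hin.z12
      (T.hull.ed z w hw hin.z12.ne23.symm hin.z45.ne13.symm) hin.z45 hin.z56 hin.z61

/-- No point of `Q` lies in the strip behind an edge `p q` through which three consecutive vertices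
are visible, since the nearest one would complete an empty hexagon. -/
theorem T4 (T : Ctx X D Q i a) (hp : p ∈ Q) (hq : q ∈ Q)
    (hed : ∀ w ∈ Q, w ≠ p → w ≠ q → L p q w) (h1 : L q p (a z)) (h2 : L q p (a (z + 1)))
    (h3 : L q p (a (z + 1 + 1)))
    (ht : t ∈ Q) (t1 : L p q t) (t2 : L p (a z) t) (t3 : L (a (z + 1 + 1)) q t) : False := by
  obtain ⟨t, ht, t1, t2, t3, hmin⟩ := exists_strip ht t1 t2 t3
  have hi := T.hull.npos
  have g1 : L p (a (z + 1)) t := L.transFirst h2.r t1 (T.edQ hp z).rr h1.r t2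
  have g2 : L p (a (z + 1 + 1)) t := L.transFirst h3.r t1 (T.edQ hp (z + 1)).rr h2.r g1
  obtain ⟨w, hw, hin⟩ := T.lay.hex p (T.QD hp) (a z) (T.aD z) (a (z + 1)) (T.aD _)
    (a (z + 1 + 1)) (T.aD _) q (T.QD hq) t (T.QD ht) ⟨t2, g1, g2, t1, (T.edQ hp _).rr,
      (T.edQ hp _).rr, h3.r, T.hull.conv _ _ _ (by omega) (by omega) (by have := T.hull.n3; omega),
      T.edQ hq _, t3⟩
  exact hmin w hw (hed w hw hin.z12.ne13.symm hin.z45.ne23.symm) hin.z12 hin.z45 hin.z56 hin.z61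

end Ctx
end

/-! ### Layers inside a polygon with at least eight vertices -/

section
variable {X C : Finset Pt} {n N : ℕ} {v w : ℤ → Pt}

theorem Hull.hex6 (hv : Hull X n v) {i1 i2 i3 i4 i5 i6 : ℤ} (h1 : i1 < i2) (h2 : i2 < i3)
    (h3 : i3 < i4) (h4 : i4 < i5) (h5 : i5 < i6) (h6 : i6 < i1 + n) :
    Hex (v i1) (v i2) (v i3) (v i4) (v i5) (v i6) :=
  ⟨hv.conv _ _ _ (by omega) (by omega) (by omega), hv.conv _ _ _ (by omega) (by omega) (by omega),
    hv.conv _ _ _ (by omega) (by omega) (by omega), hv.conv _ _ _ (by omega) (by omega) (by omega),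
    hv.conv _ _ _ (by omega) (by omega) (by omega), hv.conv _ _ _ (by omega) (by omega) (by omega),
    hv.conv _ _ _ (by omega) (by omega) (by omega), hv.conv _ _ _ (by omega) (by omega) (by omega),
    hv.conv _ _ _ (by omega) (by omega) (by omega), hv.conv _ _ _ (by omega) (by omega) (by omega)⟩

theorem Lay.core_nonempty (hL : Lay X C) (hv : Hull X n v) (hn : 6 ≤ n) : C.Nonempty := by
  obtain ⟨z, hz, -⟩ := hL.hex _ (hv.mem 0) _ (hv.mem 1) _ (hv.mem 2) _ (hv.mem 3) _ (hv.mem 4) _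
    (hv.mem 5) (hv.hex6 (by omega) (by omega) (by omega) (by omega) (by omega) (by omega))
  exact ⟨z, hz⟩

/-- Four outer points cut off by the line `p q` form a convex hexagon with `p` and `q`, which is not
empty. -/
theorem Lay.four_cut (hL : Lay X C) {p q : Pt} (hp : p ∈ X) (hq : q ∈ X)
    (hc : 4 ≤ (cut X C p q).card) : ∃ z ∈ C, z ≠ p ∧ z ≠ q ∧ L q p z := by
  obtain ⟨a, ha, b, hb, e, he, f, hf, h1, h2, h3⟩ := exists_four_around hL.gp hp (d := q)
    (fun t ht => (mem_cut.1 ht).1) (fun t ht => (mem_cut.1 ht).2.2.r) hc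
  obtain ⟨a1, a2, a3⟩ := mem_cut.1 ha
  obtain ⟨b1, b2, b3⟩ := mem_cut.1 hb
  obtain ⟨e1, e2, e3⟩ := mem_cut.1 he
  obtain ⟨f1, f2, f3⟩ := mem_cut.1 hf
  obtain ⟨z, hz, hin⟩ := hL.hex p hp a a1 b b1 e e1 f f1 q hq
    ⟨a3.r, b3.r, e3.r, f3.r, h1, h2, h3, hL.bulge hp a1 b1 b2 e1 h1 h2,
      hL.bulge hp b1 e1 e2 f1 h2 h3, hL.bulge hp e1 f1 f2 hq h3 f3.r⟩
  exact ⟨z, hz, hin.z12.ne13.symm, hin.z56.ne23.symm, hin.z61⟩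

theorem Lay.cut_add (hL : Lay X C) {p q : Pt} (hp : p ∈ X) (hq : q ∈ X) (hpq : p ≠ q) :
    (((X \ C).erase p).erase q).card ≤ (cut X C p q).card + (cut X C q p).card := by
  classical
  refine le_trans (Finset.card_le_card ?_) (Finset.card_union_le _ _)
  intro h hh
  rw [Finset.mem_erase, Finset.mem_erase, Finset.mem_sdiff] at hh
  obtain ⟨n1, n2, h1, h2⟩ := hh
  rw [Finset.mem_union, mem_cut, mem_cut]
  rcases hL.gp.cyc hp hq h1 hpq n1.symm n2.symm with g | g
  · exact Or.inr ⟨h1, h2, g⟩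
  · exact Or.inl ⟨h1, h2, g⟩

theorem Lay.card_out (hL : Lay X C) (hv : Hull X n v) : (X \ C).card = n := by
  rw [hL.eq_core hv, hv.card]

theorem Lay.three_le (hL : Lay X C) (hv : Hull X n v) (hn : 8 ≤ n) : 3 ≤ C.card := by
  classical
  have hcard := hL.card_out hv
  by_contra hcon
  have h0 : 0 < C.card := Finset.card_pos.2 (hL.core_nonempty hv (by omega))
  rcases (show C.card = 1 ∨ C.card = 2 by omega) with h | h
  · obtain ⟨c, rfl⟩ := Finset.card_eq_one.1 h
    have hc := hL.sub (Finset.mem_singleton_self c)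
    have hne : v 0 ≠ c := by
      have := hL.eq_core hv
      have h1 : c ∈ core X v := by rw [← this]; simp
      exact ((mem_core.1 h1).2 0).symm
    have key := hL.cut_add (hv.mem 0) hc hne
    have c1 : c ∉ (X \ {c}).erase (v 0) := by simp
    rw [Finset.erase_eq_of_notMem c1] at key
    have c2 := Finset.pred_card_le_card_erase (s := X \ {c}) (a := v 0)
    rcases (show 4 ≤ (cut X {c} (v 0) c).card ∨ 4 ≤ (cut X {c} c (v 0)).card by omega) with g | g
    · obtain ⟨z, z1, z2, z3, -⟩ := hL.four_cut (hv.mem 0) hc g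
      exact z3 (Finset.mem_singleton.1 z1)
    · obtain ⟨z, z1, z2, z3, -⟩ := hL.four_cut hc (hv.mem 0) g
      exact z2 (Finset.mem_singleton.1 z1)
  · obtain ⟨c, d, hcd, rfl⟩ := Finset.card_eq_two.1 h
    have hc := hL.sub (Finset.mem_insert_self c _)
    have hd : d ∈ X := hL.sub (by simp)
    have key := hL.cut_add hc hd hcd
    rw [Finset.erase_eq_of_notMem (a := c) (by simp), Finset.erase_eq_of_notMem (by simp)] at key
    rcases (show 4 ≤ (cut X {c, d} c d).card ∨ 4 ≤ (cut X {c, d} d c).card by omega) with g | g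
    · obtain ⟨z, z1, z2, z3, -⟩ := hL.four_cut hc hd g
      simp at z1; tauto
    · obtain ⟨z, z1, z2, z3, -⟩ := hL.four_cut hd hc g
      simp at z1; tauto

open Classical in
/-- The outer points which see exactly one edge of the polygon `w`, the edge `k`. -/
noncomputable def exc (X C : Finset Pt) (n : ℕ) (w : ℤ → Pt) (k : ℤ) : Finset Pt :=
  (X \ C).filter fun h => Vis n w h k (k + 1)

theorem mem_exc {k : ℤ} {h : Pt} : h ∈ exc X C n w k ↔ h ∈ X ∧ h ∉ C ∧ Vis n w h k (k + 1) := by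
  classical
  unfold exc; rw [Finset.mem_filter, Finset.mem_sdiff, and_assoc]

open Classical in
/-- Double counting of pairs of an outer point and an edge seen from it: each edge is seen from at
most three outer points, and an outer point not counted in `exc` sees at least two edges. -/
theorem Lay.exc_count (hL : Lay X C) (hw : Hull C n w) :
    2 * (X \ C).card ≤ 3 * n + ((Finset.range n).biUnion fun k : ℕ => exc X C n w k).card := by
  have hn := hw.npos
  set E := (Finset.range n).biUnion fun k : ℕ => exc X C n w k with hE
  have hEs : E ⊆ X \ C := by
    intro h hh
    obtain ⟨k, -, hk⟩ := Finset.mem_biUnion.1 hh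
    obtain ⟨a, b, -⟩ := mem_exc.1 hk
    exact Finset.mem_sdiff.2 ⟨a, b⟩
  let r : Pt → ℕ → Prop := fun h k => L (w (k + 1)) (w k) h
  have h1 : ∑ h ∈ X \ C, ((Finset.range n).filter (r h)).card
      = ∑ k ∈ Finset.range n, (cut X C (w k) (w (k + 1))).card :=
    Finset.sum_card_bipartiteAbove_eq_sum_card_bipartiteBelow r
  have h2 : ∑ k ∈ Finset.range n, (cut X C (w k) (w (k + 1))).card ≤ 3 * n := by
    have := Finset.sum_le_card_nsmul (Finset.range n)
      (fun k : ℕ => (cut X C (w k) (w (k + 1))).card) 3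
      (fun k _ => hL.cut_le (hw.mem _) (hw.mem _) (hw.ed k))
    simp at this
    linarith
  have h3 : ∀ h ∈ X \ C, 2 ≤ ((Finset.range n).filter (r h)).card + if h ∈ E then 1 else 0 := by
    intro h hh
    obtain ⟨a, b⟩ := Finset.mem_sdiff.1 hh
    obtain ⟨x, y, v1, v2, v3, v4⟩ := hL.vis hw a b
    obtain ⟨x0, y0, hv, x1, x2⟩ : ∃ x y, Vis n w h x y ∧ 0 ≤ x ∧ x < n := by
      refine ⟨_, _, Vis.shift hw.per ⟨v1, v2, v3, v4⟩ (-(x / n)), ?_, ?_⟩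
      · have := Int.emod_nonneg x (show (n : ℤ) ≠ 0 by omega)
        rw [Int.emod_def] at this; linarith [mul_comm (n : ℤ) (x / n)]
      · have := Int.emod_lt_of_pos x (show (0 : ℤ) < n by omega)
        rw [Int.emod_def] at this; linarith [mul_comm (n : ℤ) (x / n)]
    lift x0 to ℕ using x1
    have m0 : x0 ∈ (Finset.range n).filter (r h) :=
      Finset.mem_filter.2 ⟨Finset.mem_range.2 (by omega), hv.see _ le_rfl hv.lt⟩
    by_cases hy : y0 = x0 + 1
    · subst hy
      rw [if_pos]
      · have := Finset.card_pos.2 ⟨_, m0⟩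
        omega
      · exact Finset.mem_biUnion.2 ⟨x0, Finset.mem_range.2 (by omega), mem_exc.2 ⟨a, b, hv⟩⟩
    · have hlt := hv.lt
      obtain ⟨x1, m1, hne⟩ : ∃ x1, x1 ∈ (Finset.range n).filter (r h) ∧ x0 ≠ x1 := by
        by_cases e : x0 + 1 = n
        · refine ⟨0, Finset.mem_filter.2 ⟨Finset.mem_range.2 (by omega), ?_⟩, by omega⟩
          have := hv.see (x0 + 1) (by omega) (by omega)
          have e1 : ((x0 : ℤ) + 1) = 0 + n := by omega
          rw [show (x0 : ℤ) + 1 + 1 = 0 + 1 + n by omega, e1, hw.per, hw.per] at this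
          exact_mod_cast this
        · refine ⟨x0 + 1, Finset.mem_filter.2 ⟨Finset.mem_range.2 (by omega), ?_⟩, by omega⟩
          have := hv.see (x0 + 1) (by omega) (by omega)
          show L _ _ _
          push_cast
          exact this
      have := Finset.one_lt_card.2 ⟨x0, m0, x1, m1, hne⟩
      omega
  have h4 := Finset.sum_le_sum h3
  rw [Finset.sum_add_distrib, h1, Finset.sum_ite_mem, Finset.inter_eq_right.2 hEs] at h4
  simp at h4
  omega

/-- Inside a polygon with at least eight vertices there are at least two further layers. -/
theorem Lay.core_core (hL : Lay X C) (hv : Hull X N v) (hN : 8 ≤ N) (hw : Hull C n w) :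
    (core C w).Nonempty := by
  classical
  by_contra hemp
  rw [Finset.not_nonempty_iff_eq_empty] at hemp
  have hn := hw.n3
  have hcyc : ∀ z ∈ C, ∀ k : ℤ, ∃ s, k ≤ s ∧ s < k + n ∧ z = w s := by
    intro z hz k
    have : ∃ m, z = w m := by
      by_contra hcon
      push Not at hcon
      have : z ∈ core C w := mem_core.2 ⟨hz, hcon⟩
      rw [hemp] at this
      simp at this
    obtain ⟨m, rfl⟩ := this
    have e1 := Int.emod_nonneg (m - k) (show (n : ℤ) ≠ 0 by omega)
    have e2 := Int.emod_lt_of_pos (m - k) (show (0 : ℤ) < n by omega)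
    refine ⟨k + (m - k) % n, by omega, by omega, ?_⟩
    refine (congrArg w ?_).trans (hw.perm _ ((m - k) / n))
    rw [Int.emod_def]; ring
  by_cases hn6 : 6 ≤ n
  · have := (hL.nest hw).core_nonempty hw hn6
    rw [hemp] at this
    simp at this
  have hcount := hL.exc_count hw
  rw [hL.card_out hv] at hcount
  set E := (Finset.range n).biUnion fun k : ℕ => exc X C n w k with hE
  have wX : ∀ k, w k ∈ X := fun k => hL.sub (hw.mem k)
  have last : ∀ k h, Vis n w h k (k + 1) → L (w k) h (w (k + n - 1)) := by
    intro k h hh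
    have := hh.nsee (k + n - 1) (by omega) (by omega)
    rw [show k + n - 1 + 1 = k + n by ring, hw.per] at this
    exact this.r
  have fst : ∀ k h, Vis n w h k (k + 1) → L (w k) h (w (k + 1)) :=
    fun k h hh => (hh.see k le_rfl (by omega)).r
  have nxt : ∀ k h, Vis n w h k (k + 1) → L h (w (k + 1)) (w (k + 2)) := by
    intro k h hh
    have := (hh.nsee (k + 1) le_rfl (by omega)).rr
    rwa [show k + 1 + 1 = k + 2 by ring] at this
  rcases (show n = 3 ∨ n = 4 ∨ n = 5 by omega) with e | e | e
  · subst e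
    have key : ∀ k, (exc X C 3 w k).card ≤ 2 := by
      intro k
      by_contra hcon
      push Not at hcon
      obtain ⟨a, ha, b, hb, d, hd, l1, l2⟩ := exists_three_around hL.gp (wX k) (d := w (k + 1))
        (fun t ht => (mem_exc.1 ht).1) (fun t ht => fst _ _ (mem_exc.1 ht).2.2) hcon
      obtain ⟨a1, a2, a3⟩ := mem_exc.1 ha
      obtain ⟨b1, b2, b3⟩ := mem_exc.1 hb
      obtain ⟨d1, d2, d3⟩ := mem_exc.1 hd
      have e : k + ((3 : ℕ) : ℤ) - 1 = k + 2 := by push_cast; ring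
      have la := last _ _ a3
      have lb := last _ _ b3
      have ld := last _ _ d3
      rw [e] at la lb ld
      obtain ⟨z, hz, hin⟩ := hL.hex _ (wX k) a a1 b b1 d d1 _ (wX (k + 1)) _ (wX (k + 2))
        ⟨la, lb, ld, hw.conv _ _ _ (by omega) (by omega) (by push_cast; omega), l1, l2,
          fst _ _ d3, hL.bulge (wX k) a1 b1 b2 d1 l1 l2,
          hL.bulge (wX k) b1 d1 d2 (wX _) l2 (fst _ _ d3), nxt _ _ d3⟩
      obtain ⟨s, s1, s2, rfl⟩ := hcyc z hz k
      rcases (show s = k ∨ s = k + 1 ∨ s = k + 2 by push_cast at s2; omega) with rfl | rfl | rfl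
      · exact hin.z12.ne13 rfl
      · exact hin.z56.ne13 rfl
      · exact hin.z56.ne23 rfl
    have hEc : E.card ≤ ∑ k ∈ Finset.range 3, (exc X C 3 w k).card := Finset.card_biUnion_le
    simp [Finset.sum_range_succ] at hEc
    have := key 0; have := key 1; have := key 2
    omega
  · subst e
    have e : ∀ k : ℤ, k + ((4 : ℕ) : ℤ) - 1 = k + 3 := by intro k; push_cast; ring
    have key : ∀ k h h', h ∈ exc X C 4 w k → h' ∈ exc X C 4 w k → L (w k) h h' → False := by
      intro k a b ha hb l1
      obtain ⟨a1, a2, a3⟩ := mem_exc.1 ha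
      obtain ⟨b1, b2, b3⟩ := mem_exc.1 hb
      have la := last _ _ a3
      have lb := last _ _ b3
      rw [e] at la lb
      obtain ⟨z, hz, hin⟩ := hL.hex _ (wX k) a a1 b b1 _ (wX (k + 1)) _ (wX (k + 2)) _ (wX (k + 3))
        ⟨la, lb, hw.conv _ _ _ (by omega) (by omega) (by push_cast; omega),
          hw.conv _ _ _ (by omega) (by omega) (by push_cast; omega), l1, fst _ _ b3,
          hw.conv _ _ _ (by omega) (by omega) (by push_cast; omega),
          hL.bulge (wX k) a1 b1 b2 (wX _) l1 (fst _ _ b3), nxt _ _ b3,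
          hw.conv _ _ _ (by omega) (by omega) (by push_cast; omega)⟩
      obtain ⟨s, s1, s2, rfl⟩ := hcyc z hz k
      rcases (show s = k ∨ s = k + 1 ∨ s = k + 2 ∨ s = k + 3 by push_cast at s2; omega) with
        rfl | rfl | rfl | rfl
      · exact hin.z12.ne13 rfl
      · exact hin.z45.ne13 rfl
      · exact hin.z56.ne13 rfl
      · exact hin.z56.ne23 rfl
    have key1 : ∀ k h h', h ∈ exc X C 4 w k → h' ∈ exc X C 4 w k → h = h' := by
      intro k h h' hh hh'
      by_contra hne
      obtain ⟨a1, a2, a3⟩ := mem_exc.1 hh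
      obtain ⟨b1, b2, b3⟩ := mem_exc.1 hh'
      rcases hL.gp.cyc (wX k) a1 b1 (fst _ _ a3).ne12 hne (fst _ _ b3).ne12 with g | g
      · exact key k h h' hh hh' g
      · exact key k h' h hh' hh g.r
    have key2 : ∀ k h h', h ∈ exc X C 4 w k → h' ∈ exc X C 4 w (k + 2) → False := by
      intro k a b ha hb
      obtain ⟨a1, a2, a3⟩ := mem_exc.1 ha
      obtain ⟨b1, b2, b3⟩ := mem_exc.1 hb
      have la := last _ _ a3
      rw [e] at la
      have t1 := b3.nsee (k + 2 + 1) (by omega) (by push_cast; omega)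
      rw [show k + 2 + 1 + 1 = k + (4 : ℕ) by push_cast; ring, hw.per,
        show k + 2 + 1 = k + 3 by ring] at t1
      have t2 := b3.nsee (k + 2 + 3) (by omega) (by push_cast; omega)
      rw [show k + 2 + 3 + 1 = k + 2 + (4 : ℕ) by push_cast; ring, hw.per,
        show k + 2 + 3 = k + 1 + (4 : ℕ) by push_cast; ring, hw.per] at t2
      have t3 := b3.see _ le_rfl (by omega)
      have t4 := hw.startL (k := k + 2) (by rwa [show k + 2 - 1 = k + 1 by ring]) t3 (hw.mem k)
        (hw.ne (by omega) (by push_cast; omega))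
      rw [show k + 2 + 1 = k + 3 by ring] at t3
      obtain ⟨z, hz, hin⟩ := hL.hex _ (wX k) a a1 _ (wX (k + 1)) _ (wX (k + 2)) b b1 _ (wX (k + 3))
        ⟨la, hw.conv _ _ _ (by omega) (by omega) (by push_cast; omega),
          hw.conv _ _ _ (by omega) (by omega) (by push_cast; omega), t1.r, fst _ _ a3,
          hw.conv _ _ _ (by omega) (by omega) (by push_cast; omega), t4.rr,
          nxt _ _ a3, t2, t3.r⟩
      obtain ⟨s, s1, s2, rfl⟩ := hcyc z hz k
      rcases (show s = k ∨ s = k + 1 ∨ s = k + 2 ∨ s = k + 3 by push_cast at s2; omega) with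
        rfl | rfl | rfl | rfl
      · exact hin.z12.ne13 rfl
      · exact hin.z34.ne13 rfl
      · exact hin.z34.ne23 rfl
      · exact hin.z61.ne13 rfl
    have two : ∀ k, (exc X C 4 w k).card + (exc X C 4 w (k + 2)).card ≤ 1 := by
      intro k
      have c1 : ∀ k, (exc X C 4 w k).card ≤ 1 := fun k => Finset.card_le_one.2 fun a ha b hb =>
        key1 k a b ha hb
      rcases Finset.eq_empty_or_nonempty (exc X C 4 w k) with g | ⟨a, ha⟩
      · rw [g]; have := c1 (k + 2); simpa
      · have : exc X C 4 w (k + 2) = ∅ := by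
          rw [Finset.eq_empty_iff_forall_notMem]
          exact fun b hb => key2 k a b ha hb
        rw [this]; have := c1 k; simpa
    have hEc : E.card ≤ ∑ k ∈ Finset.range 4, (exc X C 4 w k).card := Finset.card_biUnion_le
    simp [Finset.sum_range_succ] at hEc
    have h0 := two 0; have h1 := two 1
    norm_num at h0 h1
    omega
  · subst e
    have hpos : E.Nonempty := by rw [← Finset.card_pos]; omega
    obtain ⟨h, hh⟩ := hpos
    obtain ⟨k', -, hk⟩ := Finset.mem_biUnion.1 hh
    obtain ⟨a1, a2, a3⟩ := mem_exc.1 hk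
    generalize (k' : ℤ) = k at a3
    have la := last _ _ a3
    rw [show k + ((5 : ℕ) : ℤ) - 1 = k + 4 by push_cast; ring] at la
    obtain ⟨z, hz, hin⟩ := hL.hex _ (wX k) h a1 _ (wX (k + 1)) _ (wX (k + 2)) _ (wX (k + 3)) _
      (wX (k + 4))
      ⟨la, hw.conv _ _ _ (by omega) (by omega) (by push_cast; omega),
        hw.conv _ _ _ (by omega) (by omega) (by push_cast; omega),
        hw.conv _ _ _ (by omega) (by omega) (by push_cast; omega), fst _ _ a3,
        hw.conv _ _ _ (by omega) (by omega) (by push_cast; omega),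
        hw.conv _ _ _ (by omega) (by omega) (by push_cast; omega), nxt _ _ a3,
        hw.conv _ _ _ (by omega) (by omega) (by push_cast; omega),
        hw.conv _ _ _ (by omega) (by omega) (by push_cast; omega)⟩
    obtain ⟨s, s1, s2, rfl⟩ := hcyc z hz k
    rcases (show s = k ∨ s = k + 1 ∨ s = k + 2 ∨ s = k + 3 ∨ s = k + 4 by
      push_cast at s2; omega) with rfl | rfl | rfl | rfl | rfl
    · exact hin.z12.ne13 rfl
    · exact hin.z34.ne13 rfl
    · exact hin.z45.ne13 rfl
    · exact hin.z56.ne13 rfl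
    · exact hin.z56.ne23 rfl

end

/-! ### At most two points inside the second polygon -/

section
variable {X D Q : Finset Pt} {i : ℕ} {a : ℤ → Pt} {c p q t h : Pt} {k z x y : ℤ}

theorem Cfg.exists_ctx (hC : Cfg X D) : ∃ i a Q, Ctx X D Q i a ∧ Q.Nonempty := by
  have h9 : 3 ≤ X.card := by
    have := hC.card9
    have := Finset.card_le_card (Finset.sdiff_subset (s := X) (t := D))
    omega
  obtain ⟨n, v, hv⟩ := exists_hull hC.gp h9
  have hn : 8 ≤ n := by rw [← hC.card_out hv, hC.card9]; norm_num
  have h3 := hC.three_le hv hn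
  obtain ⟨i, a, ha⟩ := exists_hull (hC.gp.mono hC.sub) h3
  exact ⟨i, a, core D a, ⟨hC, ha, hC.nest ha⟩, hC.core_core hv hn ha⟩

namespace Ctx

theorem i_le (T : Ctx X D Q i a) : i ≤ 8 := T.cfg.le8 (Finset.Subset.refl D) T.hull

/-- At most three consecutive vertices of the polygon are visible through an edge `p q`. -/
theorem T5 (T : Ctx X D Q i a) (hp : p ∈ Q) (hq : q ∈ Q)
    (hed : ∀ w ∈ Q, w ≠ p → w ≠ q → L p q w) (hy : y < x + i)
    (h : ∀ k, x ≤ k → k ≤ y → L q p (a k)) : y ≤ x + 2 := by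
  classical
  by_contra hcon
  push Not at hcon
  have h1 := T.lay.cut_le hp hq hed
  have hs : ({a x, a (x + 1), a (x + 2), a (x + 3)} : Finset Pt) ⊆ cut D Q p q := by
    intro w hw
    simp only [Finset.mem_insert, Finset.mem_singleton] at hw
    rcases hw with rfl | rfl | rfl | rfl <;>
      exact mem_cut.2 ⟨T.aD _, T.aQ _, h _ (by omega) (by omega)⟩
  have h2 := Finset.card_le_card hs
  have ne : ∀ k l : ℤ, k < l → l < k + i → a k ≠ a l := fun k l h1 h2 => T.hull.ne h1 h2
  rw [Finset.card_insert_of_notMem, Finset.card_insert_of_notMem, Finset.card_insert_of_notMem,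
    Finset.card_singleton] at h2
  · omega
  · simp only [Finset.mem_singleton]
    exact ne _ _ (by omega) (by omega)
  · simp only [Finset.mem_insert, Finset.mem_singleton, not_or]
    exact ⟨ne _ _ (by omega) (by omega), ne _ _ (by omega) (by omega)⟩
  · simp only [Finset.mem_insert, Finset.mem_singleton, not_or]
    exact ⟨ne _ _ (by omega) (by omega), ne _ _ (by omega) (by omega), ne _ _ (by omega) (by omega)⟩

/-- The apex moves along an edge `p q` while the target stays visible through this edge. -/
theorem block (T : Ctx X D Q i a) (hp : p ∈ Q) (hq : q ∈ Q)
    (hed : ∀ w ∈ Q, w ≠ p → w ≠ q → L p q w) (hxy : x ≤ y) (hy : y < x + i)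
    (h : ∀ k, x ≤ k → k ≤ y → L q p (a k)) : ((Fl X D i a p x q y).card : ℤ) ≤ y - x := by
  have h5 := T.T5 hp hq hed hy h
  have h0 := h x le_rfl hxy
  rcases (show y = x ∨ y = x + 1 ∨ y = x + 1 + 1 by omega) with rfl | rfl | rfl
  · have : Fl X D i a p y q y = ∅ := by
      rw [Finset.eq_empty_iff_forall_notMem]
      exact fun b hb => T.Fl_move hp hq h0 hb
    rw [this]; simp
  · have := T.block1 hp hq hed h0 (h _ hxy le_rfl)
    omega
  · have := T.block2 hp hq hed h0 (h _ (by omega) (by omega)) (h _ hxy le_rfl)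
    omega

/-- In a turn around the segment `p q`, the ray passes at most two outer points along each side and
at most two at each end. -/
theorem two_points (T : Ctx X D {p, q} i a) (hpq : p ≠ q) : False := by
  have hp : p ∈ ({p, q} : Finset Pt) := by simp
  have hq : q ∈ ({p, q} : Finset Pt) := by simp
  obtain ⟨x, y, h1, h2, h3, h4⟩ := T.lay.visLine T.hull hp hq hpq
  have e1 : ∀ w ∈ ({p, q} : Finset Pt), w ≠ p → w ≠ q → L p q w := by
    intro w hw n1 n2; simp at hw; tauto
  have e2 : ∀ w ∈ ({p, q} : Finset Pt), w ≠ q → w ≠ p → L q p w := by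
    intro w hw n1 n2; simp at hw; tauto
  have b1 := T.T5 hp hq e1 (by omega) h3
  have b2 := T.T5 hq hp e2 (x := y + 1) (y := x + i - 1) (by omega)
    (fun k g1 g2 => h4 k (by omega) (by omega))
  have c1 := T.block hp hq e1 h1 (by omega) h3
  have c2 := T.block hq hp e2 (x := y + 1) (y := x + i - 1) (by omega) (by omega)
    (fun k g1 g2 => h4 k (by omega) (by omega))
  have f1 := T.F1 hq (k := y) (fun z hz g1 g2 => by
    simp at hz
    rcases hz with rfl | rfl
    · exact g1.not_swap' (h3 y h1 le_rfl)
    · exact g1.ne13 rfl)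
  have f2 := T.F1 hp (k := x + i - 1) (fun z hz g1 g2 => by
    simp at hz
    rcases hz with rfl | rfl
    · exact g1.ne13 rfl
    · rw [show x + i - 1 + 1 = x + i by ring, T.hull.per] at g2
      exact g2.not_swap' (h3 x le_rfl h1).rr)
  have r := T.Fl_round hp x
  have s1 := Fl_tri (X := X) (D := D) (i := i) (a := a) (c := p) (k := x) (c'' := p)
    (k'' := x + i) q y
  have s2 := Fl_tri (X := X) (D := D) (i := i) (a := a) (c := q) (k := y) (c'' := p)
    (k'' := x + i) q (y + 1)
  have s3 := Fl_tri (X := X) (D := D) (i := i) (a := a) (c := q) (k := y + 1) (c'' := p)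
    (k'' := x + i) p (x + i - 1)
  rw [sub_add_cancel] at f2
  omega

theorem chord (T : Ctx X D Q i a) (hq : q ∈ Q) {k l m : ℤ} (h1 : k < l) (h2 : l < m)
    (h3 : m < k + i) (h : L q (a k) (a m)) : L q (a k) (a l) ∧ L q (a l) (a m) := by
  have cv := T.hull.conv k l m h1 h2 h3
  have hi := T.hull.npos
  constructor
  · by_contra hn
    have := T.cfg.gp.not (T.QX hq) (T.aX k) (T.aX l) (T.Qa hq k) cv.ne12 (T.Qa hq l) hn
    exact cv.not_swap (T.lay.bulge (T.QD hq) (T.aD l) (T.aD k) (T.aQ k) (T.aD m) this.r h)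
  · by_contra hn
    have := T.cfg.gp.not (T.QX hq) (T.aX l) (T.aX m) (T.Qa hq l) cv.ne23 (T.Qa hq m) hn
    exact cv.not_swap' (T.lay.bulge (T.QD hq) (T.aD k) (T.aD m) (T.aQ m) (T.aD l) h this.r)

theorem one_F1 (T : Ctx X D {q} i a) (k : ℤ) : (Fl X D i a q k q (k + 1)).card ≤ 2 :=
  T.F1 (Finset.mem_singleton_self q)
    (fun _ hz g1 _ => g1.ne13 (Finset.mem_singleton.1 hz).symm)

theorem one_le (T : Ctx X D {q} i a) (k : ℤ) (m : ℕ) : (Fl X D i a q k q (k + m)).card ≤ 2 * m := by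
  have hq := Finset.mem_singleton_self q
  induction m with
  | zero =>
    have : Fl X D i a q k q (k + (0 : ℕ)) = ∅ := by
      rw [Finset.eq_empty_iff_forall_notMem]
      intro h hh
      obtain ⟨-, -, x, y, -, h1, h2⟩ := mem_Fl.1 hh
      simp at h2
      exact h2 h1
    rw [this]; simp
  | succ m ih =>
    have := Fl_tri (X := X) (D := D) (i := i) (a := a) (c := q) (k := k) (c'' := q)
      (k'' := k + (m + 1 : ℕ)) q (k + m)
    have := T.one_F1 (k + m)
    rw [show k + ((m + 1 : ℕ) : ℤ) = k + m + 1 by push_cast; ring] at *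
    omega

/-- If the three steps span less than half a turn, then the outer points passed are all cut off by
the middle edge. -/
theorem one_W (T : Ctx X D {q} i a) (hi : 4 ≤ i) (hW : L q (a k) (a (k + 3))) :
    (Fl X D i a q k q (k + 3)).card ≤ 3 := by
  have hq := Finset.mem_singleton_self q
  refine le_trans (Finset.card_le_card ?_) (T.Tk_le (k + 1))
  intro h hh
  obtain ⟨hX, hD, -⟩ := mem_Fl.1 hh
  have qX := T.QX hq
  have ch1 := T.chord hq (k := k) (l := k + 1) (m := k + 3) (by omega) (by omega) (by omega) hW
  have ch2 := T.chord hq (k := k) (l := k + 2) (m := k + 3) (by omega) (by omega) (by omega) hW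
  have cv := T.hull.conv (k + 1) (k + 2) (k + 3) (by omega) (by omega) (by omega)
  have cv' := T.hull.conv k (k + 1) (k + 2) (by omega) (by omega) (by omega)
  have ed1 := T.edQ hq (k + 1)
  rw [show k + 1 + 1 = k + 2 by ring] at *
  rw [mem_cut]
  refine ⟨hX, hD, ?_⟩
  by_contra hn
  have hn' := T.cfg.gp.not (T.aX _) (T.aX _) hX (T.hull.ne (by omega) (by omega)).symm
    (fun e => hD (e ▸ T.aD _)) (fun e => hD (e ▸ T.aD _)) hn
  have bad : ∀ w ∈ D, L q (a k) w → L (a (k + 3)) q w → w ≠ a (k + 1) → w ≠ a (k + 2) → False := by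
    intro w hw g1 g2 g3 g4
    have e1 := T.hull.ed (k + 1) w hw g3 (by rwa [show k + 1 + 1 = k + 2 by ring])
    have e2 := T.hull.ed (k + 2) w hw g4 (by rw [show k + 2 + 1 = k + 3 by ring]; exact g2.ne13.symm)
    rw [show k + 1 + 1 = k + 2 by ring] at e1
    rw [show k + 2 + 1 = k + 3 by ring] at e2
    exact T.lay.noPent (T.QD hq) (T.aD k) (T.aD (k + 1)) (T.aD (k + 2)) (T.aD (k + 3)) hw
      (fun e => g1.ne13 (Finset.mem_singleton.1 e).symm) g1 (T.hull.ed k w hw g1.ne23.symm g3)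
      e1 e2 g2
  rcases mem_Fl_tri q (k + 1) hh with g | g
  · obtain ⟨s1, s2, s3⟩ := T.Fl_step hq hq g
    obtain ⟨w, hw, hin⟩ := T.cfg.hex q qX (a k) (T.aX _) h hX (a (k + 1)) (T.aX _) (a (k + 2))
      (T.aX _) (a (k + 3)) (T.aX _)
      ⟨hW, L.transFirst s3.r ch1.2 s2 ch1.1 hW, ch1.2, ch2.2, s2, s3.r, ed1.rr, s1.r, hn'.rr, cv⟩
    exact bad w hw hin.z12 hin.z61 hin.z34.ne23.symm hin.z45.ne23.symm
  rcases mem_Fl_tri q (k + 2) g with g | g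
  · rw [show k + 2 = k + 1 + 1 by ring] at g hn
    exact hn (T.Fl_step hq hq g).1
  · rw [show k + 3 = k + 2 + 1 by ring] at g
    obtain ⟨s1, s2, s3⟩ := T.Fl_step hq hq g
    rw [show k + 2 + 1 = k + 3 by ring] at s1 s3
    obtain ⟨w, hw, hin⟩ := T.cfg.hex q qX (a k) (T.aX _) (a (k + 1)) (T.aX _) (a (k + 2))
      (T.aX _) h hX (a (k + 3)) (T.aX _)
      ⟨hW, ch1.2, ch2.2, s3.r, ch1.1, ed1.rr, s2, cv', hn', s1.r⟩
    exact bad w hw hin.z12 hin.z61 hin.z23.ne23.symm hin.z34.ne23.symm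

theorem one_not (T : Ctx X D {q} i a) {k l : ℤ} (h1 : k < l) (h2 : l < k + i)
    (h : ¬ L q (a k) (a l)) : L q (a l) (a (k + i)) := by
  have hq := Finset.mem_singleton_self q
  rw [T.hull.per]
  exact (T.cfg.gp.not (T.QX hq) (T.aX k) (T.aX l) (T.Qa hq k) (T.hull.ne h1 h2) (T.Qa hq l) h).r

theorem one_tri (_ : Ctx X D {q} i a) (k l m : ℤ) :
    (Fl X D i a q k q m).card ≤ (Fl X D i a q k q l).card + (Fl X D i a q l q m).card := Fl_tri q l

/-- The case of a pentagon with one point inside: three consecutive angles contain two outer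
points each, four of which are beyond the middle edge. -/
theorem one_five (T : Ctx X D {q} 5 a) (h2 : ∀ m, L q (a m) (a (m + 1 + 1)))
    (g1 : 2 ≤ (Fl X D 5 a q k q (k + 1)).card)
    (g2 : 2 ≤ (Fl X D 5 a q (k + 1) q (k + 1 + 1)).card)
    (g3 : 2 ≤ (Fl X D 5 a q (k + 1 + 1) q (k + 1 + 1 + 1)).card) : False := by
  classical
  have hq := Finset.mem_singleton_self q
  have qX := T.QX hq
  have neT : ∀ l, ∀ h ∈ X, h ∉ D → ¬ L (a (l + 1)) (a l) h → L (a l) (a (l + 1)) h :=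
    fun l h hX hD hn => T.cfg.gp.not (T.aX _) (T.aX _) hX (T.hull.ne_succ l).symm
      (fun e => hD (e ▸ T.aD _)) (fun e => hD (e ▸ T.aD _)) hn
  have bad : ∀ k, ∀ w ∈ D, L q (a k) w → L (a (k + 1 + 1)) q w → w ≠ a (k + 1) → False := by
    intro k w hw g1 g2 g3
    exact T.lay.noQuad (T.QD hq) (T.aD k) (T.aD (k + 1)) (T.aD (k + 1 + 1)) hw
      (fun e => g1.ne13 (Finset.mem_singleton.1 e).symm) g1 (T.hull.ed k w hw g1.ne23.symm g3)
      (T.hull.ed (k + 1) w hw g3 g2.ne13.symm) g2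
  obtain ⟨h, mh, h', mh', l1⟩ := exists_two_around T.cfg.gp qX
    (d := a (k + 1)) T.Fl_sub (fun t ht => (T.Fl_step hq hq ht).2.2.r) g1
  obtain ⟨u, mu, u', mu', l2⟩ := exists_two_around T.cfg.gp qX
    (d := a (k + 1 + 1 + 1)) T.Fl_sub (fun t ht => (T.Fl_step hq hq ht).2.2.r) g3
  obtain ⟨hX, hD, -⟩ := mem_Fl.1 mh
  obtain ⟨hX', hD', -⟩ := mem_Fl.1 mh'
  obtain ⟨uX, uD, -⟩ := mem_Fl.1 mu
  obtain ⟨uX', uD', -⟩ := mem_Fl.1 mu'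
  obtain ⟨s1, s2, s3⟩ := T.Fl_step hq hq mh
  obtain ⟨s1', s2', s3'⟩ := T.Fl_step hq hq mh'
  obtain ⟨t1, t2, t3⟩ := T.Fl_step hq hq mu
  obtain ⟨t1', t2', t3'⟩ := T.Fl_step hq hq mu'
  have e0 := (T.edQ hq k).rr
  have e1 := (T.edQ hq (k + 1)).rr
  have c1 : L (a (k + 1 + 1)) (a (k + 1)) h' := by
    by_contra hn
    have hn' := neT _ _ hX' hD' hn
    obtain ⟨w, hw, hin⟩ := T.cfg.hex q qX (a k) (T.aX _) h hX h' hX' (a (k + 1)) (T.aX _)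
      (a (k + 1 + 1)) (T.aX _)
      ⟨h2 k, L.transFirst s3.r e1 s2 e0 (h2 k), L.transFirst s3'.r e1 s2' e0 (h2 k), e1, s2, l1,
        s3'.r, T.cfg.bulge qX (T.aX k) hX hD hX' s2 l1,
        T.cfg.bulge qX hX hX' hD' (T.aX _) l1 s3'.r, hn'.rr⟩
    exact bad k w hw hin.z12 hin.z61 hin.z45.ne23.symm
  have c2 : L (a (k + 1 + 1)) (a (k + 1)) u := by
    by_contra hn
    have hn' := neT _ _ uX uD hn
    obtain ⟨w, hw, hin⟩ := T.cfg.hex q qX (a (k + 1)) (T.aX _) (a (k + 1 + 1)) (T.aX _) u uX u' uX'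
      (a (k + 1 + 1 + 1)) (T.aX _)
      ⟨h2 _, (T.edQ hq _).rr, t3.r, t3'.r, e1, t2, l2, hn',
        T.cfg.bulge qX (T.aX _) uX uD uX' t2 l2, T.cfg.bulge qX uX uX' uD' (T.aX _) l2 t3'.r⟩
    exact bad _ w hw hin.z12 hin.z61 hin.z23.ne23.symm
  have hs : insert h' (insert u (Fl X D 5 a q (k + 1) q (k + 1 + 1))) ⊆
      cut X D (a (k + 1)) (a (k + 1 + 1)) := by
    intro w hw
    simp only [Finset.mem_insert] at hw
    rcases hw with rfl | rfl | hw
    · exact mem_cut.2 ⟨hX', hD', c1⟩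
    · exact mem_cut.2 ⟨uX, uD, c2⟩
    · obtain ⟨w1, w2, -⟩ := mem_Fl.1 hw
      exact mem_cut.2 ⟨w1, w2, (T.Fl_step hq hq hw).1⟩
  have h3 := Finset.card_le_card hs
  have h4 := T.Tk_le (k + 1)
  rw [Finset.card_insert_of_notMem, Finset.card_insert_of_notMem] at h3
  · omega
  · intro hm
    exact (T.Fl_step hq hq hm).2.2.not_swap t2
  · rw [Finset.mem_insert, not_or]
    constructor
    · rintro rfl
      exact (L.transFirst t2 s3'.r (h2 k) s2' e0).not_swap' e1
    · intro hm
      exact absurd s3' (T.Fl_step hq hq hm).2.1.not_swap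

/-- The ray turns around the only point `q`. -/
theorem one_point (T : Ctx X D {q} i a) : False := by
  have hq := Finset.mem_singleton_self q
  have h3 := T.hull.n3
  have h8 := T.i_le
  have rd := T.Fl_round hq
  rcases (show i ≤ 4 ∨ i = 5 ∨ i = 6 ∨ i = 7 ∨ i = 8 by omega) with e | rfl | rfl | rfl | rfl
  · have := T.one_le 0 i
    have := rd 0
    omega
  · have noW : ∀ k, ¬ L q (a k) (a (k + 3)) := by
      intro k hW
      have b1 := T.one_W (by norm_num) hW
      have b2 := T.one_le (k + 3) 2
      have b3 := rd k
      have b4 := T.one_tri k (k + 3) (k + (5 : ℕ))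
      rw [show k + 3 + (2 : ℕ) = k + (5 : ℕ) by push_cast; ring] at b2
      omega
    have h2 : ∀ m, L q (a m) (a (m + 1 + 1)) := by
      intro m
      have := T.one_not (k := m - 3) (l := m) (by omega) (by push_cast; omega)
        (by have := noW (m - 3); rwa [sub_add_cancel] at this)
      rwa [show m - 3 + (5 : ℕ) = m + 1 + 1 by push_cast; ring] at this
    have key : ∀ b, (Fl X D 5 a q b q (b + 1)).card ≤ 1 → False := by
      intro b hb
      have r0 := rd b
      have r1 := T.one_tri b (b + 1) (b + (5 : ℕ))
      have r2 := T.one_tri (b + 1) (b + 1 + 1) (b + (5 : ℕ))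
      have r3 := T.one_tri (b + 1 + 1) (b + 1 + 1 + 1) (b + (5 : ℕ))
      have r4 := T.one_tri (b + 1 + 1 + 1) (b + 1 + 1 + 1 + 1) (b + (5 : ℕ))
      have f1 := T.one_F1 (b + 1)
      have f2 := T.one_F1 (b + 1 + 1)
      have f3 := T.one_F1 (b + 1 + 1 + 1)
      have f4 := T.one_F1 (b + 1 + 1 + 1 + 1)
      rw [show b + 1 + 1 + 1 + 1 + 1 = b + (5 : ℕ) by push_cast; ring] at f4
      exact T.one_five h2 (k := b + 1) (by omega) (by omega) (by omega)
    have key' : ∀ b, 2 ≤ (Fl X D 5 a q b q (b + 1)).card := fun b => by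
      by_contra hn
      exact key b (by omega)
    exact T.one_five h2 (key' 0) (key' _) (key' _)
  · have W1 : ∀ k, L q (a k) (a (k + 3)) → L q (a (k + 1)) (a (k + 1 + 3)) := by
      intro k hW
      by_contra hn
      have hW' := T.one_not (k := k + 1) (l := k + 1 + 3) (by omega) (by push_cast; omega) hn
      have b1 := T.one_W (k := k + 4) (by norm_num) (by
        rw [show k + 1 + 3 = k + 4 by ring, show k + 1 + (6 : ℕ) = k + 4 + 3 by push_cast; ring]
          at hW'
        exact hW')
      have b2 := T.one_F1 (k + 3)
      have b3 := T.one_W (k := k + 6) (by norm_num) (by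
        have e1 := T.hull.per k
        have e2 := T.hull.per (k + 3)
        rw [show k + 6 = k + (6 : ℕ) by push_cast; ring,
          show k + (6 : ℕ) + 3 = k + 3 + (6 : ℕ) by push_cast; ring, e1, e2]
        exact hW)
      have b4 := Finset.card_le_card (T.Fl_mono hq hq (k := k + 6) (l := k + 7)
        (l' := k + 3 + (6 : ℕ)) (k' := k + 3 + (6 : ℕ)) (by omega) le_rfl)
      have b5 := rd (k + 3)
      have b6 := T.one_tri (k + 3) (k + 4) (k + 3 + (6 : ℕ))
      have b7 := T.one_tri (k + 4) (k + 7) (k + 3 + (6 : ℕ))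
      rw [show k + 3 + 1 = k + 4 by ring] at b2
      rw [show k + 4 + 3 = k + 7 by ring] at b1
      rw [show k + 6 + 3 = k + 3 + (6 : ℕ) by push_cast; ring] at b3
      omega
    have W3 : ∀ k, ¬ L q (a k) (a (k + 3)) := by
      intro k hW
      have := W1 _ (W1 _ (W1 _ hW))
      rw [show k + 1 + 1 + 1 = k + 3 by ring, show k + 3 + 3 = k + (6 : ℕ) by push_cast; ring,
        T.hull.per] at this
      exact hW.not_swap' this
    apply W3 3
    have := T.one_not (k := 0) (l := 0 + 3) (by omega) (by norm_num) (W3 0)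
    simpa using this
  · have W : ∀ k, L q (a k) (a (k + 3)) := by
      intro k
      by_contra hn
      have hW := T.one_not (k := k) (l := k + 3) (by omega) (by push_cast; omega) hn
      rw [show k + (7 : ℕ) = k + 7 by push_cast; ring] at hW
      have c1 := T.chord hq (l := k + 4) (by omega) (by omega) (by push_cast; omega) hW
      have c2 := T.chord hq (l := k + 5) (by omega) (by omega) (by push_cast; omega) hW
      have c3 := T.chord hq (l := k + 6) (by omega) (by omega) (by push_cast; omega) hW
      have ed : ∀ l m, m = l + 1 → L q (a l) (a m) := by
        rintro l m rfl; exact (T.edQ hq l).rr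
      have cv : ∀ l, L (a l) (a (l + 1)) (a (l + 2)) := fun l =>
        T.hull.conv _ _ _ (by omega) (by omega) (by push_cast; omega)
      have cv1 := cv (k + 3)
      have cv2 := cv (k + 4)
      have cv3 := cv (k + 5)
      rw [show k + 3 + 1 = k + 4 by ring, show k + 3 + 2 = k + 5 by ring] at cv1
      rw [show k + 4 + 1 = k + 5 by ring, show k + 4 + 2 = k + 6 by ring] at cv2
      rw [show k + 5 + 1 = k + 6 by ring, show k + 5 + 2 = k + 7 by ring] at cv3
      obtain ⟨z, hz, hin⟩ := T.lay.hex q (T.QD hq) _ (T.aD (k + 3)) _ (T.aD (k + 4)) _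
        (T.aD (k + 5)) _ (T.aD (k + 6)) _ (T.aD (k + 7)) ⟨hW, c1.2, c2.2, c3.2, c1.1,
          ed _ _ (by ring), ed _ _ (by ring), cv1, cv2, cv3⟩
      exact hin.z12.ne13 (Finset.mem_singleton.1 hz).symm
    have b1 := T.one_W (by norm_num) (W 0)
    have b2 := T.one_W (by norm_num) (W 3)
    have b3 := T.one_F1 6
    have b4 := rd 0
    have b5 := T.one_tri 0 3 7
    have b6 := T.one_tri 3 6 7
    norm_num at b1 b2 b3 b4
    omega
  · have := T.lay.three_le T.hull le_rfl
    simp at this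

end Ctx
end

/-! ### The vertices of the second polygon seen through the edges of the third -/

/-- Inside the second polygon `a` there is a third polygon `c`, bounding `Q`. -/
structure Ctx3 (X D Q : Finset Pt) (i : ℕ) (a : ℤ → Pt) (j : ℕ) (c : ℤ → Pt) : Prop
    extends Ctx X D Q i a where
  J : Hull Q j c

/-- The vertices `a x, …, a y` are those to the right of the line `c (e - 1) → c e`, modulo `i`. -/
structure Iv (i : ℕ) (a c : ℤ → Pt) (e x y : ℤ) : Prop where
  le : x ≤ y
  lt : y + 1 < x + i
  pos : ∀ k, x ≤ k → k ≤ y → L (c e) (c (e - 1)) (a k)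
  neg : ∀ k, y < k → k < x + i → L (c (e - 1)) (c e) (a k)

/-- A coherent choice of lifts of the intervals of `Iv` to the integers. -/
structure Walk (i : ℕ) (a : ℤ → Pt) (j : ℕ) (c : ℤ → Pt) (x y : ℤ → ℤ) : Prop where
  iv : ∀ e, Iv i a c e (x e) (y e)
  xx : ∀ e, x e ≤ x (e + 1)
  xy : ∀ e, x (e + 1) ≤ y e + 1
  yy : ∀ e, y e ≤ y (e + 1)
  yx : ∀ e, y (e + 1) < x e + i
  px : ∀ e, x (e + j) = x e + i
  py : ∀ e, y (e + j) = y e + i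

section
variable {X D Q : Finset Pt} {i j : ℕ} {a c : ℤ → Pt} {e e' x y k : ℤ}

theorem Iv.shift (per : ∀ k, a (k + i) = a k) (h : Iv i a c e x y) (m : ℤ) :
    Iv i a c e (x + m * i) (y + m * i) := by
  have pr : ∀ k, a (k + (-m) * i) = a k := fun k => per_mul per (-m) k
  refine ⟨by have := h.le; omega, by have := h.lt; omega, ?_, ?_⟩
  · intro k h1 h2
    have := h.pos (k + (-m) * i) (by rw [neg_mul]; omega) (by rw [neg_mul]; omega)
    rwa [pr] at this
  · intro k h1 h2
    have := h.neg (k + (-m) * i) (by rw [neg_mul]; omega) (by rw [neg_mul]; omega)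
    rwa [pr] at this

namespace Ctx3

theorem cQ (T : Ctx3 X D Q i a j c) (e : ℤ) : c e ∈ Q := T.J.mem e

theorem hed (T : Ctx3 X D Q i a j c) (e : ℤ) :
    ∀ w ∈ Q, w ≠ c (e - 1) → w ≠ c e → L (c (e - 1)) (c e) w := by
  have := T.J.ed (e - 1)
  rwa [sub_add_cancel] at this

theorem cne (T : Ctx3 X D Q i a j c) (e : ℤ) : c (e - 1) ≠ c e := by
  have := T.J.ne_succ (e - 1)
  rwa [sub_add_cancel] at this

theorem exists_iv (T : Ctx3 X D Q i a j c) (e k : ℤ) :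
    ∃ x y, Iv i a c e x y ∧ x ≤ k ∧ k < x + i := by
  obtain ⟨x, y, h1, h2, h3, h4⟩ := T.lay.visLine T.hull (T.cQ (e - 1)) (T.cQ e) (T.cne e)
  have hi := T.hull.npos
  refine ⟨_, _, Iv.shift T.hull.per ⟨h1, h2, h3, h4⟩ ((k - x) / i), ?_, ?_⟩
  · have := Int.emod_nonneg (k - x) (show (i : ℤ) ≠ 0 by omega)
    rw [Int.emod_def] at this; linarith [mul_comm (i : ℤ) ((k - x) / i)]
  · have := Int.emod_lt_of_pos (k - x) (show (0 : ℤ) < i by omega)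
    rw [Int.emod_def] at this; linarith [mul_comm (i : ℤ) ((k - x) / i)]

/-- If the interval of vertices visible through an edge ends between `a k` and `a (k + 1)`, then at
least one of these two vertices is visible through the next edge. -/
theorem g1 (T : Ctx3 X D Q i a j c) (h1 : L (c e) (c (e - 1)) (a k))
    (h2 : L (c (e - 1)) (c e) (a (k + 1))) (h3 : L (c e) (c (e + 1)) (a k))
    (h4 : L (c e) (c (e + 1)) (a (k + 1))) : False := by
  have hj := T.J.npos
  have cv := T.J.conv (e - 1) e (e + 1) (by omega) (by omega) (by omega)
  exact (L.transFirst (T.edQ (T.cQ e) k).rr h2.r h3 h4 cv.r).not_swap' h1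

/-- If the interval of vertices visible through an edge begins between `a k` and `a (k + 1)`, then
these two vertices are not both visible through the next edge. -/
theorem g3 (T : Ctx3 X D Q i a j c) (h1 : L (c (e - 1)) (c e) (a k))
    (h2 : L (c e) (c (e - 1)) (a (k + 1))) (h3 : L (c (e + 1)) (c e) (a k))
    (h4 : L (c (e + 1)) (c e) (a (k + 1))) : False := by
  have hj := T.J.npos
  have cv := T.J.conv (e - 1) e (e + 1) (by omega) (by omega) (by omega)
  exact (L.transFirst h2 h4.r h1.r (T.edQ (T.cQ e) k).rr h3.r).not_swap' cv.r

theorem next (T : Ctx3 X D Q i a j c) (h : Iv i a c e x y) :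
    ∃ x' y', Iv i a c (e + 1) x' y' ∧ x ≤ x' ∧ x' ≤ y + 1 ∧ y ≤ y' ∧ y' < x + i := by
  have hle := h.le
  have hlt := h.lt
  have n0 : L (c (e - 1)) (c e) (a (x - 1)) := by
    have := h.neg (x - 1 + i) (by omega) (by omega)
    rwa [T.hull.per] at this
  have n1 : L (c (e - 1)) (c e) (a (x - 1 + i)) := by rwa [T.hull.per]
  have p0 : L (c e) (c (e - 1)) (a (x - 1 + 1)) := h.pos _ (by omega) (by omega)
  have p1 : L (c e) (c (e - 1)) (a (x - 1 + i + 1)) := by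
    rw [show x - 1 + i + 1 = x - 1 + 1 + i by ring, T.hull.per]; exact p0
  by_cases hy : L (c (e + 1)) (c e) (a y)
  · obtain ⟨x', y', hv, h1, h2⟩ := T.exists_iv (e + 1) y
    have hv' := hv
    obtain ⟨v1, v2, v3, v4⟩ := hv
    rw [add_sub_cancel_right] at v3 v4
    have hyy : y ≤ y' := by
      by_contra hn
      exact hy.not_swap (v4 y (by omega) h2)
    refine ⟨x', y', hv', ?_, by omega, hyy, ?_⟩
    · by_contra hn
      exact T.g3 n0 p0 (v3 _ (by omega) (by omega)) (v3 _ (by omega) (by omega))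
    · by_contra hn
      exact T.g3 n1 p1 (v3 _ (by omega) (by omega)) (v3 _ (by omega) (by omega))
  · obtain ⟨x', y', hv, h1, h2⟩ := T.exists_iv (e + 1) (y + 1)
    have hv' := hv
    obtain ⟨v1, v2, v3, v4⟩ := hv
    rw [add_sub_cancel_right] at v3 v4
    have hne := (T.J.ne_succ e).symm
    have hy' := T.cfg.gp.not (T.QX (T.cQ _)) (T.QX (T.cQ _)) (T.aX y) hne (T.Qa (T.cQ _) _)
      (T.Qa (T.cQ _) _) hy
    have hyy : y + 1 ≤ y' := by
      by_contra hn
      exact T.g1 (h.pos y hle le_rfl) (h.neg (y + 1) (by omega) (by omega)) hy'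
        (v4 (y + 1) (by omega) h2)
    have hx : x' = y + 1 := by
      by_contra hn
      exact hy (v3 y (by omega) (by omega))
    refine ⟨x', y', hv', by omega, by omega, by omega, ?_⟩
    by_contra hn
    exact T.g3 n1 p1 (v3 _ (by omega) (by omega)) (v3 _ (by omega) (by omega))

/-- The vertex of the third polygon at which the visible part begins is unique. -/
theorem start_uniq (T : Ctx3 X D Q i a j c) (h1 : L (c (e - 1)) (c e) (a k))
    (h2 : L (c (e + 1)) (c e) (a k)) (h1' : L (c (e' - 1)) (c e') (a k))
    (h2' : L (c (e' + 1)) (c e') (a k)) (hlt : e < e') (hlt' : e' < e + j) : False := by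
  have hne := T.J.ne hlt hlt'
  exact (T.J.startL h1 h2 (T.cQ e') hne.symm).not_flip (T.J.startL h1' h2' (T.cQ e) hne)

/-- The edges of the third polygon seen from `a k` begin at some vertex `c e`. -/
theorem exists_start (T : Ctx3 X D Q i a j c) (k : ℤ) : ∃ e : ℤ, 0 ≤ e ∧ e < (j:ℤ) ∧
    L (c (e - 1)) (c e) (a k) ∧ L (c (e + 1)) (c e) (a k) := by
  obtain ⟨x, y, h1, h2, h3, h4⟩ := T.lay.vis T.J (T.aD k) (T.aQ k)
  have hj := T.J.npos
  have pr : ∀ u, c (u + (-(x / j)) * j) = c u := fun u => T.J.perm u _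
  have a1 := h3 x le_rfl h1
  have a2 := h4 (x - 1 + j) (by omega) (by omega)
  rw [T.J.per, show x - 1 + j + 1 = x + j by ring, T.J.per] at a2
  refine ⟨x + (-(x / j)) * j, ?_, ?_, ?_, ?_⟩
  · have := Int.emod_nonneg x (show (j : ℤ) ≠ 0 by omega)
    rw [Int.emod_def] at this; linarith [mul_comm (j : ℤ) (x / j)]
  · have := Int.emod_lt_of_pos x (show (0 : ℤ) < j by omega)
    rw [Int.emod_def] at this; linarith [mul_comm (j : ℤ) (x / j)]
  · rw [show x + (-(x / j)) * j - 1 = x - 1 + (-(x / j)) * j by ring, pr, pr]; exact a2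
  · rw [show x + (-(x / j)) * j + 1 = x + 1 + (-(x / j)) * j by ring, pr, pr]; exact a1

/-- The lifted intervals wind exactly once around the second polygon during one turn around the
third: every vertex is the beginning of visibility exactly once. -/
theorem exists_walk (T : Ctx3 X D Q i a j c) : ∃ x y, Walk i a j c x y := by
  have hi := T.hull.npos
  have hj := T.J.npos
  obtain ⟨x0, y0, hv0, -, -⟩ := T.exists_iv 0 0
  have st : ∀ e : ℤ, ∀ p : ℤ × ℤ, ∃ p' : ℤ × ℤ, Iv i a c e p.1 p.2 →
      (Iv i a c (e + 1) p'.1 p'.2 ∧ p.1 ≤ p'.1 ∧ p'.1 ≤ p.2 + 1 ∧ p.2 ≤ p'.2 ∧ p'.2 < p.1 + i) := by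
    intro e p
    by_cases h : Iv i a c e p.1 p.2
    · obtain ⟨x', y', g⟩ := T.next h
      exact ⟨(x', y'), fun _ => g⟩
    · exact ⟨(0, 0), fun g => absurd g h⟩
  choose f hf using st
  let s : ℕ → ℤ × ℤ := fun n => Nat.rec (x0, y0) (fun n p => f n p) n
  have s1 : ∀ n, s (n + 1) = f n (s n) := fun n => rfl
  have siv : ∀ n : ℕ, Iv i a c n (s n).1 (s n).2 := by
    intro n
    induction n with
    | zero => exact_mod_cast hv0
    | succ n ih => rw [s1]; exact_mod_cast (hf n _ ih).1
  have sst : ∀ n : ℕ, (s n).1 ≤ (s (n + 1)).1 ∧ (s (n + 1)).1 ≤ (s n).2 + 1 ∧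
      (s n).2 ≤ (s (n + 1)).2 ∧ (s (n + 1)).2 < (s n).1 + i := by
    intro n; rw [s1]; exact (hf n _ (siv n)).2
  have smono : Monotone fun n => (s n).2 := monotone_nat_of_le_succ fun n => (sst n).2.2.1
  -- a new vertex of the interval begins to see the polygon there
  have ev : ∀ (n : ℕ) (k : ℤ), (s n).2 < k → k ≤ (s (n + 1)).2 →
      L (c ((n : ℤ) - 1)) (c n) (a k) ∧ L (c ((n : ℤ) + 1)) (c n) (a k) := by
    intro n k h1 h2
    obtain ⟨g1, g2, g3, g4⟩ := sst n
    refine ⟨(siv n).neg k h1 (by omega), ?_⟩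
    have := (siv (n + 1)).pos k (by omega) h2
    push_cast at this
    rwa [add_sub_cancel_right] at this
  have find : ∀ k, (s 0).2 < k → k ≤ (s j).2 → ∃ n : ℕ, n < j ∧ (s n).2 < k ∧ k ≤ (s (n + 1)).2 := by
    intro k h1 h2
    obtain ⟨n, n1, n2, n3, n4⟩ := exists_switch (fun n : ℤ => (s n.toNat).2 < k)
      (a := 0) (b := j) (by omega) (by simpa using h1) (by simpa using h2)
    refine ⟨n.toNat, by omega, n3, ?_⟩
    rw [show (n + 1).toNat = n.toNat + 1 by omega] at n4
    omega
  have up : (s j).2 ≤ (s 0).2 + i := by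
    by_contra hn
    obtain ⟨n, n1, n2, n3⟩ := find ((s 0).2 + 1) (by omega) (by omega)
    obtain ⟨m, m1, m2, m3⟩ := find ((s 0).2 + 1 + i) (by omega) (by omega)
    have e1 := ev n _ n2 n3
    have e2 := ev m _ m2 m3
    rw [T.hull.per] at e2
    rcases lt_trichotomy n m with g | g | g
    · exact T.start_uniq e1.1 e1.2 e2.1 e2.2 (by omega) (by omega)
    · subst g
      have := (sst n).2.2.2
      have := (siv n).le
      omega
    · exact T.start_uniq e2.1 e2.2 e1.1 e1.2 (by omega) (by omega)
  have lo : (s 0).2 < (s j).2 := by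
    obtain ⟨e, e0, ej, e1, e2⟩ := T.exists_start 0
    lift e to ℕ using e0
    obtain ⟨g1, g2, g3, g4⟩ := sst e
    have v1 := siv e
    have v2 := siv (e + 1)
    obtain ⟨m, m1, m2⟩ : ∃ m : ℤ, (s e).1 ≤ m * i ∧ m * i < (s e).1 + i := by
      refine ⟨-((-(s e).1) / i), ?_, ?_⟩
      · have := Int.emod_nonneg (-(s e).1) (show (i : ℤ) ≠ 0 by omega)
        rw [Int.emod_def] at this; linarith [mul_comm (i : ℤ) (-(s e).1 / i)]
      · have := Int.emod_lt_of_pos (-(s e).1) (show (0 : ℤ) < i by omega)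
        rw [Int.emod_def] at this; linarith [mul_comm (i : ℤ) (-(s e).1 / i)]
    have em : a (m * i) = a 0 := by have := T.hull.perm 0 m; rwa [zero_add] at this
    have l1 : (s e).2 < m * i := by
      by_contra hn
      have := v1.pos (m * i) m1 (by omega)
      rw [em] at this
      exact this.not_swap e1
    have l2 : m * i ≤ (s (e + 1)).2 := by
      by_contra hn
      have := v2.neg (m * i) (by omega) (by omega)
      rw [em] at this
      push_cast at this
      rw [add_sub_cancel_right] at this
      exact this.not_swap e2
    have := smono (show 0 ≤ e by omega)
    have := smono (show e + 1 ≤ j by omega)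
    simp only at *
    omega
  -- both ends of an interval are determined modulo `i`
  have hper : (s j).1 = (s 0).1 + i ∧ (s j).2 = (s 0).2 + i := by
    have v1 := siv 0
    have v2 := siv j
    obtain ⟨p1, p2, p3, p4⟩ := v1
    obtain ⟨q1, q2, q3, q4⟩ := v2
    have c0 : c j = c 0 := by have := T.J.per 0; rwa [zero_add] at this
    have c1 : c ((j : ℤ) - 1) = c (-1) := by
      have := T.J.per (-1); rwa [show -1 + (j : ℤ) = j - 1 by ring] at this
    rw [c0, c1] at q3 q4
    simp only [Nat.cast_zero, zero_sub] at p3 p4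
    have pp : ∀ k, (s 0).1 + i ≤ k → k ≤ (s 0).2 + i → L (c 0) (c (-1)) (a k) := by
      intro k h1 h2
      have := p3 (k - i) (by omega) (by omega)
      rwa [← T.hull.per, sub_add_cancel] at this
    have hy : (s j).2 = (s 0).2 + i := by
      by_contra hn
      by_cases h1 : (s 0).1 + i ≤ (s j).2
      · exact (pp ((s j).2 + 1) (by omega) (by omega)).not_swap (q4 _ (by omega) (by omega))
      · exact (q3 (s j).2 q1 le_rfl).not_swap (p4 _ (by omega) (by omega))
    refine ⟨?_, hy⟩
    rcases lt_trichotomy (s j).1 ((s 0).1 + i) with g | g | g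
    · exact absurd (p4 ((s 0).1 + i - 1) (by omega) (by omega))
        (q3 ((s 0).1 + i - 1) (by omega) (by omega)).not_swap
    · exact g
    · have h1 := pp ((s j).1 - 1) (by omega) (by omega)
      have h2 := q4 ((s j).1 - 1 + i) (by omega) (by omega)
      rw [T.hull.per] at h2
      exact absurd h1 h2.not_swap
  have md : ∀ e : ℤ, 0 ≤ e % j ∧ e % j < j ∧ e % j + j * (e / j) = e := fun e =>
    ⟨Int.emod_nonneg e (by omega), Int.emod_lt_of_pos e (by omega), Int.emod_add_mul_ediv e j⟩
  -- extension to all integers by periodicity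
  have stp : ∀ e : ℤ, ∃ n : ℕ, ∃ m : ℤ, e % j = n ∧ e / j = m ∧ e = n + m * j ∧
      s (((e + 1) % j).toNat) = (if n + 1 = j then s 0 else s (n + 1)) ∧
      (e + 1) / j = (if n + 1 = j then m + 1 else m) := by
    intro e
    obtain ⟨m1, m2, m3⟩ := md e
    refine ⟨(e % j).toNat, e / j, by omega, rfl, ?_, ?_⟩
    · rw [Int.toNat_of_nonneg m1]; linarith [mul_comm (j : ℤ) (e / j)]
    by_cases h : (e % j).toNat + 1 = j
    · have e1 : e + 1 = 0 + (e / j + 1) * j := by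
        have : (j : ℤ) * (e / j) = e / j * j := mul_comm _ _
        rw [add_mul, one_mul]; omega
      rw [if_pos h, if_pos h, e1, Int.add_mul_emod_self_right, Int.add_mul_ediv_right _ _ (by omega)]
      simp
    · have e1 : e + 1 = (e % j + 1) + (e / j) * j := by
        have : (j : ℤ) * (e / j) = e / j * j := mul_comm _ _
        omega
      have e2 : (e % j + 1) % j = e % j + 1 := Int.emod_eq_of_lt (by omega) (by omega)
      have e3 : (e % j + 1) / j = 0 := Int.ediv_eq_zero_of_lt (by omega) (by omega)
      have r1 : (e + 1) % j = e % j + 1 := by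
        rw [← e2]
        conv_lhs => rw [e1]
        exact Int.add_mul_emod_self_right _ _ _
      have r2 : (e + 1) / j = e / j := by
        conv_lhs => rw [e1]
        rw [Int.add_mul_ediv_right _ _ (by omega), e3, zero_add]
      rw [if_neg h, if_neg h, r1, r2]
      have r3 : (e % j + 1).toNat = (e % j).toNat + 1 := by omega
      rw [r3]
      exact ⟨rfl, rfl⟩
  refine ⟨fun e => (s (e % j).toNat).1 + e / j * i, fun e => (s (e % j).toNat).2 + e / j * i, ?_⟩
  have key : ∀ e : ℤ, ∃ n : ℕ, ∃ m : ℤ, e % j = n ∧ e / j = m ∧ e = n + m * j ∧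
      (s (((e + 1) % j).toNat)).1 + (e + 1) / j * i = (s (n + 1)).1 + m * i ∧
      (s (((e + 1) % j).toNat)).2 + (e + 1) / j * i = (s (n + 1)).2 + m * i := by
    intro e
    obtain ⟨n, m, h1, h2, h3, h4, h5⟩ := stp e
    refine ⟨n, m, h1, h2, h3, ?_⟩
    rw [h4, h5]
    by_cases h : n + 1 = j
    · rw [if_pos h, if_pos h, h, hper.1, hper.2]
      constructor <;> ring
    · rw [if_neg h, if_neg h]
      exact ⟨rfl, rfl⟩
  refine ⟨fun e => ?_, fun e => ?_, fun e => ?_, fun e => ?_, fun e => ?_, fun e => ?_, fun e => ?_⟩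
  · obtain ⟨n, m, h1, h2, h3, -, -⟩ := key e
    rw [h1, h2, Int.toNat_natCast]
    have e1 : c e = c n := by rw [h3]; exact T.J.perm _ _
    have e2 : c (e - 1) = c (n - 1) := by
      rw [h3, show (n : ℤ) + m * j - 1 = n - 1 + m * j by ring]; exact T.J.perm _ _
    obtain ⟨g1, g2, g3, g4⟩ := (siv n).shift T.hull.per m
    exact ⟨g1, g2, by rwa [e1, e2], by rwa [e1, e2]⟩
  · obtain ⟨n, m, h1, h2, h3, h4, h5⟩ := key e
    simp only [h4, h1, h2, Int.toNat_natCast]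
    have := sst n; omega
  · obtain ⟨n, m, h1, h2, h3, h4, h5⟩ := key e
    simp only [h4, h1, h2, Int.toNat_natCast]
    have := sst n; omega
  · obtain ⟨n, m, h1, h2, h3, h4, h5⟩ := key e
    simp only [h5, h1, h2, Int.toNat_natCast]
    have := sst n; omega
  · obtain ⟨n, m, h1, h2, h3, h4, h5⟩ := key e
    simp only [h5, h1, h2, Int.toNat_natCast]
    have := sst n; omega
  · have h1 : (e + j) % j = e % j := Int.add_emod_right e j
    have h2 : (e + j) / j = e / j + 1 := Int.add_ediv_of_dvd_right (dvd_refl _) |>.trans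
      (by rw [Int.ediv_self (by omega)])
    simp only [h1, h2]; ring
  · have h1 : (e + j) % j = e % j := Int.add_emod_right e j
    have h2 : (e + j) / j = e / j + 1 := Int.add_ediv_of_dvd_right (dvd_refl _) |>.trans
      (by rw [Int.ediv_self (by omega)])
    simp only [h1, h2]; ring

end Ctx3
end

/-! ### Arcs between gaps -/

section
variable {X D Q : Finset Pt} {i j : ℕ} {a c : ℤ → Pt} {x y : ℤ → ℤ} {g g' : ℤ}

namespace Walk

theorem xmono (W : Walk i a j c x y) {e e' : ℤ} (h : e ≤ e') : x e ≤ x e' := by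
  induction e', h using Int.leInduction with
  | base => exact le_rfl
  | succ k _ ih => exact ih.trans (W.xx k)

theorem ymono (W : Walk i a j c x y) {e e' : ℤ} (h : e ≤ e') : y e ≤ y e' := by
  induction e', h using Int.leInduction with
  | base => exact le_rfl
  | succ k _ ih => exact ih.trans (W.yy k)

theorem pos (W : Walk i a j c x y) (e k : ℤ) (h1 : x e ≤ k) (h2 : k ≤ y e) :
    L (c e) (c (e - 1)) (a k) := (W.iv e).pos k h1 h2

theorem pos' (W : Walk i a j c x y) (e k : ℤ) (h1 : x (e + 1) ≤ k) (h2 : k ≤ y (e + 1)) :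
    L (c (e + 1)) (c e) (a k) := by
  have := W.pos (e + 1) k h1 h2
  rwa [add_sub_cancel_right] at this

theorem neg (W : Walk i a j c x y) (e k : ℤ) (h1 : y e < k) (h2 : k < x e + i) :
    L (c (e - 1)) (c e) (a k) := (W.iv e).neg k h1 h2

theorem neg' (W : Walk i a j c x y) (e k : ℤ) (h1 : y (e + 1) < k) (h2 : k < x (e + 1) + i) :
    L (c e) (c (e + 1)) (a k) := by
  have := W.neg (e + 1) k h1 h2
  rwa [add_sub_cancel_right] at this

end Walk

/-- Consecutive gaps `g` and `g'`: a gap is a vertex of the third polygon at which the intervals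
of visible vertices on both sides are disjoint. -/
structure Arc (x y : ℤ → ℤ) (g g' : ℤ) : Prop where
  lt : g < g'
  left : x (g + 1) = y g + 1
  right : x (g' + 1) = y g' + 1
  non : ∀ s, g < s → s < g' → x (s + 1) ≤ y s

theorem Fl_self (p : Pt) (k : ℤ) : (Fl X D i a p k p k).card = 0 := by
  rw [Finset.card_eq_zero, Finset.eq_empty_iff_forall_notMem]
  intro h hh
  obtain ⟨-, -, x, y, -, h1, h2⟩ := mem_Fl.1 hh
  exact h2 h1

/-- Outer points passed along an arc. -/
noncomputable def cost (X D : Finset Pt) (i : ℕ) (a c : ℤ → Pt) (x y : ℤ → ℤ) (g g' : ℤ) : ℤ :=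
  ((Fl X D i a (c g) (x (g + 1)) (c g') (y g')).card : ℤ)

/-- An arc along which as many outer points are passed as `Ctx3.cost_le` permits: one less than the
number `y g' - x (g + 1) + 1` of visible vertices. -/
def Bad (X D : Finset Pt) (i : ℕ) (a c : ℤ → Pt) (x y : ℤ → ℤ) (g g' : ℤ) : Prop :=
  Arc x y g g' ∧ y g' - x (g + 1) + 1 < cost X D i a c x y g g' + 2

namespace Ctx3

/-- Away from gaps the ray passes at most one outer point per step. -/
theorem pth (T : Ctx3 X D Q i a j c) (W : Walk i a j c x y) {e e' : ℤ} (he : e + 1 ≤ e') :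
    (∀ s, e < s → s < e' → x (s + 1) ≤ y s) → ∀ z z', x (e + 1) ≤ z → z ≤ y (e + 1) → x e' ≤ z' →
      z' ≤ y e' → z ≤ z' → ((Fl X D i a (c e) z (c e') z').card : ℤ) ≤ z' - z := by
  have blk : ∀ s z z', x (s + 1) ≤ z → z ≤ z' → z' ≤ y (s + 1) →
      ((Fl X D i a (c s) z (c (s + 1)) z').card : ℤ) ≤ z' - z := by
    intro s z z' h1 h2 h3
    have hl := (W.iv (s + 1)).lt
    refine T.block (T.cQ s) (T.cQ (s + 1)) ?_ h2 (by omega) ?_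
    · have := T.hed (s + 1); rwa [add_sub_cancel_right] at this
    · exact fun k k1 k2 => W.pos' s k (by omega) (by omega)
  induction e', he using Int.leInduction with
  | base => exact fun _ z z' h1 h2 h3 h4 h5 => blk e z z' h1 h5 h4
  | succ e' he ih =>
    intro hs z z' h1 h2 h3 h4 h5
    have ng := hs e' (by omega) (by omega)
    have m1 := W.ymono he
    have m2 := W.yy e'
    have m3 := W.xx e'
    have t1 := ih (fun s s1 s2 => hs s s1 (by omega)) z (min z' (y e')) h1 h2 (by omega) (by omega)
      (by omega)
    have t2 := blk e' (min z' (y e')) z' (by omega) (by omega) h4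
    have t3 := Fl_tri (X := X) (D := D) (i := i) (a := a) (c := c e) (k := z) (c'' := c (e' + 1))
      (k'' := z') (c e') (min z' (y e'))
    omega

/-- At a gap the ray passes at most two outer points. -/
theorem gap_step (T : Ctx3 X D Q i a j c) (W : Walk i a j c x y) {e : ℤ} (hg : x (e + 1) = y e + 1) :
    (Fl X D i a (c e) (y e) (c e) (y e + 1)).card ≤ 2 := by
  refine T.F1 (T.cQ e) ?_
  intro z hz h1 _
  have hl := (W.iv e).le
  have h2 := W.yx e
  have n1 : L (c e) (c (e + 1)) (a (y e)) := by
    have := W.neg' e (y e + i) (by omega) (by omega)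
    rwa [T.hull.per] at this
  exact (T.J.endL (W.pos e (y e) hl le_rfl) n1 hz h1.ne13.symm).not_swap' h1

/-- Along an arc the number of outer points passed is less than the number of visible vertices. -/
theorem cost_le (T : Ctx3 X D Q i a j c) (W : Walk i a j c x y) (hA : Arc x y g g') :
    1 ≤ y g' - x (g + 1) + 1 ∧ cost X D i a c x y g g' ≤ y g' - x (g + 1) := by
  have hlt := hA.lt
  have m1 := (W.iv (g + 1)).le
  have m2 := W.ymono (show g + 1 ≤ g' by omega)
  refine ⟨by omega, ?_⟩
  exact T.pth W (by omega) hA.non _ _ le_rfl m1 ((W.iv g').le) le_rfl (by omega)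

theorem cj (T : Ctx3 X D Q i a j c) (e : ℤ) : c (e + j) = c e := T.J.per e

theorem exists_gap (T : Ctx3 X D Q i a j c) (W : Walk i a j c x y) : ∃ g, x (g + 1) = y g + 1 := by
  by_contra hcon
  push Not at hcon
  have ng : ∀ s, x (s + 1) ≤ y s := fun s => by have := W.xy s; have := hcon s; omega
  have hj := T.J.npos
  have h1 := T.pth W (e := 0) (e' := 0 + j) (by omega) (fun s _ _ => ng s) (x (0 + 1)) (x (0 + 1) + i)
    le_rfl (W.iv _).le (by have := W.px 0; have := W.xx 0; omega)
    (by have := ng (0 + j); rw [show (0 : ℤ) + j + 1 = 0 + 1 + j by ring, W.px] at this; exact this)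
    (by omega)
  rw [T.cj, T.Fl_round (T.cQ _)] at h1
  have := T.i_le
  omega

theorem gap_per (W : Walk i a j c x y) : x (g + j + 1) = y (g + j) + 1 ↔ x (g + 1) = y g + 1 := by
  rw [show g + (j : ℤ) + 1 = g + 1 + j by ring, W.px, W.py]; omega

theorem exists_arc (W : Walk i a j c x y) {h : ℤ} (hg : x (g + 1) = y g + 1)
    (hh : x (h + 1) = y h + 1) (hlt : g < h) : ∃ g', Arc x y g g' ∧ g' ≤ h := by
  obtain ⟨g', ⟨h1, h2⟩, h3⟩ := Int.exists_least_of_bdd (P := fun s => g < s ∧ x (s + 1) = y s + 1)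
    ⟨g, fun z hz => hz.1.le⟩ ⟨h, hlt, hh⟩
  refine ⟨g', ⟨h1, hg, h2, ?_⟩, h3 h ⟨hlt, hh⟩⟩
  intro s s1 s2
  by_contra hcon
  have := W.xy s
  have := h3 s ⟨s1, by omega⟩
  omega

/-- A bound for the arcs gives a bound for a sequence of arcs. -/
theorem sum_arcs (T : Ctx3 X D Q i a j c) (W : Walk i a j c x y) (m : ℤ) (n : ℕ) :
    ∀ g h : ℤ, x (g + 1) = y g + 1 → x (h + 1) = y h + 1 → h = g + n →
      (∀ u u', Arc x y u u' → g ≤ u → u' ≤ h →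
        cost X D i a c x y u u' + 2 ≤ m * (y u' - x (u + 1) + 1)) →
      ((Fl X D i a (c g) (x (g + 1)) (c h) (x (h + 1))).card : ℤ) ≤ m * (x (h + 1) - x (g + 1)) := by
  induction n using Nat.strong_induction_on with
  | _ n ih =>
    intro g h hg hh hn H
    rcases Nat.eq_zero_or_pos n with rfl | hpos
    · have : h = g := by simpa using hn
      subst this
      rw [Fl_self, sub_self, mul_zero]; rfl
    obtain ⟨u, hA, hu⟩ := exists_arc W hg hh (by omega)
    have hlt := hA.lt
    have h1 := ih (n - (u - g).toNat) (by omega) u h hA.right hh (by omega)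
      (fun v v' hv v1 v2 => H v v' hv (by omega) v2)
    have h2 := H g u hA le_rfl hu
    have h3 := T.gap_step W hA.right
    rw [← hA.right] at h3
    unfold cost at h2
    have t1 := Fl_tri (X := X) (D := D) (i := i) (a := a) (c := c g) (k := x (g + 1)) (c'' := c h)
      (k'' := x (h + 1)) (c u) (y u)
    have t2 := Fl_tri (X := X) (D := D) (i := i) (a := a) (c := c u) (k := y u) (c'' := c h)
      (k'' := x (h + 1)) (c u) (x (u + 1))
    have e1 : m * (x (h + 1) - x (g + 1)) =
        m * (y u - x (g + 1) + 1) + m * (x (h + 1) - x (u + 1)) := by rw [hA.right]; ring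
    rw [e1]
    omega

theorem round (T : Ctx3 X D Q i a j c) (W : Walk i a j c x y) (g : ℤ) :
    (Fl X D i a (c g) (x (g + 1)) (c (g + j)) (x (g + j + 1))).card = 9 := by
  rw [show g + (j : ℤ) + 1 = g + 1 + j by ring, W.px, T.cj, T.Fl_round (T.cQ _)]

/-- By `cost_le` and `gap_step`, a turn passes at most one outer point per vertex and another one per
arc. -/
theorem five_le (T : Ctx3 X D Q i a j c) (W : Walk i a j c x y) : 5 ≤ i := by
  obtain ⟨g, hg⟩ := T.exists_gap W
  have h1 := T.sum_arcs W 2 j g (g + j) hg ((gap_per W).2 hg) rfl (by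
    intro u u' hA _ _
    have := T.cost_le W hA
    omega)
  rw [T.round W, show g + (j : ℤ) + 1 = g + 1 + j by ring, W.px] at h1
  omega

/-- If no arc were bad, then a turn would pass at most `i ≤ 8` outer points. -/
theorem exists_bad (T : Ctx3 X D Q i a j c) (W : Walk i a j c x y) (hg : x (g + 1) = y g + 1) :
    ∃ u u', Bad X D i a c x y u u' ∧ g ≤ u ∧ u' ≤ g + j := by
  by_contra hcon
  push Not at hcon
  have h1 := T.sum_arcs W 1 j g (g + j) hg ((gap_per W).2 hg) rfl (by
    intro u u' hA u1 u2
    by_contra hn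
    have := hcon u u' ⟨hA, by omega⟩ u1
    omega)
  rw [T.round W, show g + (j : ℤ) + 1 = g + 1 + j by ring, W.px] at h1
  have := T.i_le
  omega

/-- If there is only one bad arc, then the second polygon is an octagon. -/
theorem another_bad (T : Ctx3 X D Q i a j c) (W : Walk i a j c x y) (hb : Bad X D i a c x y g g')
    (hle : g' ≤ g + j) :
    (∃ u u', Bad X D i a c x y u u' ∧ g' ≤ u ∧ u' ≤ g + j) ∨ i = 8 := by
  by_contra hcon
  push Not at hcon
  obtain ⟨hcon, hi⟩ := hcon
  have hA := hb.1
  have h1 := T.sum_arcs W 1 (g + j - g').toNat g' (g + j) hA.right ((gap_per W).2 hA.left)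
    (by omega) (by
    intro u u' hA u1 u2
    by_contra hn
    have := hcon u u' ⟨hA, by omega⟩ u1
    omega)
  have h2 := T.cost_le W hA
  have h3 := T.gap_step W hA.right
  rw [← hA.right] at h3
  have t0 := T.round W g
  have t1 := Fl_tri (X := X) (D := D) (i := i) (a := a) (c := c g) (k := x (g + 1)) (c'' := c (g + j))
    (k'' := x (g + j + 1)) (c g') (y g')
  have t2 := Fl_tri (X := X) (D := D) (i := i) (a := a) (c := c g') (k := y g') (c'' := c (g + j))
    (k'' := x (g + j + 1)) (c g') (x (g' + 1))
  unfold cost at h2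
  rw [show g + (j : ℤ) + 1 = g + 1 + j by ring, W.px] at *
  have := T.i_le
  have := hA.right
  omega

/-- The vertex `a z` belongs to the intervals of both edges at `c s` and lies to the left of
`t → c s`. At a gap the common part is replaced by the first vertex of the second interval. -/
def PP (a c : ℤ → Pt) (x y : ℤ → ℤ) (t : Pt) (s z : ℤ) : Prop :=
  x (s + 1) ≤ z ∧ z ≤ max (y s) (x (s + 1)) ∧ L t (c s) (a z)

/-- The vertex `a z` belongs to the intervals of both edges at `c s` and lies to the right of
`t → c s`. At a gap the common part is replaced by the last vertex of the first interval. -/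
def MM (a c : ℤ → Pt) (x y : ℤ → ℤ) (t : Pt) (s z : ℤ) : Prop :=
  min (x (s + 1)) (y s) ≤ z ∧ z ≤ y s ∧ L (c s) t (a z)

/-- At a gap, the ray to the first vertex of the next interval supports the third polygon. -/
theorem startGap (T : Ctx3 X D Q i a j c) (W : Walk i a j c x y) (hg : x (g + 1) = y g + 1) {w : Pt}
    (hw : w ∈ Q) (hne : w ≠ c g) : L (c g) (a (x (g + 1))) w := by
  have h1 := (W.iv g).lt
  have h2 := (W.iv g).le
  exact T.J.startL (W.neg g _ (by omega) (by omega)) (W.pos' g _ le_rfl (W.iv _).le) hw hne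

/-- At a gap, the ray to the last vertex of the previous interval supports the third polygon. -/
theorem endGap (T : Ctx3 X D Q i a j c) (W : Walk i a j c x y) (hg : x (g + 1) = y g + 1) {w : Pt}
    (hw : w ∈ Q) (hne : w ≠ c g) : L (c g) w (a (y g)) := by
  have hl := (W.iv g).le
  have h2 := W.yx g
  have n1 : L (c g) (c (g + 1)) (a (y g)) := by
    have := W.neg' g (y g + i) (by omega) (by omega)
    rwa [T.hull.per] at this
  exact T.J.endL (W.pos g (y g) hl le_rfl) n1 hw hne

variable {t : Pt}

/-- In a bad arc, a vertex to the left of `t → c s` does not come before a vertex to the right of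
`t → c (s + 1)`: by `T4` they would be consecutive, and by `F3` no outer point would be passed
between them. -/
theorem PM (T : Ctx3 X D Q i a j c) (W : Walk i a j c x y) (hb : Bad X D i a c x y g g')
    (ht : t ∈ Q) (htc : ∀ s, g ≤ s → s ≤ g' → t ≠ c s) {s z z' : ℤ} (h1 : g ≤ s) (h2 : s + 1 ≤ g')
    (hP : PP a c x y t s z) (hM : MM a c x y t (s + 1) z') : z' ≤ z := by
  by_contra hcon
  push Not at hcon
  obtain ⟨p1, p2, p3⟩ := hP
  obtain ⟨q1, q2, q3⟩ := hM
  obtain ⟨hA, hcost⟩ := hb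
  have hl := (W.iv (s + 1)).lt
  have hd : ∀ w ∈ Q, w ≠ c s → w ≠ c (s + 1) → L (c s) (c (s + 1)) w := by
    have := T.hed (s + 1); rwa [add_sub_cancel_right] at this
  have t1 := hd t ht (htc s h1 (by omega)) (htc (s + 1) (by omega) h2)
  have ps : ∀ k, z ≤ k → k ≤ z' → L (c (s + 1)) (c s) (a k) :=
    fun k k1 k2 => W.pos' s k (by omega) (by omega)
  have h5 := T.T5 (T.cQ s) (T.cQ (s + 1)) hd (x := z) (y := z') (by omega) ps
  rcases (show z' = z + 1 ∨ z' = z + 1 + 1 by omega) with rfl | rfl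
  · have f3 : (Fl X D i a (c s) z (c (s + 1)) (z + 1)).card = 0 := by
      rw [Finset.card_eq_zero, Finset.eq_empty_iff_forall_notMem]
      exact fun h => T.F3 (T.cQ s) (T.cQ (s + 1)) hd (ps z le_rfl (by omega))
        (ps (z + 1) (by omega) le_rfl) ht t1 p3.r q3.rr
    have fl1 : ((Fl X D i a (c g) (x (g + 1)) (c s) z).card : ℤ) ≤ z - x (g + 1) := by
      rcases h1.eq_or_lt with rfl | hlt
      · have := hA.left
        have e : z = x (g + 1) := by omega
        rw [e, Fl_self]; simp
      · have := hA.non s hlt (by omega)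
        have := W.xmono (show g + 1 ≤ s + 1 by omega)
        have := W.xx s
        exact T.pth W (by omega) (fun u u1 u2 => hA.non u u1 (by omega)) _ _ le_rfl (W.iv _).le
          (by omega) (by omega) (by omega)
    have fl2 : ((Fl X D i a (c (s + 1)) (z + 1) (c g') (y g')).card : ℤ) ≤ y g' - (z + 1) := by
      rcases h2.eq_or_lt with rfl | hlt
      · have := hA.right
        have e : z + 1 = y (s + 1) := by omega
        rw [e, Fl_self]; simp
      · have := hA.non (s + 1) (by omega) hlt
        have := W.ymono (show s + 1 ≤ g' by omega)
        have := W.yy (s + 1)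
        exact T.pth W (by omega) (fun u u1 u2 => hA.non u (by omega) u2) _ _ (by omega) (by omega)
          (W.iv g').le le_rfl (by omega)
    have t1 := Fl_tri (X := X) (D := D) (i := i) (a := a) (c := c g) (k := x (g + 1)) (c'' := c g')
      (k'' := y g') (c s) z
    have t2 := Fl_tri (X := X) (D := D) (i := i) (a := a) (c := c s) (k := z) (c'' := c g')
      (k'' := y g') (c (s + 1)) (z + 1)
    unfold cost at hcost
    omega
  · exact T.T4 (T.cQ s) (T.cQ (s + 1)) hd (ps z le_rfl (by omega))
        (ps (z + 1) (by omega) (by omega)) (ps (z + 1 + 1) (by omega) le_rfl) ht t1 p3.r q3.rr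

/-- A bad arc contains edges `r, …, r'` through which few vertices are visible. -/
theorem arc (T : Ctx3 X D Q i a j c) (W : Walk i a j c x y) (hb : Bad X D i a c x y g g')
    (ht : t ∈ Q) (htc : ∀ s, g ≤ s → s ≤ g' → t ≠ c s) :
    ∃ r r', g + 1 ≤ r ∧ r ≤ r' ∧ r' ≤ g' ∧ y r' - x r ≤ r' - r ∧
      ∀ s, r ≤ s → s < r' → (∃ z, PP a c x y t s z) ∧ ∃ z, MM a c x y t s z := by
  have hA := hb.1
  have hlt := hA.lt
  have P0 : PP a c x y t g (x (g + 1)) :=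
    ⟨le_rfl, le_max_right _ _, (T.startGap W hA.left ht (htc g le_rfl hlt.le)).rr⟩
  have M0 : MM a c x y t g' (y g') :=
    ⟨min_le_right _ _, le_rfl, T.endGap W hA.right ht (htc g' hlt.le le_rfl)⟩
  by_contra hres
  have inv : ∀ s, g ≤ s → s < g' → ∃ r z, g + 1 ≤ r ∧ r ≤ s + 1 ∧ PP a c x y t s z ∧
      z ≤ x r + (s - r + 1) ∧
      ∀ s', r ≤ s' → s' ≤ s → (∃ z, PP a c x y t s' z) ∧ ∃ z, MM a c x y t s' z := by
    intro s hs
    induction s, hs using Int.leInduction with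
    | base => exact fun _ => ⟨g + 1, _, le_rfl, le_rfl, P0, by omega, fun s' h1 h2 => by omega⟩
    | succ s hs ih =>
      intro hs'
      obtain ⟨r, z, r1, r2, r3, r4, r5⟩ := ih (by omega)
      have ng := hA.non (s + 1) (by omega) hs'
      have tot : ∀ k, x (s + 1 + 1) ≤ k → k ≤ y (s + 1) →
          PP a c x y t (s + 1) k ∨ MM a c x y t (s + 1) k := by
        intro k k1 k2
        rcases T.cfg.gp.cyc (T.QX ht) (T.QX (T.cQ (s + 1))) (T.aX k) (htc _ (by omega) (by omega))
          (T.Qa (T.cQ _) _) (T.Qa ht _) with e | e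
        · exact Or.inl ⟨k1, by omega, e⟩
        · exact Or.inr ⟨by omega, k2, e⟩
      by_cases hP : ∃ z, PP a c x y t (s + 1) z
      · by_cases hM : ∃ z, MM a c x y t (s + 1) z
        · have ext : ∀ s', r ≤ s' → s' ≤ s + 1 →
              (∃ z, PP a c x y t s' z) ∧ ∃ z, MM a c x y t s' z := by
            intro s' h1 h2
            rcases h2.eq_or_lt with e | e
            · rw [e]; exact ⟨hP, hM⟩
            · exact r5 s' h1 (by omega)
          obtain ⟨z'', hz''⟩ := hP
          obtain ⟨z', hz'⟩ := hM
          by_cases hle : z'' ≤ z + 1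
          · exact ⟨r, z'', r1, by omega, hz'', by omega, ext⟩
          have k1 := T.PM W hb ht htc hs (by omega) r3 hz'
          have b1 := hz'.1
          have b2 := hz''.2.1
          rcases tot (z + 1) (by omega) (by omega) with e | e
          · exact ⟨r, z + 1, r1, by omega, e, by omega, ext⟩
          · have := T.PM W hb ht htc hs (by omega) r3 e
            omega
        · refine ⟨s + 1 + 1, x (s + 1 + 1), by omega, le_rfl, ?_, by omega, fun s' h1 h2 => by omega⟩
          exact (tot _ le_rfl ng).resolve_right fun e => hM ⟨_, e⟩
      · exfalso
        have e := (tot (y (s + 1)) ng le_rfl).resolve_left fun e => hP ⟨_, e⟩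
        have k1 := T.PM W hb ht htc hs (by omega) r3 e
        exact hres ⟨r, s + 1, r1, r2, by omega, by omega, fun s' h1 h2 => r5 s' h1 (by omega)⟩
  obtain ⟨r, z, r1, r2, r3, r4, r5⟩ := inv (g' - 1) (by omega) (by omega)
  have k1 := T.PM W hb ht htc (s := g' - 1) (by omega) (by omega) r3
    (by rw [sub_add_cancel]; exact M0)
  exact hres ⟨r, g', r1, by omega, le_rfl, by omega, fun s' h1 h2 => r5 s' h1 (by omega)⟩

/-- A range of edges of an arc can be widened, without more vertices becoming visible, until it has a
proper beginning and end as required in `Ctx3.many`. -/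
theorem extend (W : Walk i a j c x y) (hA : Arc x y g g') {r r' : ℤ} (h1 : g + 1 ≤ r) (h2 : r' ≤ g') :
    ∃ u u', g + 1 ≤ u ∧ u ≤ r ∧ r' ≤ u' ∧ u' ≤ g' ∧ x u = x r ∧ y u' = y r' ∧
      x (u - 1) < x u ∧ y u' < y (u' + 1) := by
  have hl := hA.left
  have hr := hA.right
  have m1 := W.xmono h1
  have m2 := W.ymono h2
  have l1 := (W.iv g).le
  have l2 := (W.iv (g' + 1)).le
  obtain ⟨u, u1, u2, u3, u4⟩ := exists_switch (fun k => x k < x r) (a := g) (b := r) (by omega)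
    (by omega) (by omega)
  obtain ⟨v, v1, v2, v3, v4⟩ := exists_switch (fun k => y k ≤ y r') (a := r') (b := g' + 1) (by omega)
    (by omega) (by omega)
  have m3 := W.xmono (show u + 1 ≤ r by omega)
  have m4 := W.ymono v1
  refine ⟨u + 1, v, by omega, by omega, v1, by omega, by omega, by omega, ?_, by omega⟩
  rw [add_sub_cancel_right]; omega

end Ctx3
end

/-! ### Edges through which few vertices are visible -/

section
variable {X D Q : Finset Pt} {i j : ℕ} {a c : ℤ → Pt} {x y : ℤ → ℤ} {g g' : ℤ} {u v h w : Pt}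

/-- A point cut off by the chord `a p a q` lies to the left of every line `u v` with `a p, …, a q` on
its left. -/
theorem Ctx.fan_cut (T : Ctx X D Q i a) (hw : w ∈ Q) {p q : ℤ} (hpq : p + 1 ≤ q) :
    q < p + i → L (a q) (a p) w → (∀ k, p ≤ k → k ≤ q → L u v (a k)) → L u v w := by
  induction q, hpq using Int.leInduction with
  | base => exact fun _ h2 _ => absurd h2 (T.edQ hw p).not_swap
  | succ q hq ih =>
    intro h1 h2 h3
    by_cases e : L (a q) (a p) w
    · exact ih (by omega) e fun k k1 k2 => h3 k k1 (by omega)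
    have e' := T.cfg.gp.not (T.aX _) (T.aX _) (T.QX hw) (T.hull.ne (by omega) (by omega)).symm
      (T.Qa hw _).symm (T.Qa hw _).symm e
    have l1 := h3 p le_rfl (by omega)
    have l2 := h3 q (by omega) (by omega)
    have l3 := h3 (q + 1) (by omega) le_rfl
    unfold L at l1 l2 l3
    exact L.inTri e' (T.edQ hw q) h2 l1.le l2.le l3.le (by linarith)

/-- An outer point beyond a line which contains `w`, and has no `a k` with `q ≤ k ≤ p + i` beyond
it, is passed by the ray rotating about `w` from `a p` to `a q`. -/
theorem Ctx.bef_of_cut (T : Ctx X D Q i a) (hw : w ∈ Q) {p q : ℤ}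
    (h0 : ori u v w = 0) (h1 : ∀ k, q ≤ k → k ≤ p + i → 0 ≤ ori u v (a k)) (hX : h ∈ X) (hD : h ∉ D)
    (hh : ori u v h < 0) : ∃ s s', Vis i a h s s' ∧ Bef a h s s' w p ∧ ¬ Bef a h s s' w q := by
  obtain ⟨s, s', hv⟩ := T.exists_vis hX hD
  obtain ⟨k, k1, k2⟩ := T.exists_sector hw hv
  have hi := T.hull.npos
  obtain ⟨-, f2, f3⟩ := T.Fl_step hw hw (mem_Fl.2 ⟨hX, hD, s, s', hv, k1, k2⟩)
  obtain ⟨m, m1, m2⟩ : ∃ m : ℤ, p ≤ k + m * i ∧ k + m * i < p + i := by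
    refine ⟨-((k - p) / i), ?_, ?_⟩
    · have := Int.emod_nonneg (k - p) (show (i : ℤ) ≠ 0 by omega)
      rw [Int.emod_def] at this; linarith [mul_comm (i : ℤ) ((k - p) / i)]
    · have := Int.emod_lt_of_pos (k - p) (show (0 : ℤ) < i by omega)
      rw [Int.emod_def] at this; linarith [mul_comm (i : ℤ) ((k - p) / i)]
  have e1 : a (k + m * i) = a k := T.hull.perm k m
  have e2 : a (k + m * i + 1) = a (k + 1) := by
    rw [show k + m * i + 1 = k + 1 + m * i by ring]; exact T.hull.perm _ m
  have hlt : k + m * i < q := by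
    by_contra hn
    have b1 := h1 (k + m * i) (by omega) (by omega)
    have b2 := h1 (k + m * i + 1) (by omega) (by omega)
    rw [e1] at b1
    rw [e2] at b2
    have := cone_pos (T.edQ hw k).rr f2 f3.r h0 b1 b2
    linarith
  refine ⟨_, _, hv.shift T.hull.per m, ?_, ?_⟩
  · refine T.bef_mono hX hD (hv.shift T.hull.per m) hw m1 ?_
    unfold Bef at k1 ⊢
    rw [e1]
    rcases k1 with b | ⟨b, b'⟩
    · left; omega
    · right; exact ⟨by omega, b'⟩
  · intro hb
    have := T.bef_mono hX hD (hv.shift T.hull.per m) hw (show k + m * i + 1 ≤ q by omega) hb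
    apply k2
    unfold Bef at this ⊢
    rw [e2] at this
    rcases this with b | ⟨b, b'⟩
    · left; omega
    · right; exact ⟨by omega, b'⟩

namespace Ctx3

/-- A ray to `a k` which is before `h` remains so when its apex moves back along edges through which
`a k` is not visible. -/
theorem bef_back (T : Ctx3 X D Q i a j c) {s s' k e e' : ℤ} (hv : Vis i a h s s') (he : e ≤ e') :
    (∀ u, e < u → u ≤ e' → L (c (u - 1)) (c u) (a k)) → Bef a h s s' (c e') k →
      Bef a h s s' (c e) k := by
  induction e', he using Int.leInduction with
  | base => exact fun _ hb => hb
  | succ e' he ih =>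
    intro hl hb
    refine ih (fun u u1 u2 => hl u u1 (by omega)) ?_
    have := hl (e' + 1) (by omega) le_rfl
    rw [add_sub_cancel_right] at this
    exact T.bef_move hv (T.cQ _) (T.cQ _) this hb

/-- Through `r' - r + 1` consecutive edges, with a proper beginning and end, more than that number
of vertices are visible: the vertices of these edges and the two adjacent vertices of the second
polygon form a convex chain. -/
theorem many (T : Ctx3 X D Q i a j c) (W : Walk i a j c x y) {r r' : ℤ} (hr : r ≤ r')
    (hx : x (r - 1) < x r) (hy : y r' < y (r' + 1)) (ng : ∀ s, r ≤ s → s < r' → x (s + 1) ≤ y s)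
    (hi : y r' - x r + 3 ≤ i) (hj : r' - r + 2 ≤ j) : r' - r + 1 ≤ y r' - x r := by
  have i3 := T.hull.npos
  have lr := (W.iv r).le
  have yr := W.ymono hr
  have aux : r - 1 + 1 = r := by ring
  -- the end vertices and everything between them are not visible through the edges
  have out : ∀ e k, r ≤ e → e ≤ r' → y r' + 1 ≤ k → k ≤ x r - 1 + i → L (c (e - 1)) (c e) (a k) := by
    intro e k e1 e2 k1 k2
    have m1 := W.ymono e2
    have m2 := W.xmono e1
    exact W.neg e k (by omega) (by omega)
  have perA : a (x r - 1 + i) = a (x r - 1) := T.hull.per _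
  have outA : ∀ e, r ≤ e → e ≤ r' → L (c (e - 1)) (c e) (a (x r - 1)) := by
    intro e e1 e2
    rw [← perA]; exact out e _ e1 e2 (by omega) le_rfl
  have endA : ∀ w ∈ Q, w ≠ c (r - 1) → L (c (r - 1)) w (a (x r - 1)) := by
    intro w hw hne
    have h1 := W.xy (r - 1)
    rw [aux] at h1
    refine T.J.endL (W.pos (r - 1) _ (by omega) (by omega)) ?_ hw hne
    rw [aux]; exact outA r le_rfl hr
  have startB : ∀ w ∈ Q, w ≠ c r' → L (c r') (a (y r' + 1)) w := by
    intro w hw hne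
    have h1 := W.xy r'
    exact T.J.startL (out r' _ hr le_rfl le_rfl (by omega)) (W.pos' r' _ (by omega) (by omega)) hw hne
  have fanA : ∀ k, y r' + 1 ≤ k → k ≤ x r - 2 + i → L (a (x r - 1)) (c (r - 1)) (a k) := by
    intro k k1 k2
    by_contra hn
    have hne : a (x r - 1) ≠ a k := by
      rw [← perA]; exact (T.hull.ne (by omega) (by omega)).symm
    have h1 := T.cfg.gp.not (T.aX _) (T.QX (T.cQ _)) (T.aX k) (T.Qa (T.cQ _) _).symm
      (T.Qa (T.cQ _) _) hne hn
    have h2 := T.fan_cut (u := c (r - 1)) (v := c r) (T.cQ (r - 1)) (p := k) (q := x r - 1 + i)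
      (by omega) (by omega) (by rw [perA]; exact h1.r)
      (fun l l1 l2 => out r l le_rfl hr (by omega) l2)
    exact h2.ne13 rfl
  have fanB : ∀ k, y r' + 2 ≤ k → k ≤ x r - 1 + i → L (c r') (a (y r' + 1)) (a k) := by
    intro k k1 k2
    by_contra hn
    have hne := T.hull.ne (i := y r' + 1) (j := k) (by omega) (by omega)
    have h1 := T.cfg.gp.not (T.QX (T.cQ _)) (T.aX _) (T.aX k) (T.Qa (T.cQ _) _)
      hne (T.Qa (T.cQ _) _) hn
    have h2 := T.fan_cut (u := c (r' - 1)) (v := c r') (T.cQ r') (p := y r' + 1) (q := k)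
      (by omega) (by omega) h1.rr
      (fun l l1 l2 => out r' l hr le_rfl l1 (by omega))
    exact h2.ne23 rfl
  have fanAB : L (a (x r - 1)) (c (r - 1)) (a (y r' + 1)) := fanA _ le_rfl (by omega)
  have fanBA : L (c r') (a (y r' + 1)) (a (x r - 1)) := by
    rw [← perA]; exact fanB _ (by omega) le_rfl
  -- the number of outer points beyond the chain
  have card : ((Fl X D i a (c (r - 1)) (x r - 1) (c r') (y r' + 1)).card : ℤ) ≤ y r' - x r + 4 := by
    have f1 : (Fl X D i a (c (r - 1)) (x r - 1) (c (r - 1)) (x r - 1 + 1)).card ≤ 2 :=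
      T.F1 (T.cQ _) fun z hz g1 _ => (endA z hz g1.ne13.symm).not_swap' g1
    have f2 : (Fl X D i a (c r') (y r') (c r') (y r' + 1)).card ≤ 2 :=
      T.F1 (T.cQ _) fun z hz _ g2 => (startB z hz g2.ne23.symm).not_swap g2
    have f3 := T.pth W (e := r - 1) (e' := r') (by omega)
      (fun s s1 s2 => ng s (by omega) s2) (x (r - 1 + 1)) (y r') le_rfl (W.iv _).le
      (W.iv _).le le_rfl (by rw [aux]; omega)
    rw [aux] at f3
    rw [sub_add_cancel] at f1
    have t1 := Fl_tri (X := X) (D := D) (i := i) (a := a) (c := c (r - 1)) (k := x r - 1)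
      (c'' := c r') (k'' := y r' + 1) (c (r - 1)) (x r)
    have t2 := Fl_tri (X := X) (D := D) (i := i) (a := a) (c := c (r - 1)) (k := x r)
      (c'' := c r') (k'' := y r' + 1) (c r') (y r')
    omega
  have mem : ∀ (s : ℤ) (u v w : Pt), r - 1 ≤ s → s ≤ r' → ori u v (c s) = 0 →
      (∀ k, y r' + 1 ≤ k → k ≤ x r - 1 + i → 0 ≤ ori u v (a k)) → w ∈ X → w ∉ D → ori u v w < 0 →
      w ∈ Fl X D i a (c (r - 1)) (x r - 1) (c r') (y r' + 1) := by
    intro s u v w s1 s2 h0 h1 hX hD hw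
    obtain ⟨b, b', hv, b1, b2⟩ := T.bef_of_cut (T.cQ s) h0 h1 hX hD hw
    refine mem_Fl.2 ⟨hX, hD, b, b', hv, ?_, ?_⟩
    · exact T.bef_back hv s1 (fun e e1 e2 => outA e (by omega) (by omega)) b1
    · intro hb
      exact b2 (T.bef_back hv s2 (fun e e1 e2 => out e _ (by omega) e2 le_rfl (by omega)) hb)
  -- the chain
  obtain ⟨l, hl⟩ : ∃ l : ℕ, r' - r = l := ⟨(r' - r).toNat, by omega⟩
  let d : ℕ → Pt := fun n =>
    if n = 0 then a (x r - 1) else if n = l + 3 then a (y r' + 1) else c (r - 2 + n)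
  have d0 : d 0 = a (x r - 1) := rfl
  have dl : d (l + 3) = a (y r' + 1) := by simp [d]
  have dm : ∀ n, 1 ≤ n → n ≤ l + 2 → d n = c (r - 2 + n) := by
    intro n n1 n2
    simp only [d]
    rw [if_neg (by omega), if_neg (by omega)]
  have cases3 : ∀ n, n ≤ l + 3 → n = 0 ∨ n = l + 3 ∨ (1 ≤ n ∧ n ≤ l + 2) := by intro n hn; omega
  have ch := T.cfg.chain (l + 3) (by omega) d ?_ ?_ ?_
    (Fl X D i a (c (r - 1)) (x r - 1) (c r') (y r' + 1)) ?_
  · omega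
  · intro n hn
    rcases cases3 n hn with rfl | rfl | ⟨n1, n2⟩
    · rw [d0]; exact T.aD _
    · rw [dl]; exact T.aD _
    · rw [dm n n1 n2]; exact T.QD (T.cQ _)
  · intro s t hst ht
    rcases cases3 t ht with rfl | rfl | ⟨t1, t2⟩
    · omega
    · rcases cases3 s (by omega) with rfl | rfl | ⟨s1, s2⟩
      · rw [d0, dl]; exact T.hull.ne (by omega) (by omega)
      · omega
      · rw [dl, dm s s1 s2]; exact T.Qa (T.cQ _) _
    · rcases cases3 s (by omega) with rfl | rfl | ⟨s1, s2⟩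
      · rw [d0, dm t t1 t2]; exact (T.Qa (T.cQ _) _).symm
      · omega
      · rw [dm s s1 s2, dm t t1 t2]; exact T.J.ne (by omega) (by omega)
  · intro t ht s hs n1 n2
    rcases (show t = 0 ∨ t = l + 2 ∨ (1 ≤ t ∧ t ≤ l + 1) by omega) with rfl | rfl | ⟨t1, t2⟩
    · rw [d0, dm 1 (by omega) (by omega), show r - 2 + ((1 : ℕ) : ℤ) = r - 1 by push_cast; ring]
      rcases cases3 s hs with rfl | rfl | ⟨s1, s2⟩
      · omega
      · rw [dl]; exact fanAB
      · rw [dm s s1 s2]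
        exact (endA _ (T.cQ _) (T.J.ne (by omega) (by omega)).symm).rr
    · rw [dl, dm (l + 2) (by omega) (by omega),
        show r - 2 + ((l + 2 : ℕ) : ℤ) = r' by push_cast; omega]
      rcases cases3 s hs with rfl | rfl | ⟨s1, s2⟩
      · rw [d0]; exact fanBA
      · omega
      · rw [dm s s1 s2]
        exact startB _ (T.cQ _) (T.J.ne (by omega) (by omega))
    · have e1 : d t = c (r - 1 + t - 1) := by
        rw [dm t t1 (by omega)]; congr 1; ring
      have e2 : d (t + 1) = c (r - 1 + t) := by
        rw [dm (t + 1) (by omega) (by omega)]; congr 1; push_cast; ring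
      rw [e1, e2]
      rcases cases3 s hs with rfl | rfl | ⟨s1, s2⟩
      · rw [d0]; exact outA _ (by omega) (by omega)
      · rw [dl]; exact out _ _ (by omega) (by omega) le_rfl (by omega)
      · rw [dm s s1 s2]
        refine T.hed _ _ (T.cQ _) ?_ ?_
        · rcases lt_or_gt_of_ne n1 with b | b
          · exact T.J.ne (by omega) (by omega)
          · exact (T.J.ne (by omega) (by omega)).symm
        · rcases lt_or_gt_of_ne n2 with b | b
          · exact T.J.ne (by omega) (by omega)
          · exact (T.J.ne (by omega) (by omega)).symm
  · rintro w hX hD ⟨t, ht, hw⟩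
    have hw' : ori (d t) (d (t + 1)) w < 0 := by
      unfold L at hw; have := ori_swap (d (t + 1)) (d t) w; linarith
    rcases (show t = 0 ∨ t = l + 2 ∨ (1 ≤ t ∧ t ≤ l + 1) by omega) with rfl | rfl | ⟨t1, t2⟩
    · rw [d0, dm 1 (by omega) (by omega),
        show r - 2 + ((1 : ℕ) : ℤ) = r - 1 by push_cast; ring] at hw'
      refine mem (r - 1) _ _ w le_rfl (by omega) (ori_self _ _) ?_ hX hD hw'
      intro k k1 k2
      rcases k2.eq_or_lt with rfl | k2
      · rw [perA, ori_self2]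
      · exact (fanA k k1 (by omega)).le
    · rw [dl, dm (l + 2) (by omega) (by omega),
        show r - 2 + ((l + 2 : ℕ) : ℤ) = r' by push_cast; omega] at hw'
      refine mem r' _ _ w (by omega) le_rfl (ori_self2 _ _) ?_ hX hD hw'
      intro k k1 k2
      rcases k1.eq_or_lt with rfl | k1
      · rw [ori_self]
      · exact (fanB k (by omega) k2).le
    · have e1 : d t = c (r - 1 + t - 1) := by
        rw [dm t t1 (by omega)]; congr 1; ring
      have e2 : d (t + 1) = c (r - 1 + t) := by
        rw [dm (t + 1) (by omega) (by omega)]; congr 1; push_cast; ring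
      rw [e1, e2] at hw'
      exact mem (r - 1 + t) _ _ w (by omega) (by omega) (ori_self _ _)
        (fun k k1 k2 => (out _ k (by omega) (by omega) k1 k2).le) hX hD hw'

end Ctx3
end

/-! ### The local picture at the only gap of an octagon inside an octagon -/

/-- The situation near the vertex `q` of the third polygon with neighbours `p` and `s`, when both
the second and the third polygon are octagons: `A` and `B` are consecutive vertices of the second
polygon, `A` is the last one seen through `p q`, and `B` is the first one seen through `q s`. The set
`K` consists of the points inside the third polygon, and `F` of outer points beyond `A B`. -/
structure Res (X D Q K F : Finset Pt) (p q s A B : Pt) : Prop where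
  sub : D ⊆ X
  gp : GP X
  ext : ∀ h ∈ X, h ∉ D → ∀ a ∈ X, ∀ b ∈ X, ∀ c ∈ X, L a b h → L b c h → L c a h → False
  hex : ∀ v₁ ∈ X, ∀ v₂ ∈ X, ∀ v₃ ∈ X, ∀ v₄ ∈ X, ∀ v₅ ∈ X, ∀ v₆ ∈ X, Hex v₁ v₂ v₃ v₄ v₅ v₆ →
    ∃ z ∈ D, InHex v₁ v₂ v₃ v₄ v₅ v₆ z
  QD : Q ⊆ D
  KQ : K ⊆ Q
  pQ : p ∈ Q
  qQ : q ∈ Q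
  sQ : s ∈ Q
  AD : A ∈ D
  BD : B ∈ D
  tri : ∀ z ∈ D, ∀ a ∈ Q, ∀ b ∈ Q, ∀ c ∈ Q, L a b z → L b c z → L c a z → z ∈ K
  K1 : ∀ t ∈ K, L p q t
  K2 : ∀ t ∈ K, L q s t
  K3 : ∀ t ∈ K, L p A t
  K4 : ∀ t ∈ K, L B s t
  K5 : ∀ t ∈ K, L q t A
  K6 : ∀ t ∈ K, L q B t
  qpA : L q p A
  sqB : L s q B
  out1 : ∀ z ∈ D, L q p z → L p A z → False
  out2 : ∀ z ∈ D, L s q z → L B s z → False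
  F0 : ∀ h ∈ F, h ∈ X ∧ h ∉ D
  F1 : ∀ h ∈ F, L p A h
  F2 : ∀ h ∈ F, L q A h
  F3 : ∀ h ∈ F, L B q h
  F4 : ∀ h ∈ F, L B s h
  card : 2 ≤ F.card
  ne : K.Nonempty

section
variable {X D Q K F : Finset Pt} {p q s A B t h : Pt}

open Classical in
theorem mem_mir {S : Finset Pt} {z : Pt} : z ∈ S.image mir ↔ mir z ∈ S := by
  rw [Finset.mem_image]
  constructor
  · rintro ⟨w, hw, rfl⟩; rwa [mir_mir]
  · exact fun hz => ⟨mir z, hz, mir_mir z⟩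

theorem L_mir' {a b c : Pt} : L a b c ↔ L (mir b) (mir a) (mir c) := L_mir.symm

namespace Res

open Classical in
/-- The reflected situation, with `p`, `A` and `s`, `B` exchanged. -/
theorem mirror (R : Res X D Q K F p q s A B) :
    Res (X.image mir) (D.image mir) (Q.image mir) (K.image mir) (F.image mir)
      (mir s) (mir q) (mir p) (mir B) (mir A) where
  sub := Finset.image_subset_image R.sub
  gp := fun a ha b hb c hc h1 h2 h3 => by
    rw [mem_mir] at ha hb hc
    rw [L_mir', L_mir' (a := b)]
    exact (R.gp _ ha _ hb _ hc (fun e => h1 (mir_inj e)) (fun e => h2 (mir_inj e))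
      (fun e => h3 (mir_inj e))).symm
  ext := fun h hh hn a ha b hb c hc l1 l2 l3 => by
    rw [mem_mir] at *
    rw [L_mir'] at l1 l2 l3
    exact R.ext _ hh hn _ ha _ hc _ hb l3 l2 l1
  hex := fun v₁ h₁ v₂ h₂ v₃ h₃ v₄ h₄ v₅ h₅ v₆ h₆ hx => by
    rw [mem_mir] at *
    obtain ⟨-, -, -, -, l236, -, -, -, l346, -⟩ := hx.all
    obtain ⟨l126, l136, l146, l156, l123, l134, l145, l234, l345, l456⟩ := hx
    obtain ⟨z, hz, z1, z2, z3, z4, z5, z6⟩ := R.hex _ h₆ _ h₅ _ h₄ _ h₃ _ h₂ _ h₁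
      ⟨L_mir.2 l156.r, L_mir.2 l146.r, L_mir.2 l136.r, L_mir.2 l126.r, L_mir.2 l456.r,
        L_mir.2 l346.r, L_mir.2 l236.r, L_mir.2 l345.r, L_mir.2 l234.r, L_mir.2 l123.r⟩
    refine ⟨mir z, by rwa [mem_mir, mir_mir], ?_, ?_, ?_, ?_, ?_, ?_⟩ <;>
      rw [L_mir', mir_mir] <;> assumption
  QD := Finset.image_subset_image R.QD
  KQ := Finset.image_subset_image R.KQ
  pQ := Finset.mem_image_of_mem _ R.sQ
  qQ := Finset.mem_image_of_mem _ R.qQ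
  sQ := Finset.mem_image_of_mem _ R.pQ
  AD := Finset.mem_image_of_mem _ R.BD
  BD := Finset.mem_image_of_mem _ R.AD
  tri := fun z hz a ha b hb c hc l1 l2 l3 => by
    rw [mem_mir] at *
    rw [L_mir'] at l1 l2 l3
    exact R.tri _ hz _ ha _ hc _ hb l3 l2 l1
  K1 := fun t ht => by rw [mem_mir] at ht; rw [L_mir', mir_mir, mir_mir]; exact R.K2 _ ht
  K2 := fun t ht => by rw [mem_mir] at ht; rw [L_mir', mir_mir, mir_mir]; exact R.K1 _ ht
  K3 := fun t ht => by rw [mem_mir] at ht; rw [L_mir', mir_mir, mir_mir]; exact R.K4 _ ht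
  K4 := fun t ht => by rw [mem_mir] at ht; rw [L_mir', mir_mir, mir_mir]; exact R.K3 _ ht
  K5 := fun t ht => by
    rw [mem_mir] at ht; rw [L_mir', mir_mir, mir_mir]; exact (R.K6 _ ht).rr
  K6 := fun t ht => by
    rw [mem_mir] at ht; rw [L_mir', mir_mir, mir_mir]; exact (R.K5 _ ht).rr
  qpA := L_mir.2 R.sqB
  sqB := L_mir.2 R.qpA
  out1 := fun z hz l1 l2 => by
    rw [mem_mir] at hz
    rw [L_mir', mir_mir, mir_mir] at l1 l2
    exact R.out2 _ hz l1 l2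
  out2 := fun z hz l1 l2 => by
    rw [mem_mir] at hz
    rw [L_mir', mir_mir, mir_mir] at l1 l2
    exact R.out1 _ hz l1 l2
  F0 := fun h hh => by rw [mem_mir] at *; rw [mem_mir]; exact R.F0 _ hh
  F1 := fun t ht => by rw [mem_mir] at ht; rw [L_mir', mir_mir, mir_mir]; exact R.F4 _ ht
  F2 := fun t ht => by rw [mem_mir] at ht; rw [L_mir', mir_mir, mir_mir]; exact R.F3 _ ht
  F3 := fun t ht => by rw [mem_mir] at ht; rw [L_mir', mir_mir, mir_mir]; exact R.F2 _ ht
  F4 := fun t ht => by rw [mem_mir] at ht; rw [L_mir', mir_mir, mir_mir]; exact R.F1 _ ht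
  card := by rw [Finset.card_image_of_injective _ fun _ _ e => mir_inj e]; exact R.card
  ne := R.ne.image _

theorem QX (R : Res X D Q K F p q s A B) (h : t ∈ Q) : t ∈ X := R.sub (R.QD h)
theorem KX (R : Res X D Q K F p q s A B) (h : t ∈ K) : t ∈ X := R.QX (R.KQ h)

theorem bulge (R : Res X D Q K F p q s A B) {c u v w : Pt} (hc : c ∈ X) (hu : u ∈ X) (hv : v ∈ X)
    (hv' : v ∉ D) (hw : w ∈ X) (h1 : L c u v) (h2 : L c v w) : L u v w := by
  have hne : u ≠ w := by rintro rfl; exact h1.not_swap' h2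
  rcases R.gp.cyc hu hv hw h1.ne23 h2.ne23 hne with g | g
  · exact g
  · exact (R.ext v hv hv' c hc u hu w hw h1 g.r h2.rr).elim

/-- The position of an outer point not beyond the line `t q`. -/
theorem side (R : Res X D Q K F p q s A B) (ht : t ∈ K) (hh : h ∈ F) (hl : L q t h) :
    L p h q ∧ ∀ κ ∈ K, L p h κ := by
  have h1 : L q p h := L.transFirst R.qpA (R.F2 h hh) (R.K1 t ht).r (R.K5 t ht) hl
  exact ⟨h1.r, fun κ hκ => L.transFirst h1.r (R.K1 κ hκ) (R.F1 h hh) R.qpA.r (R.K3 κ hκ)⟩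

/-- Some point of `F` lies to the left of all the lines `κ → q`. -/
theorem exists_behind (R : Res X D Q K F p q s A B) : ∃ h ∈ F, ∀ κ ∈ K, L κ q h := by
  classical
  have qX := R.QX R.qQ
  have pX := R.QX R.pQ
  have AX := R.sub R.AD
  -- the last point of `K` in the angle at `q`
  obtain ⟨t, ht, hmax⟩ := exists_least (fun m b => L q b m) K R.ne
    (fun a ha b hb hab => by
      have := R.gp.cyc qX (R.KX ha) (R.KX hb) (R.K6 a ha).ne13 hab (R.K6 b hb).ne13
      rcases this with e | e
      · exact Or.inr e
      · exact Or.inl e.r)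
    (fun a ha b hb c hc h1 h2 => L.transFirst h2 h1 (R.K6 c hc) (R.K6 b hb) (R.K6 a ha))
  have half : (F.filter fun h => L q t h).card ≤ 1 := by
    by_contra hcon
    push Not at hcon
    obtain ⟨h, hh, h', hh', l0⟩ := exists_two_around R.gp qX (d := B)
      (fun h hh => (R.F0 h (Finset.mem_filter.1 hh).1).1)
      (fun h hh => (R.F3 h (Finset.mem_filter.1 hh).1).r) hcon
    obtain ⟨hF, l1⟩ := Finset.mem_filter.1 hh
    obtain ⟨hF', l1'⟩ := Finset.mem_filter.1 hh'
    obtain ⟨hX, hD⟩ := R.F0 h hF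
    obtain ⟨hX', hD'⟩ := R.F0 h' hF'
    obtain ⟨m1, m2⟩ := R.side ht hF l1
    obtain ⟨m1', m2'⟩ := R.side ht hF' l1'
    have e1 := R.bulge qX AX hX hD hX' (R.F2 h hF) l0
    have e2 : L p h h' := by
      by_contra hn
      have := R.gp.not pX hX hX' m1.ne12 l0.ne23 m1'.ne12 hn
      exact (R.bulge pX AX hX' hD' hX (R.F1 h' hF') this.r).not_swap' e1
    obtain ⟨z, hz, hin⟩ := R.hex p pX A AX h hX h' hX' q qX t (R.KX ht)
      ⟨R.K3 t ht, m2 t ht, m2' t ht, R.K1 t ht, R.F1 h hF, e2, m1', e1, l0.r, l1'.rr⟩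
    rcases R.gp.cyc pX qX (R.sub hz) (R.K1 t ht).ne12 hin.z45.ne23 hin.z12.ne13 with e | e
    · have hK := R.tri z hz p R.pQ q R.qQ t (R.KQ ht) e hin.z56 hin.z61
      exact (hmax z hK hin.z56.ne23.symm).not_swap' hin.z56
    · exact R.out1 z hz e hin.z12
  obtain ⟨h, hF, hn⟩ : ∃ h ∈ F, ¬ L q t h := by
    by_contra hcon
    push Not at hcon
    rw [Finset.filter_true_of_mem hcon] at half
    have := R.card
    omega
  obtain ⟨hX, hD⟩ := R.F0 h hF
  have l0 := R.gp.not qX (R.KX ht) hX (R.K6 t ht).ne13 (fun e => hD (e ▸ R.QD (R.KQ ht)))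
    (fun e => hD (e ▸ R.QD R.qQ)) hn
  refine ⟨h, hF, fun κ hκ => ?_⟩
  by_cases hne : κ = t
  · rw [hne]; exact l0
  by_contra hn
  have l1 := R.gp.not (R.KX hκ) qX hX (R.K6 κ hκ).ne13.symm (fun e => hD (e ▸ R.QD R.qQ))
    (fun e => hD (e ▸ R.QD (R.KQ hκ))) hn
  exact (L.transLast (R.K6 κ hκ) l1 (R.K6 t ht) (hmax κ hκ hne) l0.r).not_swap' (R.F3 h hF).r

/-- Mirror image of `exists_behind`. -/
theorem exists_before (R : Res X D Q K F p q s A B) : ∃ h ∈ F, ∀ κ ∈ K, L q κ h := by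
  classical
  obtain ⟨h, hh, H⟩ := R.mirror.exists_behind
  rw [mem_mir] at hh
  refine ⟨_, hh, fun κ hκ => ?_⟩
  have := H (mir κ) (Finset.mem_image_of_mem _ hκ)
  rwa [L_mir', mir_mir, mir_mir] at this

/-- The lines from `q` and `p` to a suitable point `t` of `K` have the rest of `K` on one side. -/
theorem exists_first (R : Res X D Q K F p q s A B) :
    ∃ t ∈ K, ∀ κ ∈ K, κ ≠ t → L t q κ ∧ L p t κ := by
  classical
  have qX := R.QX R.qQ
  have pX := R.QX R.pQ
  have AX := R.sub R.AD
  obtain ⟨h, hF, H⟩ := R.exists_before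
  obtain ⟨hX, hD⟩ := R.F0 h hF
  have tot : ∀ a ∈ K, ∀ b ∈ K, a ≠ b → L p a b ∨ L p b a := by
    intro a ha b hb hab
    rcases R.gp.cyc pX (R.KX ha) (R.KX hb) (R.K1 a ha).ne13 hab (R.K1 b hb).ne13 with e | e
    · exact Or.inl e
    · exact Or.inr e.r
  have tr : ∀ a ∈ K, ∀ b ∈ K, ∀ c ∈ K, L p a b → L p b c → L p a c :=
    fun a ha b hb c hc h1 h2 => L.transFirst h1 h2 (R.K1 a ha) (R.K1 b hb) (R.K1 c hc)
  obtain ⟨t, ht, hmin⟩ := exists_least (fun m b => L p m b) K R.ne tot tr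
  refine ⟨t, ht, fun κ hκ hne => ⟨?_, hmin κ hκ hne⟩⟩
  by_contra hn
  have hκ' : L q t κ :=
    R.gp.not (R.KX ht) qX (R.KX hκ) (R.K1 t ht).ne23.symm (R.K1 κ hκ).ne23 hne.symm hn
  obtain ⟨y, hy, hmin'⟩ := exists_least (fun m b => L p m b) (K.filter fun κ => L q t κ)
    ⟨κ, Finset.mem_filter.2 ⟨hκ, hκ'⟩⟩
    (fun a ha b hb => tot a (Finset.mem_filter.1 ha).1 b (Finset.mem_filter.1 hb).1)
    (fun a ha b hb c hc => tr a (Finset.mem_filter.1 ha).1 b (Finset.mem_filter.1 hb).1 c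
      (Finset.mem_filter.1 hc).1)
  obtain ⟨hyK, l1⟩ := Finset.mem_filter.1 hy
  obtain ⟨m1, m2⟩ := R.side ht hF (H t ht)
  obtain ⟨z, hz, hin⟩ := R.hex p pX A AX h hX q qX t (R.KX ht) y (R.KX hyK)
    ⟨R.K3 y hyK, m2 y hyK, R.K1 y hyK, hmin y hyK l1.ne23.symm, R.F1 h hF, m1, R.K1 t ht,
      (R.F2 h hF).r, (H t ht).rr, l1⟩
  rcases R.gp.cyc pX qX (R.sub hz) (R.K1 t ht).ne12 hin.z45.ne13 hin.z12.ne13 with e | e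
  swap
  · exact R.out1 z hz e hin.z12
  rcases R.gp.cyc pX (R.KX ht) (R.sub hz) (R.K1 t ht).ne13 hin.z45.ne23 hin.z12.ne13 with e' | e'
  · have hK := R.tri z hz p R.pQ t (R.KQ ht) y (R.KQ hyK) e' hin.z56 hin.z61
    exact (hmin' z (Finset.mem_filter.2 ⟨hK, hin.z45⟩) hin.z56.ne23.symm).not_swap' hin.z61.r
  · have hK := R.tri z hz p R.pQ q R.qQ t (R.KQ ht) e hin.z45 e'
    exact absurd e' (hmin z hK hin.z45.ne23.symm).not_swap

/-- Mirror image of `exists_first`. -/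
theorem exists_last (R : Res X D Q K F p q s A B) :
    ∃ t ∈ K, ∀ κ ∈ K, κ ≠ t → L q t κ ∧ L t s κ := by
  classical
  obtain ⟨t, ht, H⟩ := R.mirror.exists_first
  rw [mem_mir] at ht
  refine ⟨_, ht, fun κ hκ hne => ?_⟩
  obtain ⟨h1, h2⟩ := H (mir κ) (Finset.mem_image_of_mem _ hκ)
    (fun e => hne (by rw [← e, mir_mir]))
  rw [L_mir', mir_mir, mir_mir] at h1 h2
  exact ⟨h1, h2⟩

end Res
end

/-! ### Only one gap, and an octagon inside an octagon -/

section
variable {X D Q : Finset Pt} {i j : ℕ} {a c : ℤ → Pt} {x y : ℤ → ℤ} {g g' : ℤ} {t : Pt}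

namespace Ctx3

/-- A bad arc with few visible vertices and few edges contradicts `many`, applied to the edges
provided by `arc`. -/
theorem bad_small (T : Ctx3 X D Q i a j c) (W : Walk i a j c x y) (hb : Bad X D i a c x y g g')
    (ht : t ∈ Q) (htc : ∀ s, g ≤ s → s ≤ g' → t ≠ c s) (hi : y g' - x (g + 1) + 3 ≤ i)
    (hj : g' - g + 1 ≤ j) : False := by
  obtain ⟨r, r', h1, h2, h3, h4, -⟩ := T.arc W hb ht htc
  obtain ⟨u, u', u1, u2, u3, u4, u5, u6, u7, u8⟩ := extend W hb.1 h1 h3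
  have m1 := W.xmono u1
  have m2 := W.ymono u4
  have := T.many W (by omega) u7 u8 (fun s s1 s2 => hb.1.non s (by omega) (by omega))
    (by omega) (by omega)
  omega

/-- A bad arc that is not a full turn sees all vertices except at most one, or consists of almost all edges of
a third polygon which is empty inside. -/
theorem bad_large (T : Ctx3 X D Q i a j c) (W : Walk i a j c x y) (hb : Bad X D i a c x y g g')
    (hlt : g' < g + j) :
    (i : ℤ) - 1 ≤ y g' - x (g + 1) + 1 ∨ (core Q c = ∅ ∧ (j : ℤ) - 1 ≤ g' - g) := by
  by_contra hcon
  push Not at hcon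
  obtain ⟨c1, c2⟩ := hcon
  rcases Finset.eq_empty_or_nonempty (core Q c) with h0 | ⟨t, ht⟩
  · have := c2 h0
    exact T.bad_small W hb (T.cQ (g' + 1))
      (fun s s1 s2 => (T.J.ne (i := s) (j := g' + 1) (by omega) (by omega)).symm)
      (by omega) (by omega)
  · exact T.bad_small W hb (core_sub ht) (fun s _ _ => (mem_core.1 ht).2 s) (by omega) (by omega)

/-- Two bad arcs in one turn would be too long for `bad_large`. -/
theorem eq_eight (T : Ctx3 X D Q i a j c) (W : Walk i a j c x y) : i = 8 := by
  obtain ⟨g, hg⟩ := T.exists_gap W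
  obtain ⟨u, u', hb, u1, u2⟩ := T.exists_bad W hg
  have hu := hb.1.lt
  rcases T.another_bad W hb (by omega) with ⟨v, v', hb', v1, v2⟩ | h8
  swap
  · exact h8
  exfalso
  have hv := hb'.1.lt
  have i5 := T.five_le W
  have j3 := T.J.npos
  have e1 := W.xmono (show u' + 1 ≤ v + 1 by omega)
  have e2 := W.xmono (show v' + 1 ≤ u + 1 + j by omega)
  rw [W.px] at e2
  have e3 := hb.1.right
  have e4 := hb'.1.right
  have short : ∀ u, y (u + 1) ≤ x (u + 1) + 2 := by
    intro u
    have hl := (W.iv (u + 1)).lt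
    exact T.T5 (T.cQ u) (T.cQ (u + 1)) (T.J.ed u) (by omega) (W.pos' u)
  rcases T.bad_large W hb (by omega) with c1 | ⟨-, c1⟩ <;>
    rcases T.bad_large W hb' (by omega) with c2 | ⟨-, c2⟩
  · omega
  · obtain rfl : u' = u + 1 := by omega
    have := short u
    omega
  · obtain rfl : v' = v + 1 := by omega
    have := short v
    omega
  · omega

/-- If the second polygon is an octagon, then there is only one gap up to periodicity. -/
theorem exists_only_gap (T : Ctx3 X D Q 8 a j c) (W : Walk 8 a j c x y)
    (hK : (core Q c).Nonempty) : ∃ g, Bad X D 8 a c x y g (g + j) := by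
  obtain ⟨g, hg⟩ := T.exists_gap W
  obtain ⟨u, u', hb, u1, u2⟩ := T.exists_bad W hg
  have hu := hb.1.lt
  by_cases hlt : u' < u + j
  swap
  · obtain rfl : u' = u + j := by omega
    exact ⟨u, hb⟩
  exfalso
  rcases T.bad_large W hb hlt with c1 | ⟨c1, -⟩
  swap
  · exact hK.ne_empty c1
  obtain ⟨v', hA, hv'⟩ := exists_arc W hb.1.right ((gap_per W).2 hb.1.left) hlt
  have hv := hA.lt
  have e1 := W.xmono (show v' + 1 ≤ u + 1 + j by omega)
  rw [W.px] at e1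
  have e2 := hA.right
  have e3 := hb.1.right
  have hb' : Bad X D 8 a c x y u' v' := ⟨hA, by
    have : 0 ≤ cost X D 8 a c x y u' v' := by unfold cost; positivity
    omega⟩
  rcases T.bad_large W hb' (by omega) with c2 | ⟨c2, -⟩
  · omega
  · exact hK.ne_empty c2

end Ctx3
end

/-! ### An octagon inside an octagon is impossible -/

section
variable {X D Q : Finset Pt} {i j : ℕ} {a c : ℤ → Pt} {x y : ℤ → ℤ} {g g' : ℤ} {t : Pt}

theorem exists_shift {n : ℕ} (hn : 0 < n) (b k : ℤ) : ∃ m : ℤ, b ≤ k + m * n ∧ k + m * n < b + n := by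
  refine ⟨-((k - b) / n), ?_, ?_⟩
  · have := Int.emod_nonneg (k - b) (show (n : ℤ) ≠ 0 by omega)
    rw [Int.emod_def] at this; linarith [mul_comm (n : ℤ) ((k - b) / n)]
  · have := Int.emod_lt_of_pos (k - b) (show (0 : ℤ) < n by omega)
    rw [Int.emod_def] at this; linarith [mul_comm (n : ℤ) ((k - b) / n)]

theorem Hull.shift {n : ℕ} {v : ℤ → Pt} (hv : Hull X n v) (b k : ℤ) :
    ∃ k', b ≤ k' ∧ k' < b + n ∧ v k = v k' := by
  obtain ⟨m, h1, h2⟩ := exists_shift (show 0 < n by have := hv.npos; omega) b k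
  exact ⟨_, h1, h2, (hv.perm k m).symm⟩

namespace Ctx3

/-- A vertex of the second polygon that sees exactly one edge of an octagon would extend the octagon
to a nonagon. -/
theorem noSingle (T : Ctx3 X D Q i a j c) (hj : j = 8) {e k : ℤ} (h1 : L (c e) (c (e - 1)) (a k))
    (h2 : ∀ e', e < e' → e' < e + j → L (c (e' - 1)) (c e') (a k)) : False := by
  classical
  have j3 := T.J.npos
  have prev : L (c (e - 1 - 1)) (c (e - 1)) (a k) := by
    have := h2 (e - 1 + j) (by omega) (by omega)
    rwa [T.cj, show e - 1 + (j : ℤ) - 1 = e - 1 - 1 + j by ring, T.cj] at this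
  have hZ : ∀ w ∈ insert (a k) (Q \ core Q c), w ≠ a k → w ∈ Q := by
    intro w hw hne
    rcases Finset.mem_insert.1 hw with e | e
    · exact absurd e hne
    · exact (Finset.mem_sdiff.1 e).1
  have hcard : (insert (a k) (Q \ core Q c)).card = 9 := by
    rw [Finset.card_insert_of_notMem (fun h => T.aQ k (Finset.mem_sdiff.1 h).1), T.J.card, hj]
  have := T.cfg.only9 (insert (a k) (Q \ core Q c)) ?_ ⟨a k, Finset.mem_insert_self _ _, T.aD k⟩ ?_
  · omega
  · intro w hw
    by_cases hne : w = a k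
    · rw [hne]; exact T.aX k
    · exact T.QX (hZ w hw hne)
  intro z hz _
  by_cases hne : z = a k
  · subst hne
    refine ⟨c (e - 1), T.Qa (T.cQ _) _, Or.inr fun w hw n1 n2 => ?_⟩
    exact T.J.startL prev (by rwa [sub_add_cancel]) (hZ w hw n1) n2
  obtain ⟨hzQ, hzc⟩ := Finset.mem_sdiff.1 ((Finset.mem_insert.1 hz).resolve_left hne)
  obtain ⟨s, rfl⟩ : ∃ s, z = c s := by
    by_contra hcon
    push Not at hcon
    exact hzc (mem_core.2 ⟨hzQ, hcon⟩)
  obtain ⟨s', s1, s2, es⟩ := T.J.shift (e - 1) s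
  rw [es]
  by_cases hs : s' = e - 1
  · subst hs
    refine ⟨c (e - 1 - 1), T.cne (e - 1), Or.inr fun w hw n1 n2 => ?_⟩
    by_cases hw' : w = a k
    · rw [hw']; exact prev
    · exact T.hed (e - 1) w (hZ w hw hw') n2 n1
  · refine ⟨c (s' + 1), (T.J.ne_succ s').symm, Or.inl fun w hw n1 n2 => ?_⟩
    by_cases hw' : w = a k
    · rw [hw']
      have := h2 (s' + 1) (by omega) (by omega)
      rwa [add_sub_cancel_right] at this
    · exact T.J.ed s' w (hZ w hw hw') n1 n2

/-- By `noSingle`, the first and the last vertex of the arc are visible through two edges. -/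
theorem ends (T : Ctx3 X D Q i a j c) (W : Walk i a j c x y) (hj : j = 8)
    (hb : Arc x y g (g + j)) : x (g + 2) = x (g + 1) ∧ y (g + j - 1) = y (g + j) := by
  have hp := W.py g
  have hl := hb.left
  have hr := hb.right
  constructor
  · by_contra hcon
    have h0 := W.xmono (show g + 1 ≤ g + 2 by omega)
    refine T.noSingle hj (e := g + 1) (k := x (g + 1)) (W.pos _ _ le_rfl (W.iv _).le) ?_
    intro e' e1 e2
    have m1 := W.xmono (show g + 2 ≤ e' by omega)
    have m2 := W.ymono (show e' ≤ g + j by omega)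
    have := W.neg e' (x (g + 1) + i) (by omega) (by omega)
    rwa [T.hull.per] at this
  · by_contra hcon
    have h0 := W.ymono (show g + j - 1 ≤ g + j by omega)
    refine T.noSingle hj (e := g + j) (k := y (g + j)) (W.pos _ _ (W.iv _).le le_rfl) ?_
    intro e' e1 e2
    have m1 := W.xmono (show g + j + 1 ≤ e' by omega)
    have m2 := W.ymono (show e' ≤ g + j - 1 + j by omega)
    rw [W.py] at m2
    have := W.neg e' (y (g + j) + i) (by omega) (by omega)
    rwa [T.hull.per] at this

/-- A bad arc making a full turn is itself the range of edges found in `arc`, and the third polygon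
is an octagon. -/
theorem full (T : Ctx3 X D Q i a j c) (W : Walk i a j c x y) (hi : i = 8) (hj : j ≤ 8)
    (hb : Bad X D i a c x y g (g + j)) (ht : t ∈ core Q c) :
    j = 8 ∧ ∀ s, g + 1 ≤ s → s < g + j → (∃ z, PP a c x y t s z) ∧ ∃ z, MM a c x y t s z := by
  obtain ⟨r, r', h1, h2, h3, h4, h5⟩ := T.arc W hb (core_sub ht) (fun s _ _ => (mem_core.1 ht).2 s)
  obtain ⟨u, u', u1, u2, u3, u4, u5, u6, u7, u8⟩ := extend W hb.1 h1 h3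
  have m1 := W.xmono h1
  have m2 := W.ymono h3
  have hp := W.py g
  have hl := hb.1.left
  have big : 6 ≤ y r' - x r ∧ (y r' - x r = 6 → u' - u + 2 ≤ j) := by
    by_cases hs : u' - u + 2 ≤ j
    · refine ⟨?_, fun _ => hs⟩
      by_contra hcon
      have := T.many W (by omega) u7 u8 (fun s s1 s2 => hb.1.non s (by omega) (by omega))
        (by omega) (by omega)
      omega
    · obtain rfl : u = g + 1 := by omega
      obtain rfl : u' = g + j := by omega
      constructor <;> omega
  have j8 : j = 8 := by
    by_contra hcon
    obtain rfl : r = g + 1 := by omega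
    obtain rfl : r' = g + j := by omega
    omega
  refine ⟨j8, ?_⟩
  obtain ⟨e1, e2⟩ := T.ends W j8 hb.1
  have : r = g + 1 ∧ r' = g + j := by
    by_cases hr : r = g + 1
    · subst hr
      refine ⟨rfl, ?_⟩
      by_contra hr'
      obtain rfl : r' = g + j - 1 := by omega
      omega
    · obtain rfl : r = g + 2 := by omega
      obtain rfl : r' = g + j := by omega
      omega
  obtain ⟨rfl, rfl⟩ := this
  exact h5

/-- If a vertex visible through the edge `c s c (s + 1)` lies to the right of `t → c s`, so does the
first vertex visible through this edge. -/
theorem sign_down (T : Ctx3 X D Q i a j c) (W : Walk i a j c x y) (ht : t ∈ core Q c) {s z : ℤ}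
    (hz : x (s + 1) ≤ z) : z ≤ y (s + 1) → L (c s) t (a z) → L (c s) t (a (x (s + 1))) := by
  induction z, hz using Int.leInduction with
  | base => exact fun _ h => h
  | succ z hz ih =>
    intro h1 h2
    apply ih (by omega)
    obtain ⟨tQ, tc⟩ := mem_core.1 ht
    by_contra hcon
    have l1 := T.cfg.gp.not (T.QX (T.cQ s)) (T.QX tQ) (T.aX z) (tc s).symm (T.Qa tQ z)
      (T.Qa (T.cQ s) z) hcon
    exact (L.transFirst (W.pos' s (z + 1) (by omega) h1).r (T.J.ed s t tQ (tc _) (tc _))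
      (T.edQ (T.cQ s) z).rr (W.pos' s z hz (by omega)).r l1.r).not_swap' h2

/-- Among the vertices visible through an edge ending in `c s`, those to the left of `t → c s` are the
last ones. -/
theorem sign_up (T : Ctx3 X D Q i a j c) (W : Walk i a j c x y) (ht : t ∈ core Q c) {s z z' : ℤ}
    (hz : z ≤ z') (h1 : x s ≤ z) : z' ≤ y s → L t (c s) (a z) → L t (c s) (a z') := by
  induction z', hz using Int.leInduction with
  | base => exact fun _ h => h
  | succ z' hz ih =>
    intro h2 h3
    have h4 := ih (by omega) h3
    obtain ⟨tQ, tc⟩ := mem_core.1 ht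
    by_contra hcon
    have l1 := T.cfg.gp.not (T.QX tQ) (T.QX (T.cQ s)) (T.aX (z' + 1)) (tc s) (T.Qa (T.cQ s) _)
      (T.Qa tQ _) hcon
    exact (L.transLast (T.hed s t tQ (tc _) (tc _)).r (W.pos s z' (by omega) (by omega)) l1
      (W.pos s (z' + 1) (by omega) h2) (T.edQ (T.cQ s) z').rr).not_swap h4

/-- The vertices visible through an edge are in counterclockwise order around its first end point. -/
theorem order_prev (T : Ctx3 X D Q i a j c) (W : Walk i a j c x y) {e k k' : ℤ} (h1 : x e ≤ k)
    (hk : k + 1 ≤ k') : k' ≤ y e → L (c (e - 1)) (a k) (a k') := by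
  induction k', hk using Int.leInduction with
  | base => exact fun _ => (T.edQ (T.cQ _) k).rr
  | succ z hz ih =>
    intro h
    exact L.transLast (ih (by omega)) (T.edQ (T.cQ _) z).rr (W.pos e k h1 (by omega)).r
      (W.pos e z (by omega) (by omega)).r (W.pos e (z + 1) (by omega) h).r

/-- The vertices visible through an edge are in counterclockwise order around its second end point. -/
theorem order_next (T : Ctx3 X D Q i a j c) (W : Walk i a j c x y) {e k k' : ℤ} (h1 : x e ≤ k)
    (hk : k + 1 ≤ k') : k' ≤ y e → L (c e) (a k) (a k') := by
  induction k', hk using Int.leInduction with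
  | base => exact fun _ => (T.edQ (T.cQ _) k).rr
  | succ z hz ih =>
    intro h
    exact L.transFirst (ih (by omega)) (T.edQ (T.cQ _) z).rr (W.pos e k h1 (by omega))
      (W.pos e z (by omega) (by omega)) (W.pos e (z + 1) (by omega) h)

/-- A point of `D` in a triangle with vertices in `Q` lies inside the third polygon. -/
theorem tri (T : Ctx3 X D Q i a j c) {z p q r : Pt} (hz : z ∈ D) (hp : p ∈ Q) (hq : q ∈ Q)
    (hr : r ∈ Q) (h1 : L p q z) (h2 : L q r z) (h3 : L r p z) : z ∈ core Q c := by
  have hzQ : z ∈ Q := by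
    by_contra hn
    exact T.lay.ext z hz hn p (T.QD hp) q (T.QD hq) r (T.QD hr) h1 h2 h3
  refine mem_core.2 ⟨hzQ, fun e he => ?_⟩
  have ed : ∀ w ∈ Q, w ≠ c e → w ≠ c (e + 1) → L (c e) (c (e + 1)) w := T.J.ed e
  have hn : ∀ w ∈ Q, 0 ≤ ori (c e) (c (e + 1)) w := by
    intro w hw
    by_cases e1 : w = c e
    · rw [e1, ori_self2]
    by_cases e2 : w = c (e + 1)
    · rw [e2, ori_self]
    exact (ed w hw e1 e2).le
  have hpos : 0 < ori (c e) (c (e + 1)) p + ori (c e) (c (e + 1)) q + ori (c e) (c (e + 1)) r := by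
    by_cases ep : p = c (e + 1)
    · have : L (c e) (c (e + 1)) q := ed q hq (he ▸ h1.ne23) (ep ▸ h1.ne12.symm)
      have := hn p hp; have := hn r hr
      unfold L at *; linarith
    · have : L (c e) (c (e + 1)) p := ed p hp (he ▸ h1.ne13) ep
      have := hn q hq; have := hn r hr
      unfold L at *; linarith
  have := L.inTri h1 h2 h3 (hn p hp) (hn q hq) (hn r hr) hpos
  rw [he] at this
  exact this.ne13 rfl

end Ctx3
end

section
variable {X D Q : Finset Pt} {i j : ℕ} {a c : ℤ → Pt} {x y : ℤ → ℤ} {g g' : ℤ} {t : Pt}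

namespace Ctx3

/-- At the only gap the octagons are in the situation of `Res`. -/
theorem res (T : Ctx3 X D Q i a j c) (W : Walk i a j c x y) (hi : i = 8) (hj : j = 8)
    (hb : Bad X D i a c x y g (g + j)) (hK : (core Q c).Nonempty) :
    Res X D Q (core Q c) (Fl X D i a (c (g - 1)) (y g) (c (g + 1)) (y g + 1)) (c (g - 1)) (c g)
      (c (g + 1)) (a (y g)) (a (y g + 1)) := by
  have hA := hb.1
  obtain ⟨e1, e2⟩ := T.ends W hj hA
  have hl := hA.left
  have hp := W.py g
  have ng := hA.non
  have cg : c (g + j - 1) = c (g - 1) := by rw [show g + (j : ℤ) - 1 = g - 1 + j by ring, T.cj]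
  have ag : a (y (g + j)) = a (y g) := by rw [hp, T.hull.per]
  have qpA : L (c g) (c (g - 1)) (a (y g)) := W.pos g _ (W.iv g).le le_rfl
  have sqB : L (c (g + 1)) (c g) (a (y g + 1)) := W.pos' g _ hl.le (hl ▸ (W.iv _).le)
  have F23 : ∀ h ∈ Fl X D i a (c (g - 1)) (y g) (c (g + 1)) (y g + 1),
      L (c g) (a (y g)) h ∧ L (a (y g + 1)) (c g) h := by
    intro h hh
    rcases mem_Fl_tri (c g) (y g) hh with h1 | h1
    · exact absurd h1 (T.Fl_move (T.cQ _) (T.cQ _) qpA)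
    rcases mem_Fl_tri (c g) (y g + 1) h1 with h2 | h2
    · exact (T.Fl_step (T.cQ _) (T.cQ _) h2).2
    · exact absurd h2 (T.Fl_move (T.cQ _) (T.cQ _) sqB)
  exact {
    sub := T.cfg.sub
    gp := T.cfg.gp
    ext := T.cfg.ext
    hex := T.cfg.hex
    QD := T.lay.sub
    KQ := core_sub
    pQ := T.cQ _
    qQ := T.cQ _
    sQ := T.cQ _
    AD := T.aD _
    BD := T.aD _
    tri := fun z hz a ha b hb c hc => T.tri hz ha hb hc
    K1 := fun t ht => T.hed g t (core_sub ht) ((mem_core.1 ht).2 _) ((mem_core.1 ht).2 _)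
    K2 := fun t ht => T.J.ed g t (core_sub ht) ((mem_core.1 ht).2 _) ((mem_core.1 ht).2 _)
    K3 := fun t ht => by
      obtain ⟨⟨z, z1, z2, z3⟩, -⟩ :=
        (T.full W hi hj.le hb ht).2 (g + j - 1) (by omega) (by omega)
      have n1 := ng (g + j - 1) (by omega) (by omega)
      rw [max_eq_left n1] at z2
      have := T.sign_up W ht z2 ((W.xx _).trans z1) le_rfl z3
      rw [e2, cg, ag] at this
      exact this.r
    K4 := fun t ht => by
      obtain ⟨-, z, z1, z2, z3⟩ := (T.full W hi hj.le hb ht).2 (g + 1) le_rfl (by omega)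
      have n1 := ng (g + 1) (by omega) (by omega)
      rw [min_eq_left n1] at z1
      have := T.sign_down W ht z1 (z2.trans (W.yy _)) z3
      rw [show g + 1 + 1 = g + 2 by ring, e1, hl] at this
      exact this.rr
    K5 := fun t ht => T.endGap W hl (core_sub ht) ((mem_core.1 ht).2 _)
    K6 := fun t ht => hl ▸ T.startGap W hl (core_sub ht) ((mem_core.1 ht).2 _)
    qpA := qpA
    sqB := sqB
    out1 := fun z hz h1 h2 => by
      rcases T.D_cases hz with hQ | ⟨k, rfl⟩
      · exact h1.not_swap (T.hed g z hQ h1.ne23.symm h1.ne13.symm)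
      obtain ⟨k', k1, k2, ek⟩ := T.hull.shift (x g) k
      rw [ek] at h1 h2
      by_cases k3 : y g < k'
      · exact h1.not_swap (W.neg g k' k3 k2)
      by_cases k4 : k' = y g
      · subst k4; exact h2.ne23 rfl
      · exact h2.not_swap' (T.order_prev W k1 (by omega) le_rfl)
    out2 := fun z hz h1 h2 => by
      rcases T.D_cases hz with hQ | ⟨k, rfl⟩
      · exact h1.not_swap (T.J.ed g z hQ h1.ne23.symm h1.ne13.symm)
      obtain ⟨k', k1, k2, ek⟩ := T.hull.shift (x (g + 1)) k
      rw [ek] at h1 h2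
      rw [← hl] at h2
      by_cases k3 : y (g + 1) < k'
      · exact h1.not_swap (W.neg' g k' k3 k2)
      by_cases k4 : k' = x (g + 1)
      · rw [k4] at h2; exact h2.ne13 rfl
      · exact h2.not_swap (T.order_next W le_rfl (by omega) (by omega))
    F0 := fun h hh => ⟨(mem_Fl.1 hh).1, (mem_Fl.1 hh).2.1⟩
    F1 := fun h hh => (T.Fl_step (T.cQ _) (T.cQ _) hh).2.1
    F2 := fun h hh => (F23 h hh).1
    F3 := fun h hh => (F23 h hh).2
    F4 := fun h hh => (T.Fl_step (T.cQ _) (T.cQ _) hh).2.2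
    card := by
      have h9 := T.Fl_round (T.cQ (g - 1)) (y g)
      have h1 := Fl_tri (X := X) (D := D) (i := i) (a := a) (c := c (g - 1)) (k := y g)
        (c'' := c (g - 1)) (k'' := y g + i) (c (g + 1)) (y g + 1)
      have l1 := (W.iv (g + 1)).le
      have m1 := W.xmono (show g + j - 1 ≤ g + j by omega)
      have m2 := W.ymono (show g + 1 ≤ g + 2 by omega)
      have m3 := (W.iv (g + j - 1)).le
      have h2 := T.pth W (e := g + 1) (e' := g + j - 1) (by omega)
        (fun s s1 s2 => ng s (by omega) (by omega)) (y g + 1) (y g + i)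
        (by rw [show g + 1 + 1 = g + 2 by ring]; omega)
        (by rw [show g + 1 + 1 = g + 2 by ring]; omega) (by omega) (by omega) (by omega)
      rw [cg] at h2
      omega
    ne := hK }

theorem false (T : Ctx3 X D Q i a j c) : False := by
  classical
  obtain ⟨x, y, W⟩ := T.exists_walk
  have hi := T.eq_eight W
  subst hi
  have hj := T.cfg.le8 T.lay.sub T.J
  have hK := T.lay.core_core T.hull le_rfl T.J
  obtain ⟨g, hb⟩ := T.exists_only_gap W hK
  obtain ⟨t₀, ht₀⟩ := hK
  have j8 := (T.full W rfl hj hb ht₀).1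
  have R := T.res W rfl j8 hb ⟨t₀, ht₀⟩
  have hL := T.lay.nest T.J
  obtain ⟨t₁, ht₁, H₁⟩ := R.exists_first
  obtain ⟨t₂, ht₂, H₂⟩ := R.exists_last
  have hne : t₂ ≠ t₁ := by
    rintro rfl
    have h3 := hL.three_le T.J (by omega)
    have : core Q c ⊆ {t₂} := by
      intro κ hκ
      rw [Finset.mem_singleton]
      by_contra hn
      exact (H₁ κ hκ hn).1.not_swap (H₂ κ hκ hn).1
    have := Finset.card_le_card this
    rw [Finset.card_singleton] at this
    omega
  obtain ⟨h1, h2⟩ := H₁ t₂ ht₂ hne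
  obtain ⟨h3, h4⟩ := H₂ t₁ ht₁ hne.symm
  have q0 : L t₂ t₁ (c g) := h1.rr
  have q1 : L t₁ t₂ (c (g - 1)) := h2.r
  have q2 : L t₁ t₂ (c (g + 1)) := h4.rr
  -- only `c g` lies to the right of the line
  have left : ∀ k, c k ≠ c g → L t₁ t₂ (c k) := by
    obtain ⟨x, y, v1, v2, v3, v4⟩ := hL.visLine T.J ht₁ ht₂ hne.symm
    intro k hk
    obtain ⟨m, m1, m2⟩ := exists_shift (show 0 < j by omega) x g
    have r0 := T.J.perm g m
    have r1 := T.J.perm (g - 1) m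
    have r2 := T.J.perm (g + 1) m
    rw [show g - 1 + m * j = g + m * j - 1 by ring] at r1
    rw [show g + 1 + m * j = g + m * j + 1 by ring] at r2
    rw [← r0] at q0 hk
    rw [← r1] at q1
    rw [← r2] at q2
    generalize g + m * (j : ℤ) = G at *
    have a0 : G ≤ y := by
      by_contra hn
      exact q0.not_swap (v4 G (by omega) m2)
    have a1 : y < G + 1 := by
      by_contra hn
      exact q2.not_swap (v3 _ (by omega) (by omega))
    have a2 : G - 1 < x := by
      by_contra hn
      exact q1.not_swap (v3 _ (by omega) (by omega))
    obtain ⟨k', k1, k2, ek⟩ := T.J.shift G k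
    rw [ek] at hk ⊢
    have : k' ≠ G := fun e => hk (e ▸ rfl)
    exact v4 k' (by omega) (by omega)
  -- the other seven vertices together with `t₁` and `t₂` form a convex nonagon
  have n1 : t₁ ∉ insert t₂ ((Q \ core Q c).erase (c g)) := by
    rw [Finset.mem_insert, Finset.mem_erase, Finset.mem_sdiff]
    rintro (e | e)
    · exact hne e.symm
    · exact e.2.2 ht₁
  have n2 : t₂ ∉ (Q \ core Q c).erase (c g) := by
    rw [Finset.mem_erase, Finset.mem_sdiff]
    exact fun e => e.2.2 ht₂
  have n3 : c g ∈ Q \ core Q c :=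
    Finset.mem_sdiff.2 ⟨T.cQ g, fun h => (mem_core.1 h).2 g rfl⟩
  have hcard : (insert t₁ (insert t₂ ((Q \ core Q c).erase (c g)))).card = 9 := by
    rw [Finset.card_insert_of_notMem n1, Finset.card_insert_of_notMem n2,
      Finset.card_erase_of_mem n3, T.J.card, j8]
  have cases : ∀ w ∈ insert t₁ (insert t₂ ((Q \ core Q c).erase (c g))),
      w = t₁ ∨ w = t₂ ∨ ∃ k, w = c k ∧ c k ≠ c g := by
    intro w hw
    rw [Finset.mem_insert, Finset.mem_insert, Finset.mem_erase, Finset.mem_sdiff] at hw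
    rcases hw with e | e | ⟨e, e', e''⟩
    · exact Or.inl e
    · exact Or.inr (Or.inl e)
    · refine Or.inr (Or.inr ?_)
      by_contra hcon
      push Not at hcon
      refine e'' (mem_core.2 ⟨e', fun k hk => ?_⟩)
      exact e (hk.trans (hcon k hk))
  have inQ : ∀ w ∈ insert t₁ (insert t₂ ((Q \ core Q c).erase (c g))), w ∈ Q := by
    intro w hw
    rcases cases w hw with rfl | rfl | ⟨k, rfl, -⟩
    · exact core_sub ht₁
    · exact core_sub ht₂
    · exact T.cQ k
  have := T.cfg.only9 _ (fun w hw => T.QX (inQ w hw))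
    ⟨t₁, Finset.mem_insert_self _ _, T.QD (core_sub ht₁)⟩ (by
      intro z hz _
      rcases cases z hz with rfl | rfl | ⟨k, rfl, -⟩
      · refine ⟨t₂, hne, Or.inl fun w hw w1 w2 => ?_⟩
        rcases cases w hw with e | e | ⟨k, rfl, hk⟩
        · exact absurd e w1
        · exact absurd e w2
        · exact left k hk
      · refine ⟨t₁, hne.symm, Or.inr fun w hw w1 w2 => ?_⟩
        rcases cases w hw with e | e | ⟨k, rfl, hk⟩
        · exact absurd e w2
        · exact absurd e w1
        · exact left k hk
      · exact ⟨c (k + 1), (T.J.ne_succ k).symm, Or.inl fun w hw => T.J.ed k w (inQ w hw)⟩)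
  omega

end Ctx3

theorem Cfg.false (h : Cfg X D) : False := by
  classical
  obtain ⟨i, a, Q, T, hQ⟩ := h.exists_ctx
  have hpos := hQ.card_pos
  by_cases h3 : 3 ≤ Q.card
  · obtain ⟨j, c, J⟩ := exists_hull (T.lay.gp.mono T.lay.sub) h3
    exact Ctx3.false (⟨T, J⟩ : Ctx3 X D Q i a j c)
  by_cases h1 : Q.card = 1
  · obtain ⟨q, rfl⟩ := Finset.card_eq_one.1 h1
    exact T.one_point
  · obtain ⟨p, q, hpq, rfl⟩ := Finset.card_eq_two.1 (show Q.card = 2 by omega)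
    exact T.two_points hpq
end

/-- Every set of 1717 points in the plane in general position contains a 6-hole:
`h⁽²⁾(6) ≤ 1717`. -/
theorem h2_6_le_1717 (S : Finset (Fin 2 → ℝ)) (hcard : S.card = 1717)
    (hgp : InGeneralPosition 2 S) :
    ∃ X : Finset (Fin 2 → ℝ), IsHole 2 6 S X := by
  by_contra hno
  have hS := GP.of_generalPosition hgp
  obtain ⟨X, D, h⟩ := exists_cfg hS hno (exists_nonagon hS hcard hno)
  exact h.false
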